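/- arXiv:1110.0174 — 3 statements merged into one kernel-verified Lean document; each statement's English description precedes it below -/
import Mathlib

section
/- Let Γ be a finite simplicial graph. Every limit group over 𝔾(Γ) that is generated by two elements is isomorphic either to a free group (of rank at most 2) or to a free abelian group (of rank at most 2). -/
/-- The set of commutation relators of a simplicial graph: one commutator
`[u,v]` for each pair of adjacent vertices. -/
def raagRels {V : Type*} (Γ : SimpleGraph V) : Set (FreeGroup V) :=
  {r | ∃ u v : V, Γ.Adj u v ∧
    r = FreeGroup.of u * FreeGroup.of v * (FreeGroup.of u)⁻¹ * (FreeGroup.of v)⁻¹}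

/-- The partially commutative group (right-angled Artin group) of a simplicial graph. -/
abbrev Raag {V : Type*} (Γ : SimpleGraph V) := PresentedGroup (raagRels Γ)

/-- `G` is residually `H`. -/
def Residually (H : Type*) [Group H] (G : Type*) [Group G] : Prop :=
  ∀ g : G, g ≠ 1 → ∃ φ : G →* H, φ g ≠ 1

/-- `G` is fully residually `H`. -/
def FullyResidually (H : Type*) [Group H] (G : Type*) [Group G] : Prop :=
  ∀ s : Finset G, (∀ g ∈ s, g ≠ 1) → ∃ φ : G →* H, ∀ g ∈ s, φ g ≠ 1

/-- A limit group over `H`: finitely generated and fully residually `H`. -/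
def IsLimitGroupOver (H : Type*) [Group H] (G : Type*) [Group G] : Prop :=
  Group.FG G ∧ FullyResidually H G


namespace Baud

/-! ### Syllable decomposition -/

theorem exists_syllables {ι : Type*} (u : FreeGroup ι) (hu : u ≠ 1) :
    ∃ L : List (ι × ℤ), L ≠ [] ∧ (L.map Prod.fst).IsChain (· ≠ ·) ∧ (∀ p ∈ L, p.2 ≠ 0) ∧
      u = (L.map (fun p => FreeGroup.of p.1 ^ p.2)).prod := by
  classical
  let w := Monoid.CoprodI.Word.equiv (freeGroupEquivCoprodI u)
  have hw : w.prod = freeGroupEquivCoprodI u :=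
    Monoid.CoprodI.Word.equiv.symm_apply_apply _
  have key : ∀ m : FreeGroup Unit, FreeGroup.of () ^ (FreeGroup.freeGroupUnitEquivInt m) = m := by
    intro m
    exact FreeGroup.freeGroupUnitEquivInt.symm_apply_apply m
  let e : (Σ _ : ι, FreeGroup Unit) → ι × ℤ := fun p => (p.1, FreeGroup.freeGroupUnitEquivInt p.2)
  have hu' : u = freeGroupEquivCoprodI.symm w.prod := by
    rw [hw]; exact (freeGroupEquivCoprodI.symm_apply_apply u).symm
  have hprod : u = ((w.toList.map e).map (fun p => FreeGroup.of p.1 ^ p.2)).prod := by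
    rw [hu', Monoid.CoprodI.Word.prod, map_list_prod, List.map_map, List.map_map]
    congr 1
    apply List.map_congr_left
    rintro ⟨i, m⟩ -
    have := key m
    simp only [Function.comp, e]
    conv_lhs => rw [← this]
    simp
  refine ⟨w.toList.map e, ?_, ?_, ?_, hprod⟩
  · intro h
    rw [h] at hprod
    exact hu (by simpa using hprod)
  · rw [List.map_map]
    have := w.chain_ne
    rw [List.isChain_map]
    exact this
  · intro p hp
    rw [List.mem_map] at hp
    obtain ⟨q, hq, rfl⟩ := hp
    intro h0
    apply w.ne_one q hq
    have := key q.2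
    simp only [e] at h0
    rw [h0] at this
    simpa using this.symm

/-! ### A nilpotent representation -/

section Nilp
variable {ι : Type*}

open Classical in
/-- shift operator attached to a letter -/
noncomputable def shiftOp (l : List ι) (a : ι) : Module.End ℤ (ℕ → ℤ) where
  toFun f := fun i => if l[i]? = some a then f (i + 1) else 0
  map_add' f g := by
    funext i; simp only [Pi.add_apply]; split_ifs <;> simp
  map_smul' c f := by
    funext i; simp only [Pi.smul_apply, RingHom.id_apply]; split_ifs <;> simp

open Classical in
theorem shiftOp_apply (l : List ι) (a : ι) (f : ℕ → ℤ) (i : ℕ) :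
    shiftOp l a f i = if l[i]? = some a then f (i + 1) else 0 := rfl

theorem shiftOp_sq (l : List ι) (hl : l.IsChain (· ≠ ·)) (a : ι) :
    shiftOp l a * shiftOp l a = 0 := by
  ext1 f
  funext i
  change shiftOp l a (shiftOp l a f) i = 0
  rw [shiftOp_apply]
  split_ifs with h
  · rw [shiftOp_apply]
    split_ifs with h2
    · exfalso
      rw [List.getElem?_eq_some_iff] at h h2
      obtain ⟨h1, h1'⟩ := h
      obtain ⟨h2, h2'⟩ := h2
      have := (List.isChain_iff_getElem.mp hl) i h2
      exact this (h1'.trans h2'.symm)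
    · rfl
  · rfl

/-- unipotent unit -/
noncomputable def unip {A : Type*} [Ring A] (x : A) (hx : x * x = 0) : Aˣ where
  val := 1 + x
  inv := 1 - x
  val_inv := by noncomm_ring; simp [hx]
  inv_val := by noncomm_ring; simp [hx]

theorem unip_zpow {A : Type*} [Ring A] (x : A) (hx : x * x = 0) (e : ℤ) :
    ((unip x hx ^ e : Aˣ) : A) = 1 + e • x := by
  have hv : ((unip x hx : Aˣ) : A) = 1 + x := rfl
  have hi : (((unip x hx)⁻¹ : Aˣ) : A) = 1 - x := rfl
  induction e with
  | zero => simp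
  | succ n ih =>
    rw [zpow_add_one, Units.val_mul, ih, hv, add_mul, mul_add, mul_add, smul_mul_assoc,
      smul_mul_assoc, hx, add_smul]
    simp; abel
  | pred n ih =>
    rw [zpow_sub_one, Units.val_mul, ih, hi, add_mul, mul_sub, mul_sub, smul_mul_assoc,
      smul_mul_assoc, hx, sub_smul]
    simp; abel

/-- filtration on endomorphisms -/
def nilFil (k : ℕ) : AddSubgroup (Module.End ℤ (ℕ → ℤ)) where
  carrier := {T | ∀ (s : ℕ) (f : ℕ → ℤ), (∀ i, s ≤ i → f i = 0) → ∀ i, s ≤ i + k → T f i = 0}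
  add_mem' := by
    intro a b ha hb s f hf i hi
    simp [ha s f hf i hi, hb s f hf i hi]
  zero_mem' := by intro s f hf i hi; simp
  neg_mem' := by
    intro a ha s f hf i hi
    simp [ha s f hf i hi]

theorem nilFil_mul (a b : ℕ) (S T : Module.End ℤ (ℕ → ℤ)) (hS : S ∈ nilFil a)
    (hT : T ∈ nilFil b) : S * T ∈ nilFil (a + b) := by
  intro s f hf i hi
  exact hS (s - b) (T f) (fun j hj => hT s f hf j (by omega)) i (by omega)

theorem nilFil_anti {a b : ℕ} (h : a ≤ b) : nilFil b ≤ nilFil a := by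
  intro T hT s f hf i hi
  exact hT s f hf i (by omega)

theorem shiftOp_mem (l : List ι) (a : ι) : shiftOp l a ∈ nilFil 1 := by
  intro s f hf i hi
  rw [shiftOp_apply]
  split_ifs
  · exact hf _ hi
  · rfl

/-- the span of the `g - 1` -/
noncomputable def augI (ι : Type*) : Submodule ℤ (MonoidAlgebra ℤ (FreeGroup ι)) :=
  Submodule.span ℤ (Set.range fun g => MonoidAlgebra.of ℤ _ g - 1)

/-- the span of the `α - 1` -/
noncomputable def augW (ι : Type*) : Submodule ℤ (MonoidAlgebra ℤ (FreeGroup ι)) :=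
  Submodule.span ℤ (Set.range fun a : ι => MonoidAlgebra.of ℤ _ (FreeGroup.of a) - 1)

theorem augW_le (ι : Type*) : augW ι ≤ augI ι := by
  apply Submodule.span_mono
  rintro _ ⟨a, rfl⟩
  exact ⟨_, rfl⟩

theorem mem_augI (g : FreeGroup ι) : MonoidAlgebra.of ℤ _ g - 1 ∈ augI ι :=
  Submodule.subset_span ⟨g, rfl⟩

theorem augI_le (ι : Type*) : augI ι ≤ augW ι ⊔ augI ι * augI ι := by
  rw [augI, Submodule.span_le]
  rintro _ ⟨g, rfl⟩
  change MonoidAlgebra.of ℤ _ g - 1 ∈ augW ι ⊔ augI ι * augI ι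
  induction g using FreeGroup.induction_on with
  | C1 => rw [map_one, sub_self]; exact Submodule.zero_mem _
  | of a =>
    exact Submodule.mem_sup_left (Submodule.subset_span ⟨a, rfl⟩)
  | inv_of a ih =>
    have h : MonoidAlgebra.of ℤ (FreeGroup ι) (FreeGroup.of a)⁻¹ - 1 =
      -((MonoidAlgebra.of ℤ _ (FreeGroup.of a) - 1)) -
        (MonoidAlgebra.of ℤ _ (FreeGroup.of a)⁻¹ - 1) * (MonoidAlgebra.of ℤ _ (FreeGroup.of a) - 1) := by
      rw [sub_mul, mul_sub, ← map_mul, inv_mul_cancel, map_one]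
      noncomm_ring
    rw [h]
    exact Submodule.sub_mem _ (Submodule.neg_mem _ ih)
      (Submodule.mem_sup_right (Submodule.mul_mem_mul (mem_augI _) (mem_augI _)))
  | mul x y hx hy =>
    have h : MonoidAlgebra.of ℤ (FreeGroup ι) (x * y) - 1 =
      (MonoidAlgebra.of ℤ _ x - 1) + (MonoidAlgebra.of ℤ _ y - 1) +
        (MonoidAlgebra.of ℤ _ x - 1) * (MonoidAlgebra.of ℤ _ y - 1) := by
      rw [map_mul]; noncomm_ring
    rw [h]
    exact Submodule.add_mem _ (Submodule.add_mem _ hx hy)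
      (Submodule.mem_sup_right (Submodule.mul_mem_mul (mem_augI _) (mem_augI _)))

theorem augI_mul_le (ι : Type*) : augI ι * augI ι ≤ augI ι := by
  conv_lhs => rw [augI]
  rw [Submodule.span_mul_span, Submodule.span_le]
  rintro _ ⟨_, ⟨g, rfl⟩, _, ⟨h, rfl⟩, rfl⟩
  have e : (MonoidAlgebra.of ℤ _ g - 1) * (MonoidAlgebra.of ℤ _ h - 1) =
    (MonoidAlgebra.of ℤ (FreeGroup ι) (g * h) - 1) - (MonoidAlgebra.of ℤ _ g - 1) -
      (MonoidAlgebra.of ℤ _ h - 1) := by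
    rw [map_mul]; noncomm_ring
  change (MonoidAlgebra.of ℤ _ g - 1) * (MonoidAlgebra.of ℤ _ h - 1) ∈ augI ι
  rw [e]
  exact Submodule.sub_mem _ (Submodule.sub_mem _ (mem_augI _) (mem_augI _)) (mem_augI _)

theorem augI_pow_le (ι : Type*) (m : ℕ) : augI ι ^ m ≤ augW ι ^ m ⊔ augI ι ^ (m + 1) := by
  induction m with
  | zero => simp
  | succ m ih =>
    calc augI ι ^ (m + 1) = augI ι ^ m * augI ι := pow_succ _ _
      _ ≤ (augW ι ^ m ⊔ augI ι ^ (m + 1)) * (augW ι ⊔ augI ι * augI ι) :=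
        mul_le_mul' ih (augI_le ι)
      _ ≤ _ := by
        rw [Submodule.sup_mul, Submodule.mul_sup, Submodule.mul_sup]
        have h1 : augW ι ^ m ≤ augI ι ^ m := pow_le_pow_left' (augW_le ι) m
        refine sup_le (sup_le ?_ ?_) (sup_le ?_ ?_)
        · rw [← pow_succ]; exact le_sup_left
        · refine le_trans (mul_le_mul' h1 le_rfl) (le_trans ?_ le_sup_right)
          rw [pow_succ (augI ι), pow_succ, mul_assoc]
        · refine le_trans (mul_le_mul' le_rfl (augW_le ι)) (le_trans ?_ le_sup_right)
          rw [← pow_succ]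
        · refine le_trans ?_ le_sup_right
          rw [← mul_assoc, ← pow_succ]
          rw [pow_succ (augI ι) (m + 1), mul_assoc]
          exact mul_le_mul' le_rfl (augI_mul_le ι)

/-- the representation -/
noncomputable def nilRep (l : List ι) (hl : l.IsChain (· ≠ ·)) :
    FreeGroup ι →* (Module.End ℤ (ℕ → ℤ))ˣ :=
  FreeGroup.lift fun a => unip (shiftOp l a) (shiftOp_sq l hl a)

theorem nilRep_mem (l : List ι) (hl : l.IsChain (· ≠ ·)) (g : FreeGroup ι) :
    ((nilRep l hl g : (Module.End ℤ (ℕ → ℤ))ˣ) : Module.End ℤ (ℕ → ℤ)) - 1 ∈ nilFil 1 := by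
  induction g using FreeGroup.induction_on with
  | C1 => simp
  | of a =>
    have : ((nilRep l hl (FreeGroup.of a) : (Module.End ℤ (ℕ → ℤ))ˣ) : Module.End ℤ (ℕ → ℤ)) - 1
        = shiftOp l a := by
      simp [nilRep, unip]
    rw [this]
    exact shiftOp_mem l a
  | inv_of a ih =>
    have : ((nilRep l hl (FreeGroup.of a)⁻¹ : (Module.End ℤ (ℕ → ℤ))ˣ) : Module.End ℤ (ℕ → ℤ)) - 1
        = - shiftOp l a := by
      rw [nilRep, map_inv, FreeGroup.lift_apply_of]
      change (1 - shiftOp l a) - 1 = _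
      abel
    rw [this]
    exact AddSubgroup.neg_mem _ (shiftOp_mem l a)
  | mul x y hx hy =>
    have : ((nilRep l hl (x * y) : (Module.End ℤ (ℕ → ℤ))ˣ) : Module.End ℤ (ℕ → ℤ)) - 1
        = (((nilRep l hl x : (Module.End ℤ (ℕ → ℤ))ˣ) : Module.End ℤ (ℕ → ℤ)) - 1) *
        (((nilRep l hl y : (Module.End ℤ (ℕ → ℤ))ˣ) : Module.End ℤ (ℕ → ℤ)) - 1) +
        (((nilRep l hl x : (Module.End ℤ (ℕ → ℤ))ˣ) : Module.End ℤ (ℕ → ℤ)) - 1) +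
        (((nilRep l hl y : (Module.End ℤ (ℕ → ℤ))ˣ) : Module.End ℤ (ℕ → ℤ)) - 1) := by
      rw [map_mul, Units.val_mul]; noncomm_ring
    rw [this]
    refine AddSubgroup.add_mem _ (AddSubgroup.add_mem _ ?_ hx) hy
    exact nilFil_anti (by norm_num) (nilFil_mul 1 1 _ _ hx hy)

theorem nilRep_eval (l : List ι) (hl : l.IsChain (· ≠ ·)) (L₂ : List (ι × ℤ)) :
    ∀ L₁ : List ι, l = L₁ ++ L₂.map Prod.fst →
    (((nilRep l hl (L₂.map (fun p => FreeGroup.of p.1 ^ p.2)).prod :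
      (Module.End ℤ (ℕ → ℤ))ˣ) : Module.End ℤ (ℕ → ℤ)) (Pi.single l.length 1) L₁.length =
        (L₂.map Prod.snd).prod) ∧
    ∀ i < L₁.length, (((nilRep l hl (L₂.map (fun p => FreeGroup.of p.1 ^ p.2)).prod :
      (Module.End ℤ (ℕ → ℤ))ˣ) : Module.End ℤ (ℕ → ℤ)) (Pi.single l.length 1) i = 0) := by
  induction L₂ with
  | nil =>
    intro L₁ h
    simp only [List.map_nil, List.append_nil] at h
    subst h
    simp only [List.map_nil, List.prod_nil, map_one, Units.val_one, Module.End.one_apply,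
      Pi.single_eq_same, true_and]
    intro i hi
    exact Pi.single_eq_of_ne (by omega) _
  | cons p L ih =>
    intro L₁ h
    obtain ⟨h1, h2⟩ := ih (L₁ ++ [p.1]) (by simp [h])
    have hp : ((nilRep l hl (FreeGroup.of p.1 ^ p.2) : (Module.End ℤ (ℕ → ℤ))ˣ) :
        Module.End ℤ (ℕ → ℤ)) = 1 + p.2 • shiftOp l p.1 := by
      rw [nilRep, map_zpow, FreeGroup.lift_apply_of, unip_zpow]
    have hl1 : (L₁ ++ [p.1]).length = L₁.length + 1 := by simp
    rw [hl1] at h1 h2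
    rw [List.map_cons, List.prod_cons, map_mul, Units.val_mul, hp]
    set v := ((nilRep l hl (L.map (fun p => FreeGroup.of p.1 ^ p.2)).prod :
      (Module.End ℤ (ℕ → ℤ))ˣ) : Module.End ℤ (ℕ → ℤ)) (Pi.single l.length 1) with hv
    have hval : ∀ i, ((1 + p.2 • shiftOp l p.1) *
      ((nilRep l hl (L.map (fun p => FreeGroup.of p.1 ^ p.2)).prod :
      (Module.End ℤ (ℕ → ℤ))ˣ) : Module.End ℤ (ℕ → ℤ))) (Pi.single l.length 1) i =
        v i + p.2 * shiftOp l p.1 v i := by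
      intro i; rw [hv]; rfl
    constructor
    · rw [hval, h2 _ (by omega), shiftOp_apply, if_pos, h1]
      · simp
      · simp [h]
    · intro i hi
      rw [hval, h2 _ (by omega), shiftOp_apply]
      split_ifs
      · rw [h2 _ (by omega)]; simp
      · simp

theorem map_pow_fil {S : Type*} [Ring S] (Θ : MonoidAlgebra ℤ (FreeGroup ι) →+* S)
    (P : ℕ → AddSubgroup S) (hP : ∀ a b s t, s ∈ P a → t ∈ P b → s * t ∈ P (a + b)) (n : ℕ)
    (h1 : ∀ g, Θ (MonoidAlgebra.of ℤ _ g) - 1 ∈ P n) (h0 : 1 ∈ P 0) (k : ℕ) :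
    ∀ p ∈ augI ι ^ k, Θ p ∈ P (n * k) := by
  induction k with
  | zero =>
    intro p hp
    rw [pow_zero, Submodule.mem_one] at hp
    obtain ⟨z, rfl⟩ := hp
    have : Θ (algebraMap ℤ _ z) = z • (1 : S) := by
      simp
    rw [this]
    exact AddSubgroup.zsmul_mem _ h0 z
  | succ k ih =>
    intro p hp
    rw [pow_succ] at hp
    refine Submodule.mul_induction_on hp ?_ ?_
    · intro a ha b hb
      rw [map_mul]
      refine hP (n * k) n _ _ (ih a ha) ?_
      refine Submodule.span_induction ?_ ?_ ?_ ?_ hb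
      · rintro _ ⟨g, rfl⟩
        rw [map_sub, map_one]; exact h1 g
      · rw [map_zero]; exact AddSubgroup.zero_mem _
      · intro x y _ _ hx hy
        rw [map_add]; exact AddSubgroup.add_mem _ hx hy
      · intro c x _ hx
        rw [map_zsmul]; exact AddSubgroup.zsmul_mem _ hx c
    · intro x y hx hy
      rw [map_add]; exact AddSubgroup.add_mem _ hx hy

theorem not_mem_augI_pow (u : FreeGroup ι) (hu : u ≠ 1) :
    ∃ m, MonoidAlgebra.of ℤ _ u - 1 ∉ augI ι ^ (m + 1) := by
  obtain ⟨L, hL, hc, h0, hprod⟩ := exists_syllables u hu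
  set l := L.map Prod.fst with hl
  refine ⟨l.length, fun hmem => ?_⟩
  let Θ : MonoidAlgebra ℤ (FreeGroup ι) →ₐ[ℤ] Module.End ℤ (ℕ → ℤ) :=
    MonoidAlgebra.lift ℤ _ _ ((Units.coeHom _).comp (nilRep l hc))
  have hΘ : ∀ g, Θ (MonoidAlgebra.of ℤ _ g) = (nilRep l hc g : Module.End ℤ (ℕ → ℤ)) := by
    intro g; rw [MonoidAlgebra.lift_of]; rfl
  have h1 : Θ _ ∈ nilFil (1 * (l.length + 1)) := map_pow_fil (Θ : _ →+* _) nilFil nilFil_mul 1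
    (fun g => by
      change Θ _ - 1 ∈ _
      rw [hΘ]; exact nilRep_mem l hc g)
    (fun s f hf i hi => hf i hi) _ _ hmem
  rw [one_mul] at h1
  have h2 := h1 (l.length + 1) (Pi.single l.length 1)
    (fun i hi => Pi.single_eq_of_ne (by omega) _) 0 (by omega)
  rw [map_sub, map_one, hΘ] at h2
  have h3 := (nilRep_eval l hc L [] (by simp [hl])).1
  rw [← hprod] at h3
  rw [LinearMap.sub_apply, Pi.sub_apply] at h2
  rw [List.length_nil] at h3
  rw [h3, Module.End.one_apply, Pi.single_eq_of_ne, sub_zero, List.prod_eq_zero_iff] at h2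
  · rw [List.mem_map] at h2
    obtain ⟨p, hp, hp0⟩ := h2
    exact h0 p hp hp0
  · have : 0 < l.length := by
      rw [hl, List.length_map]; exact List.length_pos_iff.mpr hL
    omega

end Nilp

/-! ### Leading terms of power series -/

section Lead
open PowerSeries
variable {Q : Type*} [Ring Q]

/-- `s = x T^n + ...` -/
def Lead (n : ℕ) (s : PowerSeries Q) (x : Q) : Prop :=
  (∀ k < n, coeff k s = 0) ∧ coeff n s = x

theorem Lead.add {n : ℕ} {s t : PowerSeries Q} {x y : Q} (hs : Lead n s x) (ht : Lead n t y) :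
    Lead n (s + t) (x + y) :=
  ⟨fun k hk => by rw [map_add, hs.1 k hk, ht.1 k hk, add_zero], by rw [map_add, hs.2, ht.2]⟩

theorem Lead.neg {n : ℕ} {s : PowerSeries Q} {x : Q} (hs : Lead n s x) :
    Lead n (-s) (-x) :=
  ⟨fun k hk => by rw [map_neg, hs.1 k hk, neg_zero], by rw [map_neg, hs.2]⟩

theorem Lead.mul {n m : ℕ} {s t : PowerSeries Q} {x y : Q} (hs : Lead n s x) (ht : Lead m t y) :
    Lead (n + m) (s * t) (x * y) := by
  constructor
  · intro k hk
    rw [coeff_mul]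
    apply Finset.sum_eq_zero
    rintro ⟨i, j⟩ hij
    rw [Finset.HasAntidiagonal.mem_antidiagonal] at hij
    dsimp only at hij ⊢
    by_cases hi : i < n
    · rw [hs.1 i hi, zero_mul]
    · rw [ht.1 j (by omega), mul_zero]
  · rw [coeff_mul, Finset.sum_eq_single (n, m)]
    · rw [hs.2, ht.2]
    · rintro ⟨i, j⟩ hij hne
      rw [Finset.HasAntidiagonal.mem_antidiagonal] at hij
      dsimp only at hij ⊢
      by_cases hi : i < n
      · rw [hs.1 i hi, zero_mul]
      · have : j < m := by
          by_contra hj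
          apply hne
          rw [Prod.mk.injEq]; omega
        rw [ht.1 j this, mul_zero]
    · intro h; exact absurd (by simp) h

theorem Lead.zero_of_lt {n m : ℕ} {s : PowerSeries Q} {x : Q} (hs : Lead n s x) (h : m < n) :
    Lead m s 0 := ⟨fun k hk => hs.1 k (by omega), hs.1 m h⟩

theorem Lead.one : Lead 0 (1 : PowerSeries Q) 1 := ⟨by simp, by simp⟩

theorem Lead.list_prod {α : Type*} (n : ℕ) (s : α → PowerSeries Q) (x : α → Q)
    (h : ∀ a, Lead n (s a) (x a)) (L : List α) :
    Lead (n * L.length) (L.map s).prod (L.map x).prod := by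
  induction L with
  | nil => simpa using Lead.one
  | cons a L ih =>
    rw [List.map_cons, List.map_cons, List.prod_cons, List.prod_cons, List.length_cons,
      Nat.mul_succ, Nat.add_comm]
    exact (h a).mul ih

/-- filtration of power series -/
def psFil (Q : Type*) [Ring Q] (k : ℕ) : AddSubgroup (PowerSeries Q) where
  carrier := {s | ∀ i < k, coeff i s = 0}
  add_mem' := by intro a b ha hb i hi; rw [map_add, ha i hi, hb i hi, add_zero]
  zero_mem' := by intro i _; simp
  neg_mem' := by intro a ha i hi; rw [map_neg, ha i hi, neg_zero]

theorem psFil_lead {k : ℕ} {s : PowerSeries Q} (h : s ∈ psFil Q k) : Lead k s (coeff k s) :=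
  ⟨h, rfl⟩

theorem psFil_mul (a b : ℕ) (s t : PowerSeries Q) (hs : s ∈ psFil Q a) (ht : t ∈ psFil Q b) :
    s * t ∈ psFil Q (a + b) :=
  ((psFil_lead hs).mul (psFil_lead ht)).1

theorem units_sub_one_mem {ι : Type*} (n : ℕ) (G : FreeGroup ι →* (PowerSeries Q)ˣ)
    (hG : ∀ a, ((G (FreeGroup.of a) : (PowerSeries Q)ˣ) : PowerSeries Q) - 1 ∈ psFil Q n)
    (u : FreeGroup ι) : ((G u : (PowerSeries Q)ˣ) : PowerSeries Q) - 1 ∈ psFil Q n := by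
  have hmul : ∀ s t : PowerSeries Q, t ∈ psFil Q n → s * t ∈ psFil Q n := by
    intro s t ht
    have := psFil_mul 0 n s t (fun i hi => by omega) ht
    rwa [zero_add] at this
  induction u using FreeGroup.induction_on with
  | C1 => simp
  | of a => exact hG a
  | inv_of a ih =>
    have : ((G (FreeGroup.of a)⁻¹ : (PowerSeries Q)ˣ) : PowerSeries Q) - 1 =
      - (((G (FreeGroup.of a)⁻¹ : (PowerSeries Q)ˣ) : PowerSeries Q) *
        (((G (FreeGroup.of a) : (PowerSeries Q)ˣ) : PowerSeries Q) - 1)) := by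
      rw [mul_sub, ← Units.val_mul, ← map_mul]; simp
    rw [this]
    exact AddSubgroup.neg_mem _ (hmul _ _ ih)
  | mul x y hx hy =>
    have : ((G (x * y) : (PowerSeries Q)ˣ) : PowerSeries Q) - 1 =
      ((G x : (PowerSeries Q)ˣ) : PowerSeries Q) *
        (((G y : (PowerSeries Q)ˣ) : PowerSeries Q) - 1) +
        (((G x : (PowerSeries Q)ˣ) : PowerSeries Q) - 1) := by
      rw [map_mul, Units.val_mul]; noncomm_ring
    rw [this]
    exact AddSubgroup.add_mem _ (hmul _ _ hy) hx

/-- **Key lemma**: independence of leading terms gives freeness. -/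
theorem lift_injective_of_lead {ι : Type*} (n : ℕ) (hn : 0 < n) (x : ι → Q)
    (hx : ∀ (m : ℕ) (c : (Fin m → ι) →₀ ℤ),
      (c.sum fun w a => (a : Q) * (List.ofFn (fun i => x (w i))).prod) = 0 → c = 0)
    (G : FreeGroup ι →* (PowerSeries Q)ˣ)
    (hG : ∀ a, Lead n (((G (FreeGroup.of a) : (PowerSeries Q)ˣ) : PowerSeries Q) - 1) (x a)) :
    Function.Injective G := by
  rw [injective_iff_map_eq_one]
  intro u hGu
  by_contra hu
  obtain ⟨M, hM⟩ := not_mem_augI_pow u hu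
  classical
  have hex : ∃ m, MonoidAlgebra.of ℤ _ u - 1 ∉ augI ι ^ (m + 1) := ⟨M, hM⟩
  obtain ⟨m, hm1, hm2⟩ : ∃ m, MonoidAlgebra.of ℤ _ u - 1 ∈ augI ι ^ m ∧
      MonoidAlgebra.of ℤ _ u - 1 ∉ augI ι ^ (m + 1) := by
    have hf := Nat.find_spec hex
    have h1 : Nat.find hex ≠ 0 := by
      intro h
      rw [h, zero_add, pow_one] at hf
      exact hf (mem_augI u)
    refine ⟨Nat.find hex, ?_, hf⟩
    have := not_not.mp (Nat.find_min hex (m := Nat.find hex - 1) (by omega))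
    rwa [Nat.sub_add_cancel (by omega)] at this
  have h3 := augI_pow_le ι m hm1
  obtain ⟨p, hp, e, he, hpe⟩ := Submodule.mem_sup.mp h3
  let Θ : MonoidAlgebra ℤ (FreeGroup ι) →ₐ[ℤ] PowerSeries Q :=
    MonoidAlgebra.lift ℤ _ _ ((Units.coeHom _).comp G)
  have hΘ : ∀ g, Θ (MonoidAlgebra.of ℤ _ g) = (G g : PowerSeries Q) := by
    intro g; rw [MonoidAlgebra.lift_of]; rfl
  have he' : Θ e ∈ psFil Q (n * (m + 1)) := map_pow_fil (Θ : _ →+* _) (psFil Q) psFil_mul n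
    (fun g => by
      change Θ _ - 1 ∈ _
      rw [hΘ]
      exact units_sub_one_mem n G (fun a => (hG a).1) g)
    (fun i hi => by omega) _ _ he
  -- expand `p`
  have hp' : p ∈ Submodule.span ℤ (Set.range fun w : Fin m → ι =>
      (List.ofFn (fun i => MonoidAlgebra.of ℤ _ (FreeGroup.of (w i)) - 1)).prod) := by
    rw [augW, Submodule.span_pow] at hp
    refine Submodule.span_mono ?_ hp
    intro y hy
    rw [Set.mem_pow] at hy
    obtain ⟨f, rfl⟩ := hy
    choose w hw using fun i => (f i).2
    exact ⟨w, by simp only [hw]⟩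
  rw [Finsupp.mem_span_range_iff_exists_finsupp] at hp'
  obtain ⟨c, hc⟩ := hp'
  have hΘp : coeff (n * m) (Θ p) = c.sum fun w a => (a : Q) * (List.ofFn (fun i => x (w i))).prod := by
    rw [← hc, Finsupp.sum, map_sum, map_sum, Finsupp.sum]
    apply Finset.sum_congr rfl
    intro w _
    rw [map_zsmul, map_zsmul, zsmul_eq_mul, map_list_prod, List.map_ofFn]
    congr 1
    have := (Lead.list_prod n (fun a => ((G (FreeGroup.of a) : (PowerSeries Q)ˣ) : PowerSeries Q) - 1)
      x hG (List.ofFn w)).2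
    rw [List.length_ofFn, List.map_ofFn, List.map_ofFn] at this
    rw [← Function.comp_def x w, ← this]
    congr 3
    funext i
    simp only [Function.comp, map_sub, map_one, hΘ]
  have hzero : coeff (n * m) (Θ p) = 0 := by
    have h1 : Θ p = - Θ e := by
      rw [eq_neg_iff_add_eq_zero, ← map_add, hpe, map_sub, hΘ, hGu]; simp
    rw [h1, map_neg, he' _ (by rw [Nat.mul_succ]; omega), neg_zero]
  rw [hΘp] at hzero
  have hc0 : c = 0 := hx m c hzero
  apply hm2
  rw [← hpe, ← hc, hc0]
  simpa using he

end Lead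
end Baud

namespace Baud
section Magnus

/-- noncommutative polynomials with integer coefficients -/
abbrev MQ (X : Type*) := MonoidAlgebra ℤ (FreeMonoid X)

/-- the unit `1 + x t` -/
noncomputable def psUnit {Q : Type*} [Ring Q] (x : Q) : (PowerSeries Q)ˣ where
  val := 1 + PowerSeries.C x * PowerSeries.X
  inv := PowerSeries.mk fun n => (-x) ^ n
  val_inv := by
    ext n
    rw [add_mul, one_mul, mul_assoc, map_add, PowerSeries.coeff_C_mul, PowerSeries.coeff_mk]
    cases n with
    | zero => simp
    | succ n => rw [PowerSeries.coeff_succ_X_mul, PowerSeries.coeff_mk, pow_succ']; simp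
  inv_val := by
    ext n
    rw [mul_add, mul_one, ← mul_assoc, map_add, PowerSeries.coeff_mk]
    cases n with
    | zero => simp
    | succ n =>
      rw [PowerSeries.coeff_succ_mul_X, PowerSeries.coeff_mul_C, PowerSeries.coeff_mk, pow_succ]
      simp

variable {X : Type*}

/-- the letter as noncommutative polynomial -/
noncomputable def letter (a : X) : MQ X := MonoidAlgebra.of ℤ _ (FreeMonoid.of a)

/-- Magnus representation -/
noncomputable def mg : FreeGroup X →* (PowerSeries (MQ X))ˣ :=
  FreeGroup.lift fun a => psUnit (letter a)

/-- homogeneous polynomials of degree n -/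
def homDeg (X : Type*) (n : ℕ) : AddSubgroup (MQ X) where
  carrier := {p | ∀ w, p.coeff w ≠ 0 → w.length = n}
  add_mem' := by
    intro p q hp hq w hw
    by_cases h : p.coeff w = 0
    · refine hq w fun h2 => hw ?_
      simp [h, h2]
    · exact hp w h
  zero_mem' := by intro w hw; simp at hw
  neg_mem' := by intro p hp w hw; exact hp w (by simpa using hw)

theorem homDeg_mul {n m : ℕ} {p q : MQ X} (hp : p ∈ homDeg X n) (hq : q ∈ homDeg X m) :
    p * q ∈ homDeg X (n + m) := by
  classical
  intro w hw
  rw [MonoidAlgebra.coeff_mul] at hw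
  obtain ⟨a, ha, h1⟩ := Finset.exists_ne_zero_of_sum_ne_zero hw
  obtain ⟨b, hb, h2⟩ := Finset.exists_ne_zero_of_sum_ne_zero h1
  dsimp only at h2
  split_ifs at h2 with h
  · rw [← h, FreeMonoid.length_mul, hp a (by simpa using ha), hq b (by simpa using hb)]
  · simp at h2

theorem one_mem_homDeg : (1 : MQ X) ∈ homDeg X 0 := by
  classical
  intro w hw
  rw [MonoidAlgebra.one_def, MonoidAlgebra.coeff_single, Finsupp.single_apply] at hw
  split_ifs at hw with h
  · rw [← h]; rfl
  · simp at hw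

theorem letter_mem_homDeg (a : X) : letter a ∈ homDeg X 1 := by
  classical
  intro w hw
  rw [letter, MonoidAlgebra.of_apply, MonoidAlgebra.coeff_single, Finsupp.single_apply] at hw
  split_ifs at hw with h
  · rw [← h]; rfl
  · simp at hw

/-- power series homogeneous in each degree -/
def HomPS (s : PowerSeries (MQ X)) : Prop := ∀ n, PowerSeries.coeff n s ∈ homDeg X n

theorem HomPS.mul {s t : PowerSeries (MQ X)} (hs : HomPS s) (ht : HomPS t) : HomPS (s * t) := by
  intro n
  rw [PowerSeries.coeff_mul]
  refine AddSubgroup.sum_mem _ ?_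
  rintro ⟨i, j⟩ hij
  rw [Finset.HasAntidiagonal.mem_antidiagonal] at hij
  rw [← hij]
  exact homDeg_mul (hs i) (ht j)

theorem homDeg_pow {n : ℕ} {p : MQ X} (hp : p ∈ homDeg X 1) : p ^ n ∈ homDeg X n := by
  induction n with
  | zero => simpa using one_mem_homDeg
  | succ n ih => rw [pow_succ]; exact homDeg_mul ih hp

theorem HomPS.one : HomPS (1 : PowerSeries (MQ X)) := by
  intro n
  rw [PowerSeries.coeff_one]
  split_ifs with h
  · rw [h]; exact one_mem_homDeg
  · exact AddSubgroup.zero_mem _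

theorem mg_homPS (u : FreeGroup X) : HomPS ((mg u : (PowerSeries (MQ X))ˣ) : PowerSeries (MQ X)) := by
  induction u using FreeGroup.induction_on with
  | C1 => simpa using HomPS.one
  | of a =>
    intro n
    rw [mg, FreeGroup.lift_apply_of]
    change PowerSeries.coeff n (1 + PowerSeries.C (letter a) * PowerSeries.X) ∈ _
    rw [map_add, PowerSeries.coeff_C_mul]
    refine AddSubgroup.add_mem _ (HomPS.one n) ?_
    rw [PowerSeries.coeff_X]
    split_ifs with h
    · rw [h, mul_one]; exact letter_mem_homDeg a
    · rw [mul_zero]; exact AddSubgroup.zero_mem _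
  | inv_of a ih =>
    intro n
    rw [mg, map_inv, FreeGroup.lift_apply_of]
    change PowerSeries.coeff n (PowerSeries.mk fun n => (-(letter a)) ^ n) ∈ _
    rw [PowerSeries.coeff_mk]
    exact homDeg_pow (AddSubgroup.neg_mem _ (letter_mem_homDeg a))
  | mul x y hx hy =>
    rw [map_mul, Units.val_mul]
    exact hx.mul hy

theorem coeff_mul_split {n : ℕ} {p : MQ X} (hp : p ∈ homDeg X n) (q : MQ X) (s u : FreeMonoid X)
    (hs : s.length = n) : (p * q).coeff (s * u) = p.coeff s * q.coeff u := by
  classical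
  rw [MonoidAlgebra.coeff_mul, Finsupp.sum]
  have key : ∀ a ∈ p.coeff.support, ∀ b, a * b = s * u ↔ (a = s ∧ b = u) := by
    intro a ha b
    constructor
    · intro h
      have hl : a.length = s.length := by rw [hs]; exact hp a (by simpa using ha)
      exact List.append_inj h hl
    · rintro ⟨rfl, rfl⟩; rfl
  have h1 : ∀ a ∈ p.coeff.support, (q.coeff.sum fun b r => if a * b = s * u then p.coeff a * r else 0) =
      if a = s then p.coeff a * q.coeff u else 0 := by
    intro a ha
    rw [Finsupp.sum]
    simp only [key a ha]
    split_ifs with h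
    · simp only [h, true_and]
      rw [Finset.sum_ite_eq']
      split_ifs with h3
      · rfl
      · rw [Finsupp.notMem_support_iff.mp h3, mul_zero]
    · simp [h]
  rw [Finset.sum_congr rfl h1, Finset.sum_ite_eq']
  split_ifs with h3
  · rfl
  · rw [Finsupp.notMem_support_iff.mp h3, zero_mul]

theorem coeff_intCast_mul (z : ℤ) (q : MQ X) (w : FreeMonoid X) :
    ((z : MQ X) * q).coeff w = z * q.coeff w := by
  rw [MonoidAlgebra.intCast_def, MonoidAlgebra.coeff_single_one_mul]
  simp

theorem right_indep {ι : Type*} {n : ℕ} (x : ι → MQ X) (hn : ∀ a, x a ∈ homDeg X n)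
    (hx : ∀ c : ι →₀ ℤ, (c.sum fun a z => (z : MQ X) * x a) = 0 → c = 0)
    (y : ι →₀ MQ X) (hy : (y.sum fun a q => x a * q) = 0) : y = 0 := by
  ext a u
  let e : MQ X → ℤ := fun q => q.coeff u
  have he : e 0 = 0 := rfl
  have h1 := hx (y.mapRange e he) (by
    rw [Finsupp.sum_mapRange_index (by simp)]
    ext s
    by_cases hs : s.length = n
    · have h2 : (y.sum fun a q => x a * q).coeff (s * u) = 0 := by rw [hy]; rfl
      rw [Finsupp.sum, MonoidAlgebra.coeff_sum, Finsupp.finsetSum_apply] at h2 ⊢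
      refine Eq.trans ?_ h2
      apply Finset.sum_congr rfl
      intro a _
      rw [coeff_mul_split (hn a) _ _ _ hs, coeff_intCast_mul, mul_comm]
    · rw [Finsupp.sum, MonoidAlgebra.coeff_sum, Finsupp.finsetSum_apply]
      apply Finset.sum_eq_zero
      intro a _
      rw [coeff_intCast_mul]
      by_contra h
      exact hs (hn a s (right_ne_zero_of_mul h)))
  have := DFunLike.congr_fun h1 a
  rwa [Finsupp.mapRange_apply] at this

theorem prod_indep {ι : Type*} {n : ℕ} (x : ι → MQ X) (hn : ∀ a, x a ∈ homDeg X n)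
    (hx : ∀ c : ι →₀ ℤ, (c.sum fun a z => (z : MQ X) * x a) = 0 → c = 0) (m : ℕ) :
    ∀ (c : (Fin m → ι) →₀ ℤ),
      (c.sum fun w a => (a : MQ X) * (List.ofFn (fun i => x (w i))).prod) = 0 → c = 0 := by
  induction m with
  | zero =>
    intro c hc
    refine Finsupp.ext fun w => ?_
    rw [Finsupp.sum_fintype _ _ (by simp), Fintype.sum_unique] at hc
    have h2 := congrArg (fun q => MonoidAlgebra.coeff q 1) hc
    simp only [coeff_intCast_mul] at h2
    rw [Subsingleton.elim w default]
    simpa using h2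
  | succ m ih =>
    intro c hc
    let F : ((Fin m → ι) →₀ ℤ) → MQ X :=
      fun c => c.sum fun w a => (a : MQ X) * (List.ofFn (fun i => x (w i))).prod
    let c' : ι × (Fin m → ι) →₀ ℤ := c.equivMapDomain (Fin.consEquiv fun _ => ι).symm
    have hF : F 0 = 0 := Finsupp.sum_zero_index
    have h1 := right_indep x hn hx (c'.curry.mapRange F hF) (by
      rw [Finsupp.sum_mapRange_index (by simp)]
      have : (fun (a : ι) (b : (Fin m → ι) →₀ ℤ) => x a * F b) = fun a b =>
          b.sum fun w z => x a * ((z : MQ X) * (List.ofFn (fun i => x (w i))).prod) := by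
        funext a b
        exact Finset.mul_sum _ _ _
      rw [this, Finsupp.sum_curry_index c'
        (fun a w z => x a * ((z : MQ X) * (List.ofFn (fun i => x (w i))).prod)), ← hc, Finsupp.sum_equivMapDomain]
      apply Finset.sum_congr rfl
      intro w _
      change x (w 0) * ((c w : MQ X) * (List.ofFn (fun i => x (w i.succ))).prod) =
        (c w : MQ X) * (List.ofFn (fun i => x (w i))).prod
      rw [List.ofFn_succ, List.prod_cons, ← mul_assoc, ← mul_assoc,
        (Int.cast_commute (c w) _).eq])
    ext w
    have h2 := DFunLike.congr_fun h1 (w 0)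
    rw [Finsupp.mapRange_apply, Finsupp.zero_apply] at h2
    have h3 := DFunLike.congr_fun (ih _ h2) (fun i => w i.succ)
    rw [Finsupp.curry_apply] at h3
    refine Eq.trans ?_ h3
    rw [Finsupp.equivMapDomain_apply]
    congr 1
    exact (Fin.cons_self_tail w).symm

theorem lead_mg_of (a : X) :
    Lead 1 (((mg (FreeGroup.of a) : (PowerSeries (MQ X))ˣ) : PowerSeries (MQ X)) - 1) (letter a) := by
  rw [mg, FreeGroup.lift_apply_of]
  change Lead 1 (1 + PowerSeries.C (letter a) * PowerSeries.X - 1) (letter a)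
  rw [add_sub_cancel_left]
  constructor
  · intro k hk
    obtain rfl : k = 0 := by omega
    simp
  · rw [PowerSeries.coeff_C_mul]; simp

theorem mg_coeff_zero (u : FreeGroup X) :
    PowerSeries.coeff 0 ((mg u : (PowerSeries (MQ X))ˣ) : PowerSeries (MQ X)) = 1 := by
  have := units_sub_one_mem (Q := MQ X) 1 mg (fun a => (lead_mg_of a).1) u 0 one_pos
  rw [map_sub, sub_eq_zero] at this
  rw [this]; simp

theorem letter_indep (c : X →₀ ℤ) (hc : (c.sum fun a z => (z : MQ X) * letter a) = 0) : c = 0 := by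
  classical
  ext a
  have h := congrArg (fun q => MonoidAlgebra.coeff q (FreeMonoid.of a)) hc
  simp only [Finsupp.sum, MonoidAlgebra.coeff_sum, Finsupp.finsetSum_apply, coeff_intCast_mul,
    letter, MonoidAlgebra.of_apply, MonoidAlgebra.coeff_single, Finsupp.single_apply,
    FreeMonoid.of_injective.eq_iff] at h
  simpa using h

theorem lift_mg_injective {ι : Type*} (n : ℕ) (hn : 0 < n) (x : ι → MQ X) (hxn : ∀ a, x a ∈ homDeg X n)
    (hx : ∀ c : ι →₀ ℤ, (c.sum fun a z => (z : MQ X) * x a) = 0 → c = 0)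
    (G : FreeGroup ι →* FreeGroup X)
    (hG : ∀ a, Lead n (((mg (G (FreeGroup.of a)) : (PowerSeries (MQ X))ˣ) : PowerSeries (MQ X)) - 1)
      (x a)) : Function.Injective G := by
  have := lift_injective_of_lead n hn x (prod_indep x hxn hx) (mg.comp G) hG
  exact Function.Injective.of_comp (f := mg) (by simpa using this)

theorem mg_injective : Function.Injective (mg (X := X)) :=
  lift_injective_of_lead 1 one_pos letter (prod_indep letter letter_mem_homDeg letter_indep) mg
    lead_mg_of

/-- a nonzero power series has a leading term -/
theorem exists_lead {Q : Type*} [Ring Q] (s : PowerSeries Q) (hs : s ≠ 0) :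
    ∃ n x, x ≠ 0 ∧ Lead n s x := by
  classical
  have hex : ∃ n, PowerSeries.coeff n s ≠ 0 := by
    by_contra! h
    exact hs (PowerSeries.ext (by simpa using h))
  exact ⟨Nat.find hex, _, Nat.find_spec hex, fun k hk => not_not.mp (Nat.find_min hex hk), rfl⟩

/-- difference of two elements -/
theorem exists_lead_sub (u v : FreeGroup X) (h : u ≠ v) : ∃ n x, 0 < n ∧ x ≠ 0 ∧ x ∈ homDeg X n ∧
    Lead n (((mg u : (PowerSeries (MQ X))ˣ) : PowerSeries (MQ X)) -
      ((mg v : (PowerSeries (MQ X))ˣ) : PowerSeries (MQ X))) x := by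
  obtain ⟨n, x, hx, hl⟩ := exists_lead (((mg u : (PowerSeries (MQ X))ˣ) : PowerSeries (MQ X)) -
      ((mg v : (PowerSeries (MQ X))ˣ) : PowerSeries (MQ X))) (by
    rw [sub_ne_zero]
    intro h2
    exact h (mg_injective (Units.ext h2)))
  refine ⟨n, x, ?_, hx, ?_, hl⟩
  · rw [Nat.pos_iff_ne_zero]
    rintro rfl
    apply hx
    rw [← hl.2, map_sub, mg_coeff_zero, mg_coeff_zero, sub_self]
  · rw [← hl.2, map_sub]
    exact AddSubgroup.sub_mem _ (mg_homPS u n) (mg_homPS v n)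

theorem exists_lead_mg (u : FreeGroup X) (h : u ≠ 1) : ∃ n x, 0 < n ∧ x ≠ 0 ∧ x ∈ homDeg X n ∧
    Lead n (((mg u : (PowerSeries (MQ X))ˣ) : PowerSeries (MQ X)) - 1) x := by
  simpa using exists_lead_sub u 1 h

/-- functoriality for letter substitutions -/
theorem mg_map_gen {Y : Type*} (φ : MQ X →+* MQ Y) (ψ : FreeGroup X →* FreeGroup Y)
    (h : ∀ a, PowerSeries.map φ (mg (FreeGroup.of a) : (PowerSeries (MQ X))ˣ) =
      (mg (ψ (FreeGroup.of a)) : (PowerSeries (MQ Y))ˣ)) (u : FreeGroup X) :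
    ((mg (ψ u) : (PowerSeries (MQ Y))ˣ) : PowerSeries (MQ Y)) =
      PowerSeries.map φ (mg u : (PowerSeries (MQ X))ˣ) := by
  have : (mg (X := Y)).comp ψ = (Units.map (PowerSeries.map φ : _ →* _)).comp mg := by
    ext1 a
    apply Units.ext
    exact (h a).symm
  have := DFunLike.congr_fun this u
  exact congrArg Units.val this

theorem psUnit_map {Q R : Type*} [Ring Q] [Ring R] (φ : Q →+* R) (x : Q) :
    PowerSeries.map φ (psUnit x : (PowerSeries Q)ˣ) = (psUnit (φ x) : (PowerSeries R)ˣ) := by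
  change PowerSeries.map φ (1 + PowerSeries.C x * PowerSeries.X) =
    1 + PowerSeries.C (φ x) * PowerSeries.X
  simp

/-- substitution of letters -/
noncomputable def mqMap {Y : Type*} (p : X → Y) : MQ X →+* MQ Y :=
  MonoidAlgebra.mapDomainRingHom ℤ (FreeMonoid.map p)

theorem mqMap_letter {Y : Type*} (p : X → Y) (a : X) : mqMap p (letter a) = letter (p a) := by
  simp [mqMap, letter]

theorem mg_map {Y : Type*} (p : X → Y) (u : FreeGroup X) :
    ((mg (FreeGroup.map p u) : (PowerSeries (MQ Y))ˣ) : PowerSeries (MQ Y)) =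
      PowerSeries.map (mqMap p) (mg u : (PowerSeries (MQ X))ˣ) := by
  apply mg_map_gen
  intro a
  rw [FreeGroup.map.of, mg, mg, FreeGroup.lift_apply_of, FreeGroup.lift_apply_of, psUnit_map, mqMap_letter]

theorem mqMap_coeff {Y : Type*} (p : X → Y) (hp : Function.Injective p) (q : MQ X) (w : FreeMonoid X) :
    (mqMap p q).coeff (FreeMonoid.map p w) = q.coeff w := by
  change (MonoidAlgebra.mapDomain _ q).coeff _ = _
  rw [MonoidAlgebra.coeff_mapDomain]
  exact Finsupp.mapDomain_apply (fun a b h => List.map_injective_iff.mpr hp h) _ _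

theorem Lead.map {Q R : Type*} [Ring Q] [Ring R] (φ : Q →+* R) {n : ℕ} {s : PowerSeries Q} {x : Q}
    (h : Lead n s x) : Lead n (PowerSeries.map φ s) (φ x) :=
  ⟨fun k hk => by rw [PowerSeries.coeff_map, h.1 k hk, map_zero], by rw [PowerSeries.coeff_map, h.2]⟩

end Magnus
end Baud

namespace Baud
section Retract
variable {X : Type*}

open Classical in
/-- retraction of free groups killing the letters outside `Z` -/
noncomputable def rZ (Z : Set X) : FreeGroup X →* FreeGroup Z :=
  FreeGroup.lift fun a => if h : a ∈ Z then FreeGroup.of ⟨a, h⟩ else 1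

theorem rZ_of_mem (Z : Set X) {a : X} (h : a ∈ Z) : rZ Z (FreeGroup.of a) = FreeGroup.of ⟨a, h⟩ := by
  rw [rZ, FreeGroup.lift_apply_of, dif_pos h]

theorem rZ_of_notMem (Z : Set X) {a : X} (h : a ∉ Z) : rZ Z (FreeGroup.of a) = 1 := by
  rw [rZ, FreeGroup.lift_apply_of, dif_neg h]

open Classical in
/-- killing letters on monomials -/
noncomputable def kapW (Z : Set X) : FreeMonoid X →* MQ Z :=
  FreeMonoid.lift fun a => if h : a ∈ Z then letter ⟨a, h⟩ else 0

theorem kapW_coeff (Z : Set X) (w : FreeMonoid X) :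
    (∃ w' : FreeMonoid Z, FreeMonoid.map Subtype.val w' = w ∧ kapW Z w = MonoidAlgebra.of ℤ _ w') ∨
      ((¬ ∃ w' : FreeMonoid Z, FreeMonoid.map Subtype.val w' = w) ∧ kapW Z w = 0) := by
  induction w using FreeMonoid.inductionOn' with
  | one => left; exact ⟨1, by simp, by simp [MonoidAlgebra.one_def]⟩
  | of_mul a w ih =>
    by_cases ha : a ∈ Z
    · have h1 : kapW Z (FreeMonoid.of a * w) = letter ⟨a, ha⟩ * kapW Z w := by
        rw [map_mul]; congr 1; rw [kapW, FreeMonoid.lift_eval_of, dif_pos ha]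
      rcases ih with ⟨w', h2, h3⟩ | ⟨h2, h3⟩
      · left
        refine ⟨FreeMonoid.of ⟨a, ha⟩ * w', ?_, ?_⟩
        · rw [map_mul, h2]; rfl
        · rw [h1, h3, letter, ← map_mul]
      · right
        refine ⟨?_, by rw [h1, h3, mul_zero]⟩
        rintro ⟨w', hw'⟩
        apply h2
        cases w' using FreeMonoid.casesOn with
        | one => exact absurd (hw'.symm : a :: FreeMonoid.toList w = []) (by simp)
        | of_mul b w'' => 
          refine ⟨w'', ?_⟩
          exact (List.cons.inj hw').2
    · right
      constructor
      · rintro ⟨w', hw'⟩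
        cases w' using FreeMonoid.casesOn with
        | one => exact absurd (hw'.symm : a :: FreeMonoid.toList w = []) (by simp)
        | of_mul b w'' => 
          apply ha
          rw [← (List.cons.inj hw').1]
          exact b.2
      · rw [map_mul, kapW, FreeMonoid.lift_eval_of, dif_neg ha, zero_mul]

/-- the ring version of the retraction -/
noncomputable def kap (Z : Set X) : MQ X →+* MQ Z :=
  (MonoidAlgebra.lift ℤ _ _ (kapW Z) : MQ X →ₐ[ℤ] MQ Z)

theorem kap_coeff (Z : Set X) (p : MQ X) (w : FreeMonoid Z) :
    (kap Z p).coeff w = p.coeff (FreeMonoid.map Subtype.val w) := by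
  classical
  induction p using MonoidAlgebra.induction_linear with
  | zero => simp
  | add p q hp hq => simp [map_add, hp, hq]
  | single m r =>
    change (MonoidAlgebra.lift ℤ _ _ (kapW Z) (MonoidAlgebra.single m r)).coeff w = _
    rw [MonoidAlgebra.lift_single, MonoidAlgebra.coeff_smul_apply, MonoidAlgebra.coeff_single, Finsupp.single_apply]
    rcases kapW_coeff Z m with ⟨w', rfl, h3⟩ | ⟨h2, h3⟩
    · rw [h3, MonoidAlgebra.of_apply, MonoidAlgebra.coeff_single, Finsupp.single_apply]
      have : FreeMonoid.map Subtype.val w' = FreeMonoid.map Subtype.val w ↔ w' = w :=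
        ⟨fun h => List.map_injective_iff.mpr Subtype.val_injective h, fun h => h ▸ rfl⟩
      simp only [this]
      split_ifs <;> simp
    · rw [h3, if_neg (fun h => h2 ⟨w, h.symm⟩)]; simp

theorem mg_rZ (Z : Set X) (u : FreeGroup X) :
    ((mg (rZ Z u) : (PowerSeries (MQ Z))ˣ) : PowerSeries (MQ Z)) =
      PowerSeries.map (kap Z) (mg u : (PowerSeries (MQ X))ˣ) := by
  apply mg_map_gen
  intro a
  rw [mg, FreeGroup.lift_apply_of, psUnit_map]
  have h : kap Z (letter a) = kapW Z (FreeMonoid.of a) := MonoidAlgebra.lift_of _ _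
  by_cases ha : a ∈ Z
  · rw [rZ_of_mem Z ha, mg, FreeGroup.lift_apply_of, h, kapW, FreeMonoid.lift_eval_of, dif_pos ha]
  · rw [rZ_of_notMem Z ha, map_one, h, kapW, FreeMonoid.lift_eval_of, dif_neg ha]
    change 1 + PowerSeries.C 0 * PowerSeries.X = ((1 : (PowerSeries (MQ Z))ˣ) : PowerSeries (MQ Z))
    simp

theorem exists_restrict (Z : Set X) (w : FreeMonoid X) (hw : ∀ a ∈ FreeMonoid.toList w, a ∈ Z) :
    ∃ w' : FreeMonoid Z, FreeMonoid.map Subtype.val w' = w := by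
  refine ⟨FreeMonoid.ofList ((FreeMonoid.toList w).pmap (fun a h => ⟨a, h⟩) hw), ?_⟩
  change List.map _ (List.pmap _ _ _) = w
  rw [List.map_pmap]
  simp
  rfl

theorem rZ_ne_one (Z : Set X) {n : ℕ} {u : FreeGroup X} {x : MQ X} {w : FreeMonoid X}
    (hl : Lead n (((mg u : (PowerSeries (MQ X))ˣ) : PowerSeries (MQ X)) - 1) x)
    (hx : x.coeff w ≠ 0) (hw : ∀ a ∈ FreeMonoid.toList w, a ∈ Z) : rZ Z u ≠ 1 := by
  intro h
  obtain ⟨w', rfl⟩ := exists_restrict Z w hw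
  have h2 := hl.map (kap Z)
  rw [map_sub, map_one, ← mg_rZ, h, map_one, Units.val_one, sub_self] at h2
  apply hx
  rw [← kap_coeff, ← h2.2]
  simp

end Retract

section Orbit
variable {X : Type*}

theorem orbit_indep {J : Type*} [CommGroup J] [NoZeroDivisors (MonoidAlgebra ℤ J)]
    (ρ : J →* Equiv.Perm X) (x : MQ X) (m : FreeMonoid X) (hm : x.coeff m ≠ 0)
    (hst : ∀ j, FreeMonoid.map (ρ j) m = m → j = 1)
    (c : J →₀ ℤ) (hc : (c.sum fun j z => (z : MQ X) * mqMap (ρ j) x) = 0) : c = 0 := by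
  have hcomp : ∀ i j : J, ∀ w : FreeMonoid X, FreeMonoid.map (ρ i) (FreeMonoid.map (ρ j) w) =
      FreeMonoid.map (ρ (i * j)) w := by
    intro i j w
    rw [FreeMonoid.map_map, map_mul]; rfl
  have hone : ∀ w : FreeMonoid X, FreeMonoid.map (ρ 1) w = w := by
    intro w; rw [map_one]
    exact DFunLike.congr_fun FreeMonoid.map_id w
  have hinj : Function.Injective fun l : J => FreeMonoid.map (ρ l) m := by
    intro i j h
    dsimp only at h
    have h2 := congrArg (FreeMonoid.map (ρ j⁻¹)) h
    rw [hcomp, hcomp, inv_mul_cancel, hone] at h2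
    have := hst _ h2
    rw [inv_mul_eq_one] at this
    exact this.symm
  let y : MonoidAlgebra ℤ J := MonoidAlgebra.ofCoeff (x.coeff.comapDomain _ hinj.injOn)
  let c' : MonoidAlgebra ℤ J := MonoidAlgebra.ofCoeff c
  have hy : y ≠ 0 := by
    intro h
    have : y.coeff 1 = 0 := by rw [h]; rfl
    rw [MonoidAlgebra.coeff_ofCoeff, Finsupp.comapDomain_apply, hone] at this
    exact hm this
  have hcy : c' * y = 0 := by
    ext k
    rw [MonoidAlgebra.coeff_mul_apply_left]
    have h2 : (c.sum fun j z => (z : MQ X) * mqMap (ρ j) x).coeff (FreeMonoid.map (ρ k) m) = 0 := by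
      rw [hc]; rfl
    rw [Finsupp.sum, MonoidAlgebra.coeff_sum, Finsupp.finsetSum_apply] at h2
    refine Eq.trans ?_ h2
    apply Finset.sum_congr rfl
    intro j _
    rw [coeff_intCast_mul]
    change c j * x.coeff (FreeMonoid.map (ρ (j⁻¹ * k)) m) = _
    rw [← mqMap_coeff (ρ j) (ρ j).injective x, hcomp, mul_inv_cancel_left]
  have := (mul_eq_zero.mp hcy).resolve_right hy
  exact congrArg MonoidAlgebra.coeff this

theorem mqMap_homDeg {Y : Type*} (p : X → Y) {n : ℕ} {x : MQ X} (hx : x ∈ homDeg X n) :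
    mqMap p x ∈ homDeg Y n := by
  classical
  intro w hw
  change (MonoidAlgebra.mapDomain _ x).coeff w ≠ 0 at hw
  rw [MonoidAlgebra.coeff_mapDomain] at hw
  have h2 := Finsupp.mapDomain_support (Finsupp.mem_support_iff.mpr hw)
  rw [Finset.mem_image] at h2
  obtain ⟨v, hv, rfl⟩ := h2
  rw [← hx v (by simpa using hv)]
  exact List.length_map _

theorem orbit_lift_injective {J : Type*} [CommGroup J] [NoZeroDivisors (MonoidAlgebra ℤ J)]
    (ρ : J →* Equiv.Perm X) (x : MQ X) (m : FreeMonoid X) (hm : x.coeff m ≠ 0)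
    (hst : ∀ j, FreeMonoid.map (ρ j) m = m → j = 1) (n : ℕ) (hn : 0 < n) (hx : x ∈ homDeg X n)
    (g : J → FreeGroup X)
    (hg : ∀ j, Lead n (((mg (g j) : (PowerSeries (MQ X))ˣ) : PowerSeries (MQ X)) - 1)
      (mqMap (ρ j) x)) : Function.Injective (FreeGroup.lift g) := by
  apply lift_mg_injective n hn (fun j => mqMap (ρ j) x) (fun j => mqMap_homDeg _ hx)
    (orbit_indep ρ x m hm hst)
  intro a
  rw [FreeGroup.lift_apply_of]
  exact hg a

theorem lead_conj {n : ℕ} {u : FreeGroup X} {x : MQ X} (h : FreeGroup X)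
    (hl : Lead n (((mg u : (PowerSeries (MQ X))ˣ) : PowerSeries (MQ X)) - 1) x) :
    Lead n (((mg (h * u * h⁻¹) : (PowerSeries (MQ X))ˣ) : PowerSeries (MQ X)) - 1) x := by
  have h0 : ∀ v : FreeGroup X, Lead 0 ((mg v : (PowerSeries (MQ X))ˣ) : PowerSeries (MQ X)) 1 :=
    fun v => ⟨by simp, mg_coeff_zero v⟩
  have := ((h0 h).mul hl).mul (h0 h⁻¹)
  rw [zero_add, add_zero, one_mul, mul_one, mul_sub, sub_mul, mul_one, ← Units.val_mul, ← Units.val_mul,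
    ← Units.val_mul, ← map_mul, ← map_mul, ← map_mul, mul_inv_cancel, map_one, Units.val_one] at this
  exact this


end Orbit
end Baud

namespace Baud
section Semi

/-- action by automorphisms of the free group induced by a permutation action -/
def act {K X : Type*} [Group K] (ρ : K →* Equiv.Perm X) : K →* MulAut (FreeGroup X) where
  toFun k := FreeGroup.freeGroupCongr (ρ k)
  map_one' := by
    ext u
    change FreeGroup.map (ρ 1) u = u
    rw [map_one]
    exact FreeGroup.map.id u
  map_mul' := by
    intro k l
    ext u
    change FreeGroup.map (ρ (k * l)) u = FreeGroup.map (ρ k) (FreeGroup.map (ρ l) u)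
    rw [map_mul, FreeGroup.map.comp]; rfl

theorem act_apply {K X : Type*} [Group K] (ρ : K →* Equiv.Perm X) (k : K) (u : FreeGroup X) :
    act ρ k u = FreeGroup.map (ρ k) u := rfl

/-- the semidirect product -/
abbrev QQ {K X : Type*} [Group K] (ρ : K →* Equiv.Perm X) := FreeGroup X ⋊[act ρ] K

/-- the homomorphism from the free group of rank two -/
def lift2 {G : Type*} [Group G] (a b : G) : FreeGroup (Fin 2) →* G := FreeGroup.lift ![a, b]

variable {G H : Type*} [Group G] [Group H]

@[simp] theorem lift2_zero (a b : G) : lift2 a b (FreeGroup.of 0) = a := by simp [lift2]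
@[simp] theorem lift2_one (a b : G) : lift2 a b (FreeGroup.of 1) = b := by simp [lift2]

theorem lift2_comp (φ : G →* H) (a b : G) : φ.comp (lift2 a b) = lift2 (φ a) (φ b) := by
  ext i; fin_cases i <;> simp [lift2]

/-- pull back injectivity along a homomorphism -/
theorem lift2_of_map (φ : G →* H) (a b : G) (h : Function.Injective (lift2 (φ a) (φ b))) :
    Function.Injective (lift2 a b) := by
  rw [← lift2_comp] at h
  exact Function.Injective.of_comp (f := φ) h

theorem lift2_map (φ : G →* H) (hφ : Function.Injective φ) (a b : G)
    (h : Function.Injective (lift2 a b)) : Function.Injective (lift2 (φ a) (φ b)) := by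
  rw [← lift2_comp]
  exact hφ.comp h

theorem f2_induct {P : FreeGroup (Fin 2) → Prop} (h1 : P 1)
    (hA : ∀ w, P w → P (w * FreeGroup.of 0)) (hA' : ∀ w, P w → P (w * (FreeGroup.of 0)⁻¹))
    (hB : ∀ w, P w → P (w * FreeGroup.of 1)) (hB' : ∀ w, P w → P (w * (FreeGroup.of 1)⁻¹))
    (w : FreeGroup (Fin 2)) : P w := by
  have key : ∀ w v, P v → P (v * w) := by
    intro w
    induction w using FreeGroup.induction_on with
    | C1 => simp
    | of a => intro v hv; fin_cases a; exacts [hA v hv, hB v hv]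
    | inv_of a _ => intro v hv; fin_cases a; exacts [hA' v hv, hB' v hv]
    | mul x y hx hy => intro v hv; rw [← mul_assoc]; exact hy _ (hx _ hv)
  simpa using key w 1 h1

theorem lift2_mul_left (a b : G) (h : Function.Injective (lift2 (a * b) b)) :
    Function.Injective (lift2 a b) := by
  -- precompose with automorphism
  have h1 : lift2 (a * b) b = (lift2 a b).comp (lift2 (FreeGroup.of 0 * FreeGroup.of 1) (FreeGroup.of 1)) := by
    rw [lift2_comp]; simp
  have h2 : (lift2 (FreeGroup.of 0 * FreeGroup.of 1) (FreeGroup.of 1)).comp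
      (lift2 (FreeGroup.of 0 * (FreeGroup.of 1)⁻¹) (FreeGroup.of (1 : Fin 2))) =
      MonoidHom.id (FreeGroup (Fin 2)) := by
    rw [lift2_comp]; ext i; fin_cases i <;> simp
  intro u v huv
  have h3 := DFunLike.congr_fun h2 u
  have h4 := DFunLike.congr_fun h2 v
  simp only [MonoidHom.comp_apply, MonoidHom.id_apply] at h3 h4
  rw [← h3, ← h4] at huv ⊢
  rw [h1] at h
  rw [h huv]

theorem lift2_div_left (a b : G) (h : Function.Injective (lift2 (a * b⁻¹) b)) :
    Function.Injective (lift2 a b) := by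
  have h1 : lift2 (a * b⁻¹) b =
      (lift2 a b).comp (lift2 (FreeGroup.of 0 * (FreeGroup.of 1)⁻¹) (FreeGroup.of 1)) := by
    rw [lift2_comp]; simp
  have h2 : (lift2 (FreeGroup.of 0 * (FreeGroup.of 1)⁻¹) (FreeGroup.of (1 : Fin 2))).comp
      (lift2 (FreeGroup.of 0 * FreeGroup.of 1) (FreeGroup.of 1)) =
      MonoidHom.id (FreeGroup (Fin 2)) := by
    rw [lift2_comp]; ext i; fin_cases i <;> simp
  intro u v huv
  have h3 := DFunLike.congr_fun h2 u
  have h4 := DFunLike.congr_fun h2 v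
  simp only [MonoidHom.comp_apply, MonoidHom.id_apply] at h3 h4
  rw [← h3, ← h4] at huv ⊢
  rw [h1] at h
  rw [h huv]

theorem lift2_swap (a b : G) (h : Function.Injective (lift2 b a)) :
    Function.Injective (lift2 a b) := by
  have h1 : lift2 b a = (lift2 a b).comp (lift2 (FreeGroup.of 1) (FreeGroup.of 0)) := by
    rw [lift2_comp]; simp
  have h2 : (lift2 (FreeGroup.of 1) (FreeGroup.of (0 : Fin 2))).comp
      (lift2 (FreeGroup.of 1) (FreeGroup.of (0 : Fin 2))) =
      MonoidHom.id (FreeGroup (Fin 2)) := by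
    rw [lift2_comp]; ext i; fin_cases i <;> simp
  intro u v huv
  have h3 := DFunLike.congr_fun h2 u
  have h4 := DFunLike.congr_fun h2 v
  simp only [MonoidHom.comp_apply, MonoidHom.id_apply] at h3 h4
  rw [← h3, ← h4] at huv ⊢
  rw [h1] at h
  rw [h huv]

theorem lift2_mul_zpow (a b : G) (n : ℤ) (h : Function.Injective (lift2 (a * b ^ n) b)) :
    Function.Injective (lift2 a b) := by
  induction n with
  | zero => simpa using h
  | succ n ih =>
    apply ih
    apply lift2_mul_left
    rwa [zpow_add_one, ← mul_assoc] at h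
  | pred n ih =>
    apply ih
    apply lift2_div_left
    rwa [zpow_sub_one, ← mul_assoc] at h

/-- the family of conjugates of the commutator -/
def cFam {G : Type*} [Group G] (a b : G) (j : Multiplicative (ℤ × ℤ)) : G :=
  a ^ j.toAdd.1 * b ^ j.toAdd.2 * (a * b * a⁻¹ * b⁻¹) * (a ^ j.toAdd.1 * b ^ j.toAdd.2)⁻¹

theorem decomp_aux (a b : G) (i j : ℤ) :
    a ^ i * b ^ j * a * (b ^ j)⁻¹ * a⁻¹ * (a ^ i)⁻¹ ∈ (FreeGroup.lift (cFam a b)).range := by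
  have hstep : ∀ j : ℤ, a ^ i * b ^ (j + 1) * a * (b ^ (j + 1))⁻¹ * a⁻¹ * (a ^ i)⁻¹ =
      (cFam a b (Multiplicative.ofAdd (i, j)))⁻¹ * (a ^ i * b ^ j * a * (b ^ j)⁻¹ * a⁻¹ * (a ^ i)⁻¹) := by
    intro j
    simp only [cFam, toAdd_ofAdd, zpow_add_one]
    group
  have hmem : ∀ j : ℤ, cFam a b (Multiplicative.ofAdd (i, j)) ∈ (FreeGroup.lift (cFam a b)).range :=
    fun j => ⟨FreeGroup.of (Multiplicative.ofAdd (i, j)), by simp⟩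
  induction j with
  | zero => 
    convert Subgroup.one_mem _
    group
  | succ j ih =>
    rw [hstep]
    exact Subgroup.mul_mem _ (Subgroup.inv_mem _ (hmem _)) ih
  | pred j ih =>
    have h := hstep (-(j : ℤ) - 1)
    rw [sub_add_cancel, eq_inv_mul_iff_mul_eq] at h
    rw [← h]
    exact Subgroup.mul_mem _ (hmem _) ih

theorem decomp2 (w : FreeGroup (Fin 2)) :
    ∃ s, ∃ i j : ℤ, w = FreeGroup.lift (cFam (FreeGroup.of 0) (FreeGroup.of 1)) s *
      FreeGroup.of 0 ^ i * FreeGroup.of (1 : Fin 2) ^ j := by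
  induction w using f2_induct with
  | h1 => exact ⟨1, 0, 0, by simp⟩
  | hA w ih =>
    obtain ⟨s, i, j, rfl⟩ := ih
    obtain ⟨t, ht⟩ := decomp_aux (FreeGroup.of 0) (FreeGroup.of (1 : Fin 2)) i j
    refine ⟨s * t, i + 1, j, ?_⟩
    rw [map_mul, ht, zpow_add_one]
    group
  | hA' w ih =>
    obtain ⟨s, i, j, rfl⟩ := ih
    obtain ⟨t, ht⟩ := decomp_aux (FreeGroup.of 0) (FreeGroup.of (1 : Fin 2)) (i - 1) j
    refine ⟨s * t⁻¹, i - 1, j, ?_⟩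
    rw [map_mul, map_inv, ht, zpow_sub_one]
    group
  | hB w ih =>
    obtain ⟨s, i, j, rfl⟩ := ih
    exact ⟨s, i, j + 1, by rw [zpow_add_one]; group⟩
  | hB' w ih =>
    obtain ⟨s, i, j, rfl⟩ := ih
    exact ⟨s, i, j - 1, by rw [zpow_sub_one]; group⟩

/-- conjugates for the cyclic version -/
def cFam' {G : Type*} [Group G] (a b : G) (j : Multiplicative ℤ) : G :=
  b ^ j.toAdd * a * (b ^ j.toAdd)⁻¹

theorem decomp1 (w : FreeGroup (Fin 2)) :
    ∃ s, ∃ j : ℤ, w = FreeGroup.lift (cFam' (FreeGroup.of 0) (FreeGroup.of 1)) s *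
      FreeGroup.of (1 : Fin 2) ^ j := by
  induction w using f2_induct with
  | h1 => exact ⟨1, 0, by simp⟩
  | hA w ih =>
    obtain ⟨s, j, rfl⟩ := ih
    refine ⟨s * FreeGroup.of (Multiplicative.ofAdd j), j, ?_⟩
    rw [map_mul, FreeGroup.lift_apply_of, cFam', toAdd_ofAdd]
    group
  | hA' w ih =>
    obtain ⟨s, j, rfl⟩ := ih
    refine ⟨s * (FreeGroup.of (Multiplicative.ofAdd j))⁻¹, j, ?_⟩
    rw [map_mul, map_inv, FreeGroup.lift_apply_of, cFam', toAdd_ofAdd]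
    group
  | hB w ih =>
    obtain ⟨s, j, rfl⟩ := ih
    exact ⟨s, j + 1, by rw [zpow_add_one]; group⟩
  | hB' w ih =>
    obtain ⟨s, j, rfl⟩ := ih
    exact ⟨s, j - 1, by rw [zpow_sub_one]; group⟩

variable {K X : Type*} [Group K] (ρ : K →* Equiv.Perm X)

theorem lead_act {n : ℕ} {u : FreeGroup X} {x : MQ X} (k : K)
    (hl : Lead n (((mg u : (PowerSeries (MQ X))ˣ) : PowerSeries (MQ X)) - 1) x) :
    Lead n (((mg (act ρ k u) : (PowerSeries (MQ X))ˣ) : PowerSeries (MQ X)) - 1)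
      (mqMap (ρ k) x) := by
  rw [act_apply, mg_map]
  have := hl.map (mqMap (ρ k))
  rwa [map_sub, map_one] at this

theorem conj_inl (t : QQ ρ) (u : FreeGroup X) :
    t * SemidirectProduct.inl u * t⁻¹ =
      SemidirectProduct.inl (t.left * act ρ t.right u * t.left⁻¹) := by
  ext
  · simp [mul_assoc]
  · simp

theorem core2 (a b : QQ ρ) (c : FreeGroup X)
    (hab : a.right * b.right = b.right * a.right)
    (hc : a * b * a⁻¹ * b⁻¹ = SemidirectProduct.inl c) (n : ℕ) (hn : 0 < n) (x : MQ X)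
    (hx : x ∈ homDeg X n)
    (hl : Lead n (((mg c : (PowerSeries (MQ X))ˣ) : PowerSeries (MQ X)) - 1) x)
    (m : FreeMonoid X) (hm : x.coeff m ≠ 0)
    (hst : ∀ i j : ℤ, FreeMonoid.map (ρ (a.right ^ i * b.right ^ j)) m = m → i = 0 ∧ j = 0) :
    Function.Injective (lift2 a b) := by
  let κ : Multiplicative (ℤ × ℤ) →* K :=
    { toFun := fun j => a.right ^ j.toAdd.1 * b.right ^ j.toAdd.2
      map_one' := by simp
      map_mul' := by
        intro i j
        have hcm : Commute a.right b.right := hab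
        simp only [toAdd_mul, Prod.fst_add, Prod.snd_add, zpow_add]
        rw [mul_assoc, mul_assoc]
        congr 1
        rw [← mul_assoc, ← mul_assoc, ((hcm.zpow_zpow j.toAdd.1 i.toAdd.2).eq)] }
  let t : Multiplicative (ℤ × ℤ) → QQ ρ := fun j => a ^ j.toAdd.1 * b ^ j.toAdd.2
  have hzr : ∀ (q : QQ ρ) (i : ℤ), (q ^ i).right = q.right ^ i :=
    fun q i => map_zpow SemidirectProduct.rightHom q i
  have ht : ∀ j, (t j).right = κ j := by
    intro j
    simp [t, κ, hzr]
  let g : Multiplicative (ℤ × ℤ) → FreeGroup X := fun j =>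
    (t j).left * act ρ (t j).right c * (t j).left⁻¹
  have hg : Function.Injective (FreeGroup.lift g) := by
    apply orbit_lift_injective (ρ.comp κ) x m hm _ n hn hx
    · intro j
      have := lead_conj (t j).left (lead_act ρ (t j).right hl)
      rw [ht] at this
      simp only [g, ht]
      exact this
    · intro j hj
      have := hst _ _ hj
      exact Prod.ext this.1 this.2
  have hcg : ∀ s, lift2 a b (FreeGroup.lift (cFam (FreeGroup.of 0) (FreeGroup.of 1)) s) =
      SemidirectProduct.inl (FreeGroup.lift g s) := by
    intro s
    have : (lift2 a b).comp (FreeGroup.lift (cFam (FreeGroup.of 0) (FreeGroup.of 1))) =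
        (SemidirectProduct.inl : FreeGroup X →* QQ ρ).comp (FreeGroup.lift g) := by
      ext1 j
      simp only [MonoidHom.comp_apply, FreeGroup.lift_apply_of]
      rw [← conj_inl, ← hc]
      simp [cFam, t]
    exact DFunLike.congr_fun this s
  rw [injective_iff_map_eq_one]
  intro w hw
  obtain ⟨s, i, j, rfl⟩ := decomp2 w
  rw [map_mul, map_mul, hcg, map_zpow, map_zpow, lift2_zero, lift2_one] at hw
  have hr := congrArg SemidirectProduct.right hw
  simp only [SemidirectProduct.mul_right, SemidirectProduct.right_inl, one_mul, hzr,
    SemidirectProduct.one_right] at hr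
  obtain ⟨rfl, rfl⟩ := hst i j (by
    rw [hr, map_one]
    exact DFunLike.congr_fun FreeMonoid.map_id m)
  simp only [zpow_zero, mul_one] at hw ⊢
  rw [← map_one (SemidirectProduct.inl : FreeGroup X →* QQ ρ)] at hw
  have := SemidirectProduct.inl_injective hw
  rw [← map_one (FreeGroup.lift g)] at this
  rw [hg this, map_one]

theorem core1 (f : FreeGroup X) (b : QQ ρ) (n : ℕ) (hn : 0 < n) (x : MQ X)
    (hx : x ∈ homDeg X n)
    (hl : Lead n (((mg f : (PowerSeries (MQ X))ˣ) : PowerSeries (MQ X)) - 1) x)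
    (m : FreeMonoid X) (hm : x.coeff m ≠ 0)
    (hst : ∀ j : ℤ, FreeMonoid.map (ρ (b.right ^ j)) m = m → j = 0) :
    Function.Injective (lift2 (SemidirectProduct.inl f : QQ ρ) b) := by
  let κ : Multiplicative ℤ →* K := zpowersHom K b.right
  let t : Multiplicative ℤ → QQ ρ := fun j => b ^ j.toAdd
  have hzr : ∀ (q : QQ ρ) (i : ℤ), (q ^ i).right = q.right ^ i :=
    fun q i => map_zpow SemidirectProduct.rightHom q i
  have ht : ∀ j, (t j).right = κ j := by
    intro j
    simp [t, κ, hzr, zpowersHom_apply]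
  let g : Multiplicative ℤ → FreeGroup X := fun j =>
    (t j).left * act ρ (t j).right f * (t j).left⁻¹
  have hg : Function.Injective (FreeGroup.lift g) := by
    apply orbit_lift_injective (ρ.comp κ) x m hm _ n hn hx
    · intro j
      have := lead_conj (t j).left (lead_act ρ (t j).right hl)
      rw [ht] at this
      simp only [g, ht]
      exact this
    · intro j hj
      exact hst _ hj
  have hcg : ∀ s, lift2 (SemidirectProduct.inl f : QQ ρ) b
      (FreeGroup.lift (cFam' (FreeGroup.of 0) (FreeGroup.of 1)) s) =
      SemidirectProduct.inl (FreeGroup.lift g s) := by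
    intro s
    have : (lift2 (SemidirectProduct.inl f : QQ ρ) b).comp
        (FreeGroup.lift (cFam' (FreeGroup.of 0) (FreeGroup.of 1))) =
        (SemidirectProduct.inl : FreeGroup X →* QQ ρ).comp (FreeGroup.lift g) := by
      ext1 j
      simp only [MonoidHom.comp_apply, FreeGroup.lift_apply_of]
      rw [← conj_inl]
      simp [cFam', t]
    exact DFunLike.congr_fun this s
  rw [injective_iff_map_eq_one]
  intro w hw
  obtain ⟨s, j, rfl⟩ := decomp1 w
  rw [map_mul, hcg, map_zpow, lift2_one] at hw
  have hr := congrArg SemidirectProduct.right hw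
  simp only [SemidirectProduct.mul_right, SemidirectProduct.right_inl, one_mul, hzr,
    SemidirectProduct.one_right] at hr
  obtain rfl := hst j (by
    rw [hr, map_one]
    exact DFunLike.congr_fun FreeMonoid.map_id m)
  simp only [zpow_zero, mul_one] at hw ⊢
  rw [← map_one (SemidirectProduct.inl : FreeGroup X →* QQ ρ)] at hw
  have := SemidirectProduct.inl_injective hw
  rw [← map_one (FreeGroup.lift g)] at this
  rw [hg this, map_one]

end Semi
end Baud

namespace Baud
section FG

/-- exponent sum -/
def expo {ι : Type*} [DecidableEq ι] (k : ι) : FreeGroup ι →* Multiplicative ℤ :=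
  FreeGroup.lift fun i => Multiplicative.ofAdd (if i = k then 1 else 0)

theorem mg_coeff_one_mul {X : Type*} (u v : FreeGroup X) :
    PowerSeries.coeff 1 ((mg (u * v) : (PowerSeries (MQ X))ˣ) : PowerSeries (MQ X)) =
    PowerSeries.coeff 1 ((mg u : (PowerSeries (MQ X))ˣ) : PowerSeries (MQ X)) +
    PowerSeries.coeff 1 ((mg v : (PowerSeries (MQ X))ˣ) : PowerSeries (MQ X)) := by
  rw [map_mul, Units.val_mul, PowerSeries.coeff_mul, Finset.Nat.antidiagonal_succ]
  simp [mg_coeff_zero, add_comm]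

theorem mg_coeff_one_of {X : Type*} (a : X) :
    PowerSeries.coeff 1 ((mg (FreeGroup.of a) : (PowerSeries (MQ X))ˣ) : PowerSeries (MQ X)) =
      letter a := by
  have := (lead_mg_of a).2
  rw [map_sub, PowerSeries.coeff_one] at this
  simpa using this

theorem mg_coeff_one {ι : Type*} [Fintype ι] [DecidableEq ι] (u : FreeGroup ι) :
    PowerSeries.coeff 1 ((mg u : (PowerSeries (MQ ι))ˣ) : PowerSeries (MQ ι)) =
      ∑ k, (((expo k u).toAdd : ℤ) : MQ ι) * letter k := by
  have h1 : PowerSeries.coeff 1 ((mg (1 : FreeGroup ι) : (PowerSeries (MQ ι))ˣ) : PowerSeries (MQ ι)) = 0 := by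
    simp [PowerSeries.coeff_one]
  induction u using FreeGroup.induction_on with
  | C1 => rw [h1]; simp
  | of a => rw [mg_coeff_one_of]; simp [expo]
  | inv_of a ih =>
    have := mg_coeff_one_mul (FreeGroup.of a) (FreeGroup.of a)⁻¹
    rw [mul_inv_cancel, h1, eq_comm, add_eq_zero_iff_neg_eq] at this
    rw [← this, ih, ← Finset.sum_neg_distrib]
    simp
  | mul x y hx hy =>
    rw [mg_coeff_one_mul, hx, hy, ← Finset.sum_add_distrib]
    simp [add_mul]

theorem expo_comp {ι : Type*} [Fintype ι] [DecidableEq ι] (ψ : FreeGroup ι →* FreeGroup ι) (k : ι)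
    (v : FreeGroup ι) : (expo k (ψ v)).toAdd =
      ∑ j, (expo j v).toAdd * (expo k (ψ (FreeGroup.of j))).toAdd := by
  induction v using FreeGroup.induction_on with
  | C1 => simp
  | of a => simp [expo]
  | inv_of a ih => simp only [map_inv, toAdd_inv, ih, neg_mul, Finset.sum_neg_distrib]
  | mul x y hx hy => simp only [map_mul, toAdd_mul, hx, hy, add_mul, Finset.sum_add_distrib]

theorem hopf {ι : Type*} [Fintype ι] (ψ : FreeGroup ι →* FreeGroup ι)
    (hψ : Function.Surjective ψ) : Function.Injective ψ := by
  classical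
  choose v hv using fun i => hψ (FreeGroup.of i)
  let N : Matrix ι ι ℤ := fun j k => (expo k (ψ (FreeGroup.of j))).toAdd
  let P : Matrix ι ι ℤ := fun i j => (expo j (v i)).toAdd
  have hPN : P * N = 1 := by
    ext i k
    rw [Matrix.mul_apply]
    change ∑ j, (expo j (v i)).toAdd * (expo k (ψ (FreeGroup.of j))).toAdd = _
    rw [← expo_comp, hv, Matrix.one_apply]
    simp [expo]
  have hNP : N * P = 1 := mul_eq_one_comm.mp hPN
  let x : ι → MQ ι := fun j => ∑ k, ((N j k : ℤ) : MQ ι) * letter k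
  have hlx : ∀ j, PowerSeries.coeff 1 ((mg (ψ (FreeGroup.of j)) : (PowerSeries (MQ ι))ˣ) : PowerSeries (MQ ι)) = x j :=
    fun j => mg_coeff_one _
  apply lift_mg_injective 1 one_pos x
  · intro j; rw [← hlx]; exact mg_homPS _ 1
  · intro c hc
    have h1 : (Finsupp.equivFunOnFinite.symm (Matrix.vecMul c N)) = 0 := by
      apply letter_indep
      rw [Finsupp.sum_fintype _ _ (by simp)] at hc ⊢
      rw [← hc]
      simp only [x, Finset.mul_sum, Finsupp.equivFunOnFinite_symm_apply_apply, Matrix.vecMul, dotProduct,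
        Int.cast_sum, Finset.sum_mul, Int.cast_mul, mul_assoc]
      rw [Finset.sum_comm]
    have h2 : Matrix.vecMul c N = 0 := by
      funext i; exact DFunLike.congr_fun h1 i
    have h3 : Matrix.vecMul (c : ι → ℤ) (N * P) = 0 := by
      rw [← Matrix.vecMul_vecMul, h2, Matrix.zero_vecMul]
    rw [hNP, Matrix.vecMul_one] at h3
    ext i; exact congrFun h3 i
  · intro a
    constructor
    · intro k hk
      obtain rfl : k = 0 := by omega
      rw [map_sub, mg_coeff_zero]; simp
    · rw [map_sub, hlx, PowerSeries.coeff_one]; simp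

theorem lift2_range {G : Type*} [Group G] (a b : G) :
    (lift2 a b).range = Subgroup.closure {a, b} := by
  rw [lift2, FreeGroup.range_lift_eq_closure]
  simp [Matrix.range_cons, Set.pair_comm]

theorem fg_lemma {Y : Type*} (a b : FreeGroup Y) (hab : a * b ≠ b * a) :
    Function.Injective (lift2 a b) := by
  classical
  let H := (lift2 a b).range
  let ψ₀ : FreeGroup (Fin 2) →* H := (lift2 a b).rangeRestrict
  have hψ₀ : Function.Surjective ψ₀ := (lift2 a b).rangeRestrict_surjective
  have : IsFreeGroup H := subgroupIsFreeOfIsFree H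
  let e : H ≃* FreeGroup (IsFreeGroup.Generators H) := (IsFreeGroup.mulEquiv H).symm
  obtain ⟨y1, y2, hy⟩ : ∃ y1 y2 : IsFreeGroup.Generators H, y1 ≠ y2 := by
    by_contra! h
    have : Subsingleton (IsFreeGroup.Generators H) := ⟨h⟩
    apply hab
    have hcomm : ∀ u v : FreeGroup (IsFreeGroup.Generators H), u * v = v * u := by
      by_cases hne : Nonempty (IsFreeGroup.Generators H)
      · have : Unique (IsFreeGroup.Generators H) := uniqueOfSubsingleton hne.some
        intro u v
        let E : FreeGroup (IsFreeGroup.Generators H) ≃* Multiplicative ℤ := FreeGroup.mulEquivIntOfUnique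
        apply E.injective
        rw [map_mul, map_mul, mul_comm]
      · have := not_nonempty_iff.mp hne
        intro u v
        exact Subsingleton.elim _ _
    have hH : ∀ u v : H, u * v = v * u := by
      intro u v
      apply e.injective
      rw [map_mul, map_mul, hcomm]
    have := congrArg Subtype.val (hH (ψ₀ (FreeGroup.of 0)) (ψ₀ (FreeGroup.of 1)))
    change lift2 a b (FreeGroup.of 0) * lift2 a b (FreeGroup.of 1) =
      lift2 a b (FreeGroup.of 1) * lift2 a b (FreeGroup.of 0) at this
    rwa [lift2_zero, lift2_one] at this
  let π : FreeGroup (IsFreeGroup.Generators H) →* FreeGroup (Fin 2) := FreeGroup.lift fun y =>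
    if y = y1 then FreeGroup.of 0 else if y = y2 then FreeGroup.of 1 else 1
  have hπ : Function.Surjective π := by
    have : π.comp (lift2 (FreeGroup.of y1) (FreeGroup.of y2)) = MonoidHom.id _ := by
      rw [lift2_comp]
      ext i; fin_cases i <;> simp [π, hy.symm]
    intro u
    exact ⟨_, DFunLike.congr_fun this u⟩
  have hinj := hopf (π.comp (e.toMonoidHom.comp ψ₀)) (hπ.comp (e.surjective.comp hψ₀))
  intro u v huv
  apply hinj
  have : ψ₀ u = ψ₀ v := Subtype.ext huv
  simp [this]

end FG
end Baud

namespace Baud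
section ThmB

theorem map_fix {X : Type*} (p : X → X) (m : FreeMonoid X) (h : FreeMonoid.map p m = m) :
    ∀ a ∈ FreeMonoid.toList m, p a = a := by
  have h2 : List.map p (FreeMonoid.toList m) = List.map id (FreeMonoid.toList m) := by
    rw [List.map_id]; exact h
  exact List.map_inj_left.mp h2

theorem exists_coeff_ne {X : Type*} (x : MQ X) (hx : x ≠ 0) : ∃ m, x.coeff m ≠ 0 := by
  by_contra! h
  exact hx (MonoidAlgebra.ext (Finsupp.ext h))

theorem comm_iff {G : Type*} [Group G] (a b : G) : a * b * a⁻¹ * b⁻¹ = 1 ↔ a * b = b * a := by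
  rw [mul_inv_eq_one, mul_inv_eq_iff_eq_mul]

variable {K X : Type*} [Group K] (ρ : K →* Equiv.Perm X)

/-- restriction of the action to an invariant subset -/
def resP (Z : Set X) (hZ : ∀ k x, x ∈ Z → ρ k x ∈ Z) : K →* Equiv.Perm Z where
  toFun k :=
    { toFun := fun z => ⟨ρ k z, hZ k z z.2⟩
      invFun := fun z => ⟨ρ k⁻¹ z, hZ k⁻¹ z z.2⟩
      left_inv := by intro z; ext; simp
      right_inv := by intro z; ext; simp }
  map_one' := by ext z; simp
  map_mul' := by intro k l; ext z; simp

theorem notMem_of_inv (Z : Set X) (hZ : ∀ k x, x ∈ Z → ρ k x ∈ Z) (k : K) {x : X} (hx : x ∉ Z) :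
    ρ k x ∉ Z := by
  intro h
  have := hZ k⁻¹ _ h
  simp at this
  exact hx this

/-- retraction of semidirect products -/
noncomputable def retr (Z : Set X) (hZ : ∀ k x, x ∈ Z → ρ k x ∈ Z) :
    QQ ρ →* QQ (resP ρ Z hZ) :=
  SemidirectProduct.map (rZ Z) (MonoidHom.id K) (by
    intro k
    ext a
    simp only [MonoidHom.comp_apply, MulEquiv.coe_toMonoidHom, MonoidHom.id_apply, act_apply,
      FreeGroup.map.of]
    by_cases ha : a ∈ Z
    · rw [rZ_of_mem Z ha, rZ_of_mem Z (hZ k a ha), FreeGroup.map.of]; rfl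
    · rw [rZ_of_notMem Z ha, rZ_of_notMem Z (notMem_of_inv ρ Z hZ k ha), map_one])

/-- retraction onto the free group on a set of fixed points -/
noncomputable def retF (Z : Set X) (hZ : ∀ k x, x ∈ Z → ρ k x = x) : QQ ρ →* FreeGroup Z :=
  SemidirectProduct.lift (rZ Z) 1 (by
    intro k
    ext a
    have hZ' : ∀ k x, x ∈ Z → ρ k x ∈ Z := fun k x hx => by rw [hZ k x hx]; exact hx
    simp only [MonoidHom.comp_apply, MulEquiv.coe_toMonoidHom, act_apply, MonoidHom.one_apply, map_one,
      FreeGroup.map.of, MulAut.one_apply]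
    by_cases ha : a ∈ Z
    · rw [hZ k a ha]
    · rw [rZ_of_notMem Z ha, rZ_of_notMem Z (notMem_of_inv ρ Z hZ' k ha)])

section Split
variable (Z : Set X) (hZ : ∀ k x, x ∈ Z → ρ k x = x)

theorem cinv (hZ : ∀ k x, x ∈ Z → ρ k x = x) (k : K) (x : X) (hx : x ∈ Zᶜ) : ρ k x ∈ Zᶜ :=
  notMem_of_inv ρ Z (fun k x hx => by rw [hZ k x hx]; exact hx) k hx

/-- new action -/
def rho1 : FreeGroup Z × K →* Equiv.Perm (FreeGroup Z × (Zᶜ : Set X)) where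
  toFun p := Equiv.prodCongr (Equiv.mulLeft p.1) (resP ρ Zᶜ (cinv ρ Z hZ) p.2)
  map_one' := by ext ⟨h, y⟩ <;> simp
  map_mul' := by intro p q; ext ⟨h, y⟩ <;> simp [mul_assoc]

theorem rho1_apply (p : FreeGroup Z × K) (h : FreeGroup Z) (y : (Zᶜ : Set X)) :
    rho1 ρ Z hZ p (h, y) = (p.1 * h, ⟨ρ p.2 y, cinv ρ Z hZ p.2 y y.2⟩) := rfl

open Classical in
/-- splitting map on the free group -/
noncomputable def fn1 : FreeGroup X →* QQ (rho1 ρ Z hZ) :=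
  FreeGroup.lift fun a => if h : a ∈ Z then SemidirectProduct.inr (FreeGroup.of ⟨a, h⟩, 1)
    else SemidirectProduct.inl (FreeGroup.of (1, ⟨a, h⟩))

theorem fn1_mem {a : X} (h : a ∈ Z) : fn1 ρ Z hZ (FreeGroup.of a) =
    SemidirectProduct.inr (FreeGroup.of ⟨a, h⟩, 1) := by
  rw [fn1, FreeGroup.lift_apply_of, dif_pos h]

theorem fn1_notMem {a : X} (h : a ∉ Z) : fn1 ρ Z hZ (FreeGroup.of a) =
    SemidirectProduct.inl (FreeGroup.of (1, ⟨a, h⟩)) := by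
  rw [fn1, FreeGroup.lift_apply_of, dif_neg h]

/-- splitting map -/
noncomputable def Phi1 : QQ ρ →* QQ (rho1 ρ Z hZ) :=
  SemidirectProduct.lift (fn1 ρ Z hZ)
    ((SemidirectProduct.inr : FreeGroup Z × K →* QQ (rho1 ρ Z hZ)).comp (MonoidHom.inr (FreeGroup Z) K)) (by
    intro k
    ext1 a
    simp only [MonoidHom.comp_apply, MulEquiv.coe_toMonoidHom, act_apply, MulAut.conj_apply,
      FreeGroup.map.of]
    by_cases ha : a ∈ Z
    · rw [hZ k a ha, fn1_mem ρ Z hZ ha, ← map_inv, ← map_mul, ← map_mul]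
      simp
    · rw [fn1_notMem ρ Z hZ ha, fn1_notMem ρ Z hZ (cinv ρ Z hZ k a ha), conj_inl]
      congr 1)

/-- inclusion of the fixed part -/
def iZ : FreeGroup Z →* FreeGroup X := FreeGroup.map Subtype.val

theorem act_iZ (hZ : ∀ k x, x ∈ Z → ρ k x = x) (k : K) (h : FreeGroup Z) : act ρ k (iZ Z h) = iZ Z h := by
  rw [act_apply, iZ, FreeGroup.map.comp]
  congr 2
  funext z
  exact hZ k z z.2

/-- back map on the quotient -/
def fgB : FreeGroup Z × K →* QQ ρ :=
  MonoidHom.noncommCoprod ((SemidirectProduct.inl : FreeGroup X →* QQ ρ).comp (iZ Z))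
    (SemidirectProduct.inr : K →* QQ ρ) (by
      intro h k
      change _ * _ = _ * _
      simp only [MonoidHom.comp_apply]
      ext
      · simp [act_iZ ρ Z hZ]
      · simp)

theorem fgB_apply (p : FreeGroup Z × K) : fgB ρ Z hZ p =
    SemidirectProduct.inl (iZ Z p.1) * SemidirectProduct.inr p.2 := rfl

/-- back map on the free group -/
def fnB : FreeGroup (FreeGroup Z × (Zᶜ : Set X)) →* QQ ρ :=
  (SemidirectProduct.inl : FreeGroup X →* QQ ρ).comp
    (FreeGroup.lift fun p => iZ Z p.1 * FreeGroup.of p.2.1 * (iZ Z p.1)⁻¹)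

/-- back map -/
def PsiB : QQ (rho1 ρ Z hZ) →* QQ ρ :=
  SemidirectProduct.lift (fnB ρ Z) (fgB ρ Z hZ) (by
    rintro ⟨h', k⟩
    ext1 ⟨h, y⟩
    simp only [MonoidHom.comp_apply, MulEquiv.coe_toMonoidHom, act_apply, MulAut.conj_apply,
      FreeGroup.map.of]
    rw [rho1_apply]
    simp only [fnB, MonoidHom.comp_apply, FreeGroup.lift_apply_of]
    rw [conj_inl]
    congr 1
    simp only [fgB_apply, map_mul, map_inv, SemidirectProduct.mul_left, SemidirectProduct.mul_right,
      SemidirectProduct.left_inl, SemidirectProduct.right_inl, SemidirectProduct.left_inr,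
      SemidirectProduct.right_inr, act_iZ ρ Z hZ, map_one, one_mul, mul_one, mul_inv_rev]
    simp [act_apply, mul_assoc])

theorem PsiB_Phi1 : (PsiB ρ Z hZ).comp (Phi1 ρ Z hZ) = MonoidHom.id _ := by
  apply SemidirectProduct.hom_ext
  · ext1 a
    simp only [MonoidHom.comp_apply, Phi1, SemidirectProduct.lift_inl, MonoidHom.id_apply]
    by_cases ha : a ∈ Z
    · rw [fn1_mem ρ Z hZ ha, PsiB, SemidirectProduct.lift_inr, fgB_apply]
      simp [iZ]
    · rw [fn1_notMem ρ Z hZ ha, PsiB, SemidirectProduct.lift_inl]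
      simp [fnB]
  · ext1 k
    simp only [MonoidHom.comp_apply, Phi1, SemidirectProduct.lift_inr, MonoidHom.id_apply, PsiB, fgB_apply]
    simp

theorem Phi1_injective : Function.Injective (Phi1 ρ Z hZ) := by
  intro u v h
  have h2 := congrArg (PsiB ρ Z hZ) h
  have h3 := fun u => DFunLike.congr_fun (PsiB_Phi1 ρ Z hZ) u
  simp only [MonoidHom.comp_apply, MonoidHom.id_apply] at h3
  rwa [h3, h3] at h2

theorem Phi1_right (q : QQ ρ) : (Phi1 ρ Z hZ q).right = (retF ρ Z hZ q, q.right) := by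
  have : (SemidirectProduct.rightHom).comp (Phi1 ρ Z hZ) =
      (retF ρ Z hZ).prod (SemidirectProduct.rightHom : QQ ρ →* K) := by
    apply SemidirectProduct.hom_ext
    · ext1 a
      simp only [MonoidHom.comp_apply, Phi1, SemidirectProduct.lift_inl, MonoidHom.prod_apply, retF]
      by_cases ha : a ∈ Z
      · rw [fn1_mem ρ Z hZ ha, rZ_of_mem Z ha]; simp
      · rw [fn1_notMem ρ Z hZ ha, rZ_of_notMem Z ha]; simp; rfl
    · ext1 k
      simp [Phi1, retF]
  exact DFunLike.congr_fun this q

end Split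

theorem lemmaII (f : FreeGroup X) (b : QQ ρ)
    (hiso : ∀ (n : ℤ) (x : X), n ≠ 0 → ρ (b.right ^ n) x = x → ρ b.right x = x)
    (hfix : ∀ (k : K) (x : X), ρ b.right x = x → ρ k x = x)
    (hne : SemidirectProduct.inl f * b ≠ b * SemidirectProduct.inl f) :
    Function.Injective (lift2 (SemidirectProduct.inl f : QQ ρ) b) := by
  let Z : Set X := {x | ρ b.right x = x}
  have hZ : ∀ k x, x ∈ Z → ρ k x = x := fun k x hx => hfix k x hx
  let r := retF ρ Z hZ
  by_cases hcom : r (SemidirectProduct.inl f) * r b = r b * r (SemidirectProduct.inl f)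
  swap
  · exact lift2_of_map r _ _ (fg_lemma _ _ hcom)
  have hf1 : f ≠ 1 := by
    rintro rfl
    apply hne
    simp
  by_cases hf0 : r (SemidirectProduct.inl f) = 1
  · obtain ⟨n, x, hn, hx0, hx, hl⟩ := exists_lead_mg f hf1
    obtain ⟨m, hm⟩ := exists_coeff_ne x hx0
    refine core1 ρ f b n hn x hx hl m hm ?_
    intro j hj
    by_contra hj0
    refine rZ_ne_one Z hl hm ?_ ?_
    · intro a ha
      exact hiso j a hj0 (map_fix _ m hj a ha)
    · simpa [r, retF] using hf0
  · apply lift2_of_map (Phi1 ρ Z hZ)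
    set A := Phi1 ρ Z hZ (SemidirectProduct.inl f) with hA
    set B := Phi1 ρ Z hZ b with hB
    have hAr : A.right = (r (SemidirectProduct.inl f), 1) := Phi1_right ρ Z hZ _
    have hBr : B.right = (r b, b.right) := Phi1_right ρ Z hZ _
    have hABr : A.right * B.right = B.right * A.right := by
      rw [hAr, hBr, Prod.mk_mul_mk, Prod.mk_mul_mk, hcom, one_mul, mul_one]
    have hAB : A * B ≠ B * A := by
      intro h
      rw [hA, hB, ← map_mul, ← map_mul] at h
      exact hne (Phi1_injective ρ Z hZ h)
    have hc : A * B * A⁻¹ * B⁻¹ = SemidirectProduct.inl (A * B * A⁻¹ * B⁻¹).left := by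
      ext1
      · simp
      · simp only [SemidirectProduct.mul_right, SemidirectProduct.inv_right, SemidirectProduct.right_inl]
        rw [comm_iff]; exact hABr
    have hc1 : (A * B * A⁻¹ * B⁻¹).left ≠ 1 := by
      intro h
      rw [h, map_one, comm_iff] at hc
      exact hAB hc
    obtain ⟨n, x, hn, hx0, hx, hl⟩ := exists_lead_mg _ hc1
    obtain ⟨m, hm⟩ := exists_coeff_ne x hx0
    refine core2 _ A B _ hABr hc n hn x hx hl m hm ?_
    intro i j hij
    have hlen : m.length = n := hx m hm
    obtain ⟨⟨h, y⟩, hy⟩ : ∃ a, a ∈ FreeMonoid.toList m := by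
      apply List.exists_mem_of_length_pos
      change 0 < m.length
      omega
    have h1 := map_fix _ m hij _ hy
    rw [rho1_apply, hAr, hBr] at h1
    simp only [Prod.pow_mk, Prod.mk_mul_mk, one_zpow, one_mul, Prod.mk.injEq, mul_eq_right] at h1
    have hj : j = 0 := by
      by_contra hj0
      exact y.2 (hiso j y hj0 (congrArg Subtype.val h1.2))
    refine ⟨?_, hj⟩
    have h2 := h1.1
    rw [hj, zpow_zero, mul_one] at h2
    by_contra hi
    exact hf0 ((IsMulTorsionFree.zpow_eq_one_iff_left hi).mp h2)

end ThmB
end Baud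

namespace Baud
section ThmB2

/-- change of acting group -/
def mapK {K K' X : Type*} [Group K] [Group K'] (ρ : K →* Equiv.Perm X) (θ : K' →* K) :
    QQ (ρ.comp θ) →* QQ ρ :=
  SemidirectProduct.map (MonoidHom.id _) θ (by intro k; rfl)

theorem mapK_left {K K' X : Type*} [Group K] [Group K'] (ρ : K →* Equiv.Perm X) (θ : K' →* K)
    (q : QQ (ρ.comp θ)) : (mapK ρ θ q).left = q.left := rfl

theorem mapK_right {K K' X : Type*} [Group K] [Group K'] (ρ : K →* Equiv.Perm X) (θ : K' →* K)
    (q : QQ (ρ.comp θ)) : (mapK ρ θ q).right = θ q.right := rfl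

theorem mapK_injective {K K' X : Type*} [Group K] [Group K'] (ρ : K →* Equiv.Perm X) (θ : K' →* K)
    (hθ : Function.Injective θ) : Function.Injective (mapK ρ θ) := by
  intro u v h
  ext1
  · exact (congrArg (fun q => SemidirectProduct.left q) h :
      (mapK ρ θ u).left = (mapK ρ θ v).left)
  · exact hθ (congrArg (fun q => SemidirectProduct.right q) h :
      (mapK ρ θ u).right = (mapK ρ θ v).right)

theorem eq_inl {K X : Type*} [Group K] {ρ : K →* Equiv.Perm X} (q : QQ ρ) (h : q.right = 1) :
    q = SemidirectProduct.inl q.left := by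
  ext1
  · simp
  · simpa using h

theorem comm_right {K X : Type*} [CommGroup K] {ρ : K →* Equiv.Perm X} (a b : QQ ρ) :
    (a * b * a⁻¹ * b⁻¹).right = 1 := by
  simp only [SemidirectProduct.mul_right, SemidirectProduct.inv_right]
  rw [comm_iff]; exact mul_comm _ _

/-- pushing forward to the full permutation group preserves non-commutation -/
theorem push_ne {K X : Type*} [CommGroup K] (ρ : K →* Equiv.Perm X) (a b : QQ ρ)
    (hne : a * b ≠ b * a) (φ : QQ ρ →* QQ (MonoidHom.id (Equiv.Perm X)))
    (hφ : ∀ u, φ (SemidirectProduct.inl u) = SemidirectProduct.inl u) : φ a * φ b ≠ φ b * φ a := by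
  intro h
  apply hne
  rw [← comm_iff] at h ⊢
  rw [← map_inv, ← map_inv, ← map_mul, ← map_mul, ← map_mul, eq_inl _ (comm_right a b), hφ,
    ← map_one (SemidirectProduct.inl)] at h
  rw [eq_inl _ (comm_right a b), SemidirectProduct.inl_injective h, map_one]

theorem lemmaII' {K X : Type*} [CommGroup K] (ρ : K →* Equiv.Perm X)
    (hiso : ∀ (k : K) (n : ℤ) (x : X), n ≠ 0 → ρ (k ^ n) x = x → ρ k x = x)
    (a b : QQ ρ) (hne : a * b ≠ b * a) (ha : ρ a.right = 1) : Function.Injective (lift2 a b) := by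
  let φ : QQ ρ →* QQ (MonoidHom.id (Equiv.Perm X)) := mapK (MonoidHom.id (Equiv.Perm X)) ρ
  apply lift2_of_map φ
  have hφne := push_ne ρ a b hne φ (by
    intro u
    ext1
    · rfl
    · exact map_one ρ)
  let τ := ρ b.right
  let θ : Subgroup.zpowers τ →* Equiv.Perm X := Subgroup.subtype _
  let j : QQ ((MonoidHom.id (Equiv.Perm X)).comp θ) →* QQ (MonoidHom.id (Equiv.Perm X)) := mapK _ θ
  have hj : Function.Injective j := mapK_injective _ θ Subtype.val_injective
  let b' : QQ ((MonoidHom.id (Equiv.Perm X)).comp θ) := ⟨b.left, ⟨τ, Subgroup.mem_zpowers τ⟩⟩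
  have h1 : φ a = j (SemidirectProduct.inl a.left) := by
    ext1
    · rfl
    · change ρ a.right = 1
      exact ha
  have h2 : φ b = j b' := by ext1 <;> rfl
  rw [h1, h2] at hφne ⊢
  apply lift2_map j hj
  apply lemmaII
  · intro n x hn hx
    refine hiso b.right n x hn ?_
    rw [map_zpow]
    exact hx
  · rintro ⟨k, hk⟩ x hx
    obtain ⟨n, rfl⟩ := hk
    change (τ ^ n) x = x
    change τ x = x at hx
    exact Equiv.Perm.zpow_apply_eq_self_of_apply_eq_self hx n
  · intro h
    apply hφne
    rw [← map_mul, ← map_mul, h]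

theorem lemmaI {K X : Type*} [CommGroup K] (ρ : K →* Equiv.Perm X)
    (hiso : ∀ (k : K) (n : ℤ) (x : X), n ≠ 0 → ρ (k ^ n) x = x → ρ k x = x) (N : ℕ) :
    ∀ (a b : QQ ρ) (p q : ℤ), p.natAbs = N → (p ≠ 0 ∨ q ≠ 0) → a * b ≠ b * a →
      ρ (a.right ^ p * b.right ^ q) = 1 → Function.Injective (lift2 a b) := by
  induction N using Nat.strong_induction_on with
  | _ N ih =>
    intro a b p q hp hpq hne hs
    by_cases hp0 : p = 0
    · subst hp0
      have hq : q ≠ 0 := by simpa using hpq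
      rw [zpow_zero, one_mul] at hs
      apply lift2_swap
      apply lemmaII' ρ hiso b a (Ne.symm hne)
      ext x
      exact hiso b.right q x hq (by rw [hs]; rfl)
    · apply lift2_mul_zpow a b (q / p)
      apply lift2_swap
      have hz : (b ^ (q / p)).right = b.right ^ (q / p) := map_zpow SemidirectProduct.rightHom b _
      refine ih (q % p).natAbs ?_ b (a * b ^ (q / p)) (q % p) p rfl (Or.inr hp0) ?_ ?_
      · have := Int.emod_lt_abs q hp0
        have := Int.emod_nonneg q hp0
        rw [Int.abs_eq_natAbs] at *
        omega
      · intro h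
        apply hne
        have h2 : b ^ (q / p) * b = b * b ^ (q / p) := (Commute.zpow_self b _).eq
        have h3 : a * b * b ^ (q / p) = b * a * b ^ (q / p) := by
          rw [mul_assoc, ← h2, ← mul_assoc, ← h, mul_assoc]
        exact mul_right_cancel h3
      · rw [← hs]
        congr 1
        rw [SemidirectProduct.mul_right, hz, mul_zpow, ← zpow_mul, mul_left_comm, ← zpow_add]
        congr 2
        have := Int.emod_add_mul_ediv q p
        rw [mul_comm (q / p)]; exact this

theorem thmB {K X : Type*} [CommGroup K] (ρ : K →* Equiv.Perm X)
    (hiso : ∀ (k : K) (n : ℤ) (x : X), n ≠ 0 → ρ (k ^ n) x = x → ρ k x = x)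
    (a b : QQ ρ) (hne : a * b ≠ b * a) : Function.Injective (lift2 a b) := by
  have hc := eq_inl _ (comm_right a b)
  set c := (a * b * a⁻¹ * b⁻¹).left with hcdef
  have hc1 : c ≠ 1 := by
    intro h
    rw [h, map_one, comm_iff] at hc
    exact hne hc
  obtain ⟨n, x, hn, hx0, hx, hl⟩ := exists_lead_mg _ hc1
  obtain ⟨m, hm⟩ := exists_coeff_ne x hx0
  by_cases hst : ∀ i j : ℤ, FreeMonoid.map (ρ (a.right ^ i * b.right ^ j)) m = m → i = 0 ∧ j = 0
  · exact core2 ρ a b c (mul_comm _ _) hc n hn x hx hl m hm hst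
  · push Not at hst
    obtain ⟨i, j, hm1, hij⟩ := hst
    set s := a.right ^ i * b.right ^ j with hs
    let Z : Set X := {x | ρ s x = x}
    have hZ : ∀ k x, x ∈ Z → ρ k x ∈ Z := by
      intro k x hx
      change ρ s (ρ k x) = ρ k x
      rw [← Equiv.Perm.mul_apply, ← map_mul, mul_comm, map_mul, Equiv.Perm.mul_apply]
      congr 1
    have hr1 : rZ Z c ≠ 1 := rZ_ne_one Z hl hm (map_fix _ m hm1)
    apply lift2_of_map (retr ρ Z hZ)
    refine lemmaI (resP ρ Z hZ) ?_ _ _ _ i j rfl ?_ ?_ ?_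
    · intro k n z hn hz
      ext
      exact hiso k n z hn (congrArg Subtype.val hz)
    · by_contra! h
      exact hij h.1 h.2
    · intro h
      apply hr1
      rw [← comm_iff, ← map_inv, ← map_inv, ← map_mul, ← map_mul, ← map_mul, hc] at h
      have := congrArg SemidirectProduct.left h
      simpa [retr] using this
    · ext z
      change ρ s z = z
      exact z.2

end ThmB2
end Baud

namespace Baud
section Roots

variable {K X : Type*} [Group K] {ρ : K →* Equiv.Perm X}

theorem pow_right (q : QQ ρ) (N : ℕ) : (q ^ N).right = q.right ^ N :=
  map_pow SemidirectProduct.rightHom q N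

theorem pow_lead (q r : QQ ρ) (hr : q.right = r.right) (n : ℕ) (δ : MQ X)
    (hl : Lead n (((mg q.left : (PowerSeries (MQ X))ˣ) : PowerSeries (MQ X)) -
      ((mg r.left : (PowerSeries (MQ X))ˣ) : PowerSeries (MQ X))) δ) (N : ℕ) :
    Lead n (((mg (q ^ N).left : (PowerSeries (MQ X))ˣ) : PowerSeries (MQ X)) -
      ((mg (r ^ N).left : (PowerSeries (MQ X))ˣ) : PowerSeries (MQ X)))
      (∑ i ∈ Finset.range N, mqMap (ρ (q.right ^ i)) δ) := by
  have h0 : ∀ v : FreeGroup X, Lead 0 ((mg v : (PowerSeries (MQ X))ˣ) : PowerSeries (MQ X)) 1 :=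
    fun v => ⟨by simp, mg_coeff_zero v⟩
  induction N with
  | zero =>
    simp only [pow_zero, sub_self, Finset.range_zero, Finset.sum_empty]
    exact ⟨by simp, by simp⟩
  | succ N ih =>
    have h1 : Lead n (((mg (act ρ (q.right ^ N) q.left) : (PowerSeries (MQ X))ˣ) :
        PowerSeries (MQ X)) - ((mg (act ρ (q.right ^ N) r.left) : (PowerSeries (MQ X))ˣ) :
        PowerSeries (MQ X))) (mqMap (ρ (q.right ^ N)) δ) := by
      rw [act_apply, act_apply, mg_map, mg_map, ← map_sub]
      exact hl.map _
    have h2 := (ih.mul (h0 (act ρ (q.right ^ N) q.left))).add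
      (by have := (h0 (r ^ N).left).mul h1
          rw [zero_add] at this
          exact this)
    rw [mul_one, one_mul, ← Finset.sum_range_succ] at h2
    rw [pow_succ, pow_succ, SemidirectProduct.mul_left, SemidirectProduct.mul_left, pow_right,
      pow_right, ← hr, map_mul, map_mul, Units.val_mul, Units.val_mul]
    rw [add_zero] at h2
    convert h2 using 1
    noncomm_ring

theorem fm_mul (p q : Equiv.Perm X) (m : FreeMonoid X) :
    FreeMonoid.map (p * q) m = FreeMonoid.map p (FreeMonoid.map q m) := by
  apply FreeMonoid.toList.injective
  simp [FreeMonoid.toList_map]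

theorem fm_one (m : FreeMonoid X) :
    FreeMonoid.map (1 : Equiv.Perm X) m = m := by
  apply FreeMonoid.toList.injective
  simp [FreeMonoid.toList_map]

theorem mqMap_mul (p q : Equiv.Perm X) (δ : MQ X) : mqMap (p * q) δ = mqMap p (mqMap q δ) := by
  have : (mqMap (X := X) (p * q)) = (mqMap p).comp (mqMap q) := by
    apply MonoidAlgebra.ringHom_ext
    · intro r; simp [mqMap]
    · intro m
      simp only [mqMap, RingHom.comp_apply, MonoidAlgebra.mapDomainRingHom_apply,
        MonoidAlgebra.mapDomain_single]
      congr 1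
      exact fm_mul p q m
  rw [this]; rfl

theorem mqMap_one (δ : MQ X) : mqMap (1 : Equiv.Perm X) δ = δ := by
  apply MonoidAlgebra.ext
  apply Finsupp.ext
  intro w
  have := mqMap_coeff (1 : Equiv.Perm X) (Equiv.injective _) δ w
  rwa [fm_one] at this

theorem qq_torsionFree [IsMulTorsionFree K]
    (hiso : ∀ (k : K) (n : ℤ) (x : X), n ≠ 0 → ρ (k ^ n) x = x → ρ k x = x) :
    IsMulTorsionFree (QQ ρ) := by
  constructor
  intro N hN q r hqr
  have hqr : q ^ N = r ^ N := hqr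
  have hr : q.right = r.right := by
    have := congrArg (fun t => SemidirectProduct.right t) hqr
    simp only [pow_right] at this
    exact IsMulTorsionFree.pow_left_injective hN this
  refine SemidirectProduct.ext ?_ hr
  by_contra hne
  obtain ⟨n, δ, hn, hδ, -, hl⟩ := exists_lead_sub _ _ hne
  have hs := (pow_lead q r hr n δ hl N).2
  rw [hqr, sub_self, map_zero] at hs
  set k := q.right with hk
  have hinv : mqMap (ρ (k ^ N)) δ = δ := by
    have h1 := congrArg (mqMap (ρ k)) hs
    rw [map_zero, map_sum] at h1
    have h2 : ∀ i ∈ Finset.range N, mqMap (ρ k) (mqMap (ρ (k ^ i)) δ) = mqMap (ρ (k ^ (i + 1))) δ := by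
      intro i _
      rw [pow_succ', map_mul, mqMap_mul]
    rw [Finset.sum_congr rfl h2] at h1
    have h3 := Finset.sum_range_succ (fun i => mqMap (ρ (k ^ i)) δ) N
    rw [Finset.sum_range_succ', ← h1, ← hs, zero_add, zero_add] at h3
    rw [← h3, pow_zero, map_one]
    exact mqMap_one δ
  have hper : ∀ (j : ℕ) m, δ.coeff (FreeMonoid.map (ρ ((k ^ N) ^ j)) m) = δ.coeff m := by
    intro j m
    induction j with
    | zero => rw [pow_zero, map_one, fm_one]
    | succ j ih =>
      rw [pow_succ', map_mul, fm_mul, ← ih]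
      have := mqMap_coeff (ρ (k ^ N)) (Equiv.injective _) δ (FreeMonoid.map (ρ ((k ^ N) ^ j)) m)
      rwa [hinv] at this
  obtain ⟨m, hm⟩ := exists_coeff_ne δ hδ
  let f : ℕ → δ.coeff.support := fun j =>
    ⟨FreeMonoid.map (ρ ((k ^ N) ^ j)) m, by rw [Finsupp.mem_support_iff, hper]; exact hm⟩
  obtain ⟨i, j, hij, hf⟩ := Finite.exists_ne_map_eq_of_infinite f
  have hf : FreeMonoid.map (ρ ((k ^ N) ^ i)) m = FreeMonoid.map (ρ ((k ^ N) ^ j)) m :=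
    congrArg Subtype.val hf
  have hfix : FreeMonoid.map (ρ (k ^ ((N : ℤ) * (i - j)))) m = m := by
    have h1 := congrArg (FreeMonoid.map (ρ ((k ^ N) ^ j)⁻¹)) hf
    rw [← fm_mul, ← fm_mul, ← map_mul, ← map_mul, inv_mul_cancel, map_one, fm_one] at h1
    rw [← h1]
    congr 4
    rw [zpow_mul, zpow_sub, zpow_natCast, zpow_natCast, zpow_natCast]
    exact (((Commute.refl (k ^ N)).pow_pow i j).inv_right).eq
  have hfix2 : ∀ a ∈ FreeMonoid.toList m, ρ k a = a := by
    intro a ha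
    refine hiso k _ a ?_ (map_fix _ m hfix a ha)
    refine mul_ne_zero (by exact_mod_cast hN) (sub_ne_zero.mpr (by exact_mod_cast hij))
  have hk1 : FreeMonoid.map (ρ k) m = m := by
    apply FreeMonoid.toList.injective
    rw [FreeMonoid.toList_map]
    conv_rhs => rw [← List.map_id (FreeMonoid.toList m)]
    exact List.map_congr_left hfix2
  have hki : ∀ i : ℕ, FreeMonoid.map (ρ (k ^ i)) m = m := by
    intro i
    induction i with
    | zero => rw [pow_zero, map_one, fm_one]
    | succ i ih => rw [pow_succ, map_mul, fm_mul, hk1, ih]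
  have hsum : ∀ M : ℕ, (∑ i ∈ Finset.range M, mqMap (ρ (k ^ i)) δ).coeff m = M * δ.coeff m := by
    intro M
    induction M with
    | zero => simp
    | succ M ih =>
      rw [Finset.sum_range_succ, MonoidAlgebra.coeff_add, Finsupp.add_apply, ih]
      have := mqMap_coeff (ρ (k ^ M)) (Equiv.injective _) δ m
      rw [hki] at this
      rw [this]; push_cast; ring
  have h5 := hsum N
  rw [← hs] at h5
  have h6 : (N : ℤ) * δ.coeff m = 0 := by rw [← h5]; rfl
  exact mul_ne_zero (by exact_mod_cast hN) hm h6
end Roots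
end Baud

namespace Baud
section Induct

/-- torsion free with non-commuting pairs generating free groups -/
def Good (G : Type*) [Group G] : Prop :=
  IsMulTorsionFree G ∧ ∀ a b : G, a * b ≠ b * a → Function.Injective (lift2 a b)

theorem Good.of_injective {G H : Type*} [Group G] [Group H] (φ : G →* H)
    (hφ : Function.Injective φ) (h : Good H) : Good G := by
  obtain ⟨h1, h2⟩ := h
  refine ⟨⟨?_⟩, ?_⟩
  · intro n hn a b hab
    apply hφ
    apply IsMulTorsionFree.pow_left_injective hn
    change φ a ^ n = φ b ^ n
    rw [← map_pow, ← map_pow]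
    exact congrArg φ hab
  · intro a b hab
    apply lift2_of_map φ
    apply h2
    intro h
    apply hab
    apply hφ
    rw [map_mul, map_mul, h]

theorem iso_of_roots {K : Type*} [Group K] [IsMulTorsionFree K] (r : K →* K)
    (hr : ∀ x, r (r x) = r x) (k : K) (n : ℤ) (x : K ⧸ r.range) (hn : n ≠ 0)
    (h : k ^ n • x = x) : k • x = x := by
  induction x using QuotientGroup.induction_on with
  | H g =>
    have key : ∀ k : K, k • (g : K ⧸ r.range) = g ↔ r (g⁻¹ * k * g) = g⁻¹ * k * g := by
      intro k
      change ((k * g : K) : K ⧸ r.range) = (g : K ⧸ r.range) ↔ _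
      rw [eq_comm, QuotientGroup.eq, ← mul_assoc]
      constructor
      · rintro ⟨y, hy⟩
        rw [← hy, hr]
      · intro h
        exact ⟨_, h⟩
    rw [key] at h ⊢
    have h2 : g⁻¹ * k ^ n * g = (g⁻¹ * k * g) ^ n := by
      have := conj_zpow (i := n) (a := g⁻¹) (b := k)
      rw [inv_inv] at this
      exact this.symm
    rw [h2, map_zpow] at h
    exact zpow_left_injective hn h

theorem Good.step {K : Type*} [Group K] (hK : Good K) (r : K →* K)
    (hr : ∀ x, r (r x) = r x) : Good (QQ (MulAction.toPermHom K (K ⧸ r.range))) := by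
  obtain ⟨h1, h2⟩ := hK
  set ρ := MulAction.toPermHom K (K ⧸ r.range) with hρ
  have hiso : ∀ (k : K) (n : ℤ) (x : K ⧸ r.range), n ≠ 0 → ρ (k ^ n) x = x → ρ k x = x :=
    fun k n x hn h => iso_of_roots r hr k n x hn h
  refine ⟨qq_torsionFree hiso, ?_⟩
  intro a b hab
  by_cases hc : a.right * b.right = b.right * a.right
  · let S : Subgroup K := Subgroup.closure {a.right, b.right}
    let _ : CommGroup S := Subgroup.closureCommGroupOfComm (by
      intro x hx y hy
      rcases hx with rfl | rfl <;> rcases hy with rfl | rfl <;> first | rfl | exact hc | exact hc.symm)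
    let θ : S →* K := S.subtype
    let a' : QQ (ρ.comp θ) := ⟨a.left, ⟨a.right, Subgroup.subset_closure (by simp)⟩⟩
    let b' : QQ (ρ.comp θ) := ⟨b.left, ⟨b.right, Subgroup.subset_closure (by simp)⟩⟩
    have ha : a = mapK ρ θ a' := by ext1 <;> rfl
    have hb : b = mapK ρ θ b' := by ext1 <;> rfl
    rw [ha, hb] at hab ⊢
    apply lift2_map (mapK ρ θ) (mapK_injective _ _ Subtype.val_injective)
    apply thmB
    · intro k n x hn h
      refine hiso (θ k) n x hn ?_
      rw [← map_zpow]; exact h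
    · intro h
      apply hab
      rw [← map_mul, ← map_mul, h]
  · apply lift2_of_map SemidirectProduct.rightHom
    exact h2 _ _ hc

open Classical in
theorem raag_good (n : ℕ) : ∀ (V : Type) [Fintype V] (Γ : SimpleGraph V), Fintype.card V = n →
    Good (Raag Γ) := by
  induction n with
  | zero =>
    intro V _ Γ hV
    have : IsEmpty V := Fintype.card_eq_zero_iff.mp hV
    have hs : ∀ a b : Raag Γ, a = b := by
      intro a b
      induction a using PresentedGroup.induction_on with
      | H a =>
      induction b using PresentedGroup.induction_on with
      | H b => rw [Subsingleton.elim a b]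
    exact ⟨⟨fun _ _ a b _ => hs a b⟩, fun a b h => (h (hs _ _)).elim⟩
  | succ n ih =>
    intro V _ Γ hV
    have : Nonempty V := Fintype.card_pos_iff.mp (by omega)
    obtain ⟨v⟩ := this
    let W := {u : V // u ≠ v}
    let Δ : SimpleGraph W := Γ.comap Subtype.val
    have hW : Fintype.card W = n := by
      have := Fintype.card_subtype_compl (fun u => u = v)
      simp only [Fintype.card_subtype_eq] at this
      change Fintype.card {u // ¬ u = v} = n
      rw [this]; omega
    have hK : Good (Raag Δ) := ih W Δ hW
    have hcommK : ∀ u w : W, Δ.Adj u w → (PresentedGroup.of u : Raag Δ) * PresentedGroup.of w =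
        PresentedGroup.of w * PresentedGroup.of u := by
      intro u w h
      rw [← comm_iff]
      exact PresentedGroup.one_of_mem ⟨u, w, h, rfl⟩
    have hcommG : ∀ u w : V, Γ.Adj u w → (PresentedGroup.of u : Raag Γ) * PresentedGroup.of w =
        PresentedGroup.of w * PresentedGroup.of u := by
      intro u w h
      rw [← comm_iff]
      exact PresentedGroup.one_of_mem ⟨u, w, h, rfl⟩
    let r : Raag Δ →* Raag Δ := PresentedGroup.toGroup (rels := raagRels Δ)
      (f := fun u => if Γ.Adj v u.1 then PresentedGroup.of u else 1) (by
        rintro _ ⟨u, w, h, rfl⟩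
        simp only [map_mul, map_inv, FreeGroup.lift_apply_of]
        rw [comm_iff]
        split_ifs
        · exact hcommK u w h
        all_goals simp)
    have hrof : ∀ u : W, r (PresentedGroup.of u) = if Γ.Adj v u.1 then PresentedGroup.of u else 1 :=
      fun u => PresentedGroup.toGroup.of _
    have hr : ∀ x, r (r x) = r x := by
      have : r.comp r = r := by
        apply PresentedGroup.ext
        intro u
        rw [MonoidHom.comp_apply, hrof]
        split_ifs with h
        · rw [hrof, if_pos h]
        · exact map_one r
      exact fun x => DFunLike.congr_fun this x
    let ρ := MulAction.toPermHom (Raag Δ) (Raag Δ ⧸ r.range)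
    have hQ : Good (QQ ρ) := hK.step r hr
    let x₀ : Raag Δ ⧸ r.range := ((1 : Raag Δ) : Raag Δ ⧸ r.range)
    let e : V → QQ ρ := fun u => if h : u = v then SemidirectProduct.inl (FreeGroup.of x₀)
      else SemidirectProduct.inr (PresentedGroup.of ⟨u, h⟩)
    have hev : e v = SemidirectProduct.inl (FreeGroup.of x₀) := dif_pos rfl
    have heu : ∀ u (h : u ≠ v), e u = SemidirectProduct.inr (PresentedGroup.of ⟨u, h⟩) :=
      fun u h => dif_neg h
    have hvw : ∀ w, Γ.Adj v w → e v * e w = e w * e v := by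
      intro w h
      have hw : w ≠ v := h.ne'
      rw [hev, heu w hw]
      have h1 := SemidirectProduct.inl_aut (φ := act ρ) (PresentedGroup.of ⟨w, hw⟩) (FreeGroup.of x₀)
      have h2 : act ρ (PresentedGroup.of ⟨w, hw⟩) (FreeGroup.of x₀) = FreeGroup.of x₀ := by
        rw [act_apply, FreeGroup.map.of]
        congr 1
        change ((PresentedGroup.of ⟨w, hw⟩ * 1 : Raag Δ) : Raag Δ ⧸ r.range) = ((1 : Raag Δ) : _)
        rw [mul_one, QuotientGroup.eq, mul_one]
        refine inv_mem ⟨PresentedGroup.of ⟨w, hw⟩, ?_⟩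
        rw [hrof, if_pos h]
      rw [h2, map_inv, eq_mul_inv_iff_mul_eq] at h1
      exact h1
    let i : Raag Γ →* QQ ρ := PresentedGroup.toGroup (rels := raagRels Γ) (f := e) (by
      rintro _ ⟨u, w, h, rfl⟩
      simp only [map_mul, map_inv, FreeGroup.lift_apply_of]
      rw [comm_iff]
      by_cases hu : u = v
      · subst hu; exact hvw w h
      · by_cases hw : w = v
        · subst hw; exact (hvw u h.symm).symm
        · rw [heu u hu, heu w hw, ← map_mul, ← map_mul, hcommK]
          exact h)
    let ι : Raag Δ →* Raag Γ := PresentedGroup.toGroup (rels := raagRels Δ)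
      (f := fun u => PresentedGroup.of u.1) (by
        rintro _ ⟨u, w, h, rfl⟩
        simp only [map_mul, map_inv, FreeGroup.lift_apply_of]
        rw [comm_iff]
        exact hcommG _ _ h)
    have hιof : ∀ u : W, ι (PresentedGroup.of u) = PresentedGroup.of u.1 :=
      fun u => PresentedGroup.toGroup.of _
    let gv : Raag Γ := PresentedGroup.of v
    have hcent : ∀ y, ι (r y) * gv = gv * ι (r y) := by
      have h1 : (⊤ : Subgroup (Raag Δ)) ≤ (Subgroup.centralizer {gv}).comap (ι.comp r) := by
        rw [← PresentedGroup.closure_range_of, Subgroup.closure_le]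
        rintro _ ⟨u, rfl⟩
        change ι (r (PresentedGroup.of u)) ∈ Subgroup.centralizer {gv}
        rw [hrof]
        split_ifs with h
        · rw [hιof, Subgroup.mem_centralizer_singleton_iff]
          exact (hcommG _ _ h).symm
        · rw [map_one]; exact one_mem _
      intro y
      have := h1 (Subgroup.mem_top y)
      exact Subgroup.mem_centralizer_singleton_iff.mp this
    let f : Raag Δ ⧸ r.range → Raag Γ := fun x => Quotient.liftOn' x
      (fun k => ι k * gv * (ι k)⁻¹) (by
        intro k l h
        rw [QuotientGroup.leftRel_apply] at h
        obtain ⟨y, hy⟩ := h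
        have hl : l = k * r y := by rw [hy]; group
        simp only [hl, map_mul, mul_inv_rev]
        rw [mul_assoc (ι k) (ι (r y)) gv, hcent]
        group)
    let j : QQ ρ →* Raag Γ := SemidirectProduct.lift (FreeGroup.lift f) ι (by
      intro k
      ext x
      induction x using QuotientGroup.induction_on with
      | H g =>
        change FreeGroup.lift f (act ρ k (FreeGroup.of (g : Raag Δ ⧸ r.range))) =
          ι k * FreeGroup.lift f (FreeGroup.of (g : Raag Δ ⧸ r.range)) * (ι k)⁻¹
        rw [act_apply, FreeGroup.map.of, FreeGroup.lift_apply_of, FreeGroup.lift_apply_of]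
        change ι (k * g) * gv * (ι (k * g))⁻¹ = ι k * (ι g * gv * (ι g)⁻¹) * (ι k)⁻¹
        rw [map_mul]; group)
    have hji : j.comp i = MonoidHom.id _ := by
      apply PresentedGroup.ext
      intro u
      change j (i (PresentedGroup.of u)) = PresentedGroup.of u
      have : i (PresentedGroup.of u) = e u := PresentedGroup.toGroup.of _
      rw [this]
      by_cases hu : u = v
      · subst hu
        rw [hev, SemidirectProduct.lift_inl, FreeGroup.lift_apply_of]
        change ι 1 * gv * (ι 1)⁻¹ = gv
        simp
      · rw [heu u hu, SemidirectProduct.lift_inr, hιof]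
    refine hQ.of_injective i ?_
    intro a b hab
    have h1 := DFunLike.congr_fun hji a
    have h2 := DFunLike.congr_fun hji b
    rw [MonoidHom.comp_apply, hab] at h1
    exact h1.symm.trans h2

end Induct
end Baud

namespace Baud
section Final

theorem abelian_case {G : Type} [CommGroup G] [IsMulTorsionFree G] (a b : G)
    (h : Subgroup.closure ({a, b} : Set G) = ⊤) :
    ∃ n : ℕ, n ≤ 2 ∧ Nonempty (G ≃* Multiplicative (Fin n → ℤ)) := by
  let f : (Fin 2 → ℤ) →ₗ[ℤ] Additive G :=
    (LinearMap.proj 0).smulRight (Additive.ofMul a) + (LinearMap.proj 1).smulRight (Additive.ofMul b)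
  have hf : Function.Surjective f := by
    intro z
    have hz : z.toMul ∈ Subgroup.closure ({a, b} : Set G) := by rw [h]; trivial
    rw [Subgroup.mem_closure_pair] at hz
    obtain ⟨m, n, hmn⟩ := hz
    refine ⟨![m, n], ?_⟩
    apply Additive.toMul.injective
    rw [← hmn]
    simp [f]
  have hfin : Module.Finite ℤ (Additive G) := Module.Finite.of_surjective f hf
  have hfree : Module.Free ℤ (Additive G) := inferInstance
  have hrk : Module.finrank ℤ (Additive G) ≤ 2 := by
    have := LinearMap.finrank_le_finrank_of_surjective hf
    simpa using this
  refine ⟨_, hrk, ⟨?_⟩⟩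
  let e := (Module.finBasis ℤ (Additive G)).equivFun.toAddEquiv
  exact (MulEquiv.refl G : G ≃* Multiplicative (Additive G)).trans e.toMultiplicative

theorem limit_torsionFree {G H : Type} [CommGroup G] [Group H] [IsMulTorsionFree H]
    (h : FullyResidually H G) : IsMulTorsionFree G := by
  constructor
  intro n hn x y hxy
  by_contra hne
  obtain ⟨φ, hφ⟩ := h {x * y⁻¹} (by
    intro g hg
    rw [Finset.mem_singleton] at hg
    rw [hg, Ne, mul_inv_eq_one]
    exact hne)
  have h1 := hφ _ (Finset.mem_singleton_self _)
  apply h1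
  rw [map_mul, map_inv, mul_inv_eq_one]
  apply IsMulTorsionFree.pow_left_injective hn
  change φ x ^ n = φ y ^ n
  rw [← map_pow, ← map_pow]
  exact congrArg φ hxy

end Final
end Baud

theorem two_generated_limit_group_free_or_freeAbelian
    {V : Type} [Fintype V] (Γ : SimpleGraph V)
    (G : Type) [Group G] (hG : IsLimitGroupOver (Raag Γ) G)
    (hgen : ∃ a b : G, Subgroup.closure ({a, b} : Set G) = ⊤) :
    (∃ n : ℕ, n ≤ 2 ∧ Nonempty (G ≃* FreeGroup (Fin n))) ∨
    (∃ n : ℕ, n ≤ 2 ∧ Nonempty (G ≃* Multiplicative (Fin n → ℤ))) := by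
  obtain ⟨a, b, hab⟩ := hgen
  obtain ⟨-, hres⟩ := hG
  obtain ⟨htf, hfree⟩ := Baud.raag_good _ V Γ rfl
  by_cases hc : a * b = b * a
  · right
    have h1 : IsMulCommutative (Subgroup.closure ({a, b} : Set G)) :=
      Subgroup.isMulCommutative_closure (by
        intro x hx y hy
        rcases hx with rfl | rfl <;> rcases hy with rfl | rfl <;>
          first | rfl | exact hc | exact hc.symm)
    have hcomm : ∀ x y : G, x * y = y * x := by
      intro x y
      have hx : x ∈ Subgroup.closure ({a, b} : Set G) := by rw [hab]; trivial
      have hy : y ∈ Subgroup.closure ({a, b} : Set G) := by rw [hab]; trivial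
      exact congrArg Subtype.val (h1.is_comm.comm ⟨x, hx⟩ ⟨y, hy⟩)
    let inst : CommGroup G := { ‹Group G› with mul_comm := hcomm }
    have htG : IsMulTorsionFree G := Baud.limit_torsionFree (H := Raag Γ) hres
    exact Baud.abelian_case a b hab
  · left
    refine ⟨2, le_rfl, ?_⟩
    obtain ⟨φ, hφ⟩ := hres {a * b * a⁻¹ * b⁻¹} (by
      intro g hg
      rw [Finset.mem_singleton] at hg
      rw [hg, Ne, Baud.comm_iff]
      exact hc)
    have h1 := hφ _ (Finset.mem_singleton_self _)
    have hinj : Function.Injective (Baud.lift2 a b) := by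
      apply Baud.lift2_of_map φ
      apply hfree
      intro h
      apply h1
      rw [map_mul, map_mul, map_mul, map_inv, map_inv, Baud.comm_iff]
      exact h
    have hsurj : Function.Surjective (Baud.lift2 a b) := by
      rw [← MonoidHom.range_eq_top, Baud.lift2_range, hab]
    exact ⟨(MulEquiv.ofBijective _ ⟨hinj, hsurj⟩).symm⟩
end

section
/- Let Γ be a finite simplicial graph. Every solvable subgroup of a limit group over 𝔾(Γ) is abelian: if G is a finitely generated group that is fully residually 𝔾(Γ) and S ≤ G is a solvable subgroup, then S is commutative. -/
namespace RaagProof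

/-- Norm growth of powers in a free group. -/
theorem norm_pow_ge {α : Type*} [DecidableEq α] (x : FreeGroup α) (hx : x ≠ 1) (m : ℕ) :
    m ≤ (x ^ m).norm := by
  rcases Nat.eq_zero_or_pos m with rfl | hm
  · simp
  have hm0 : m ≠ 0 := hm.ne'
  have h1 : FreeGroup.reduceCyclically x.toWord ≠ [] := by
    intro h
    have h2 := FreeGroup.reduceCyclically.conj_conjugator_reduceCyclically x.toWord
    rw [h] at h2
    have h3 := congrArg FreeGroup.mk h2
    rw [FreeGroup.mk_toWord, List.append_nil, ← FreeGroup.mul_mk, ← FreeGroup.inv_mk,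
      mul_inv_cancel] at h3
    exact hx h3.symm
  have h4 : 1 ≤ (FreeGroup.reduceCyclically x.toWord).length := List.length_pos_iff.mpr h1
  rw [FreeGroup.norm, FreeGroup.toWord_pow,
    FreeGroup.reduceCyclically.reduce_flatten_replicate FreeGroup.isReduced_toWord, if_neg hm0]
  simp only [List.length_append, List.length_flatten, List.map_replicate, List.sum_replicate,
    smul_eq_mul]
  nlinarith

theorem perm_closure :
    ∃ σ τ : Equiv.Perm (Fin 5), Subgroup.closure ({σ, τ} : Set (Equiv.Perm (Fin 5))) = ⊤ :=
  ⟨finRotate 5, Equiv.swap 0 1, Equiv.Perm.closure_prime_cycle_swap (by simp; norm_num)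
    (isCycle_finRotate (n := 3)) (support_finRotate (n := 3))
    ⟨0, 1, by decide, rfl⟩⟩

/-- A solvable subgroup of a free group is cyclic. -/
theorem free_solvable_cyclic {Ω : Type*} (D : Subgroup (FreeGroup Ω)) (hD : Group.IsSolvable D) :
    ∃ r ∈ D, ∀ d ∈ D, ∃ k : ℤ, d = r ^ k := by
  classical
  let b := IsFreeGroup.basis D
  have hsub : Subsingleton (IsFreeGroup.Generators D) := by
    by_contra hns
    rw [not_subsingleton_iff_nontrivial] at hns
    obtain ⟨p, q, hpq⟩ := hns
    obtain ⟨σ, τ, hc⟩ := perm_closure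
    let f : D →* Equiv.Perm (Fin 5) := b.lift (fun i => if i = p then σ else τ)
    have hf : ∀ i, f (b i) = if i = p then σ else τ := fun i => by simp [f]
    have hsurj : Function.Surjective f := by
      rw [← MonoidHom.range_eq_top, ← top_le_iff, ← hc, Subgroup.closure_le]
      rintro x (rfl | rfl)
      · exact ⟨b p, by rw [hf]; simp⟩
      · exact ⟨b q, by rw [hf, if_neg hpq.symm]⟩
    exact Equiv.Perm.not_isSolvable_fin_5 (Group.isSolvable_of_surjective hsurj)
  rcases isEmpty_or_nonempty (IsFreeGroup.Generators D) with he | ⟨⟨p⟩⟩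
  · refine ⟨1, D.one_mem, fun d hd => ⟨0, ?_⟩⟩
    have h1 : b.repr ⟨d, hd⟩ = 1 := Subsingleton.elim _ _
    have h2 : (⟨d, hd⟩ : D) = 1 := by simpa using h1
    simpa using congrArg Subtype.val h2
  · refine ⟨(b p : D), (b p).2, fun d hd => ?_⟩
    have key : ∀ w : FreeGroup (IsFreeGroup.Generators D),
        w ∈ Subgroup.zpowers (FreeGroup.of p) := by
      intro w
      induction w using FreeGroup.induction_on with
      | C1 => exact Subgroup.one_mem _
      | of x => rw [Subsingleton.elim x p]; exact Subgroup.mem_zpowers _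
      | inv_of x h => exact Subgroup.inv_mem _ h
      | mul x y hx hy => exact Subgroup.mul_mem _ hx hy
    obtain ⟨k, hk⟩ := Subgroup.mem_zpowers_iff.mp (key (b.repr ⟨d, hd⟩))
    refine ⟨k, ?_⟩
    have h2 : (b p) ^ k = (⟨d, hd⟩ : D) := by
      apply b.repr.injective
      rw [map_zpow, FreeGroupBasis.repr_apply_coe, hk]
    rw [← Subgroup.coe_zpow, h2]

/-- Retraction of a free group killing the generators outside `A`. -/
noncomputable def proj {Ω : Type*} (A : Finset Ω) : FreeGroup Ω →* FreeGroup Ω := by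
  classical
  exact FreeGroup.lift (fun ω => if ω ∈ A then FreeGroup.of ω else 1)

theorem proj_of {Ω : Type*} [DecidableEq Ω] (A : Finset Ω) (ω : Ω) :
    proj A (FreeGroup.of ω) = if ω ∈ A then FreeGroup.of ω else 1 := by
  simp only [proj, FreeGroup.lift_apply_of]
  split_ifs <;> rfl

theorem proj_inter {Ω : Type*} [DecidableEq Ω] (A B : Finset Ω) (x : FreeGroup Ω) :
    proj A (proj B x) = proj (A ∩ B) x := by
  have : (proj A).comp (proj B) = proj (A ∩ B) := by
    ext ω
    simp only [MonoidHom.comp_apply, proj_of, Finset.mem_inter]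
    by_cases h1 : ω ∈ A <;> by_cases h2 : ω ∈ B <;> simp [h1, h2, proj_of]
  exact DFunLike.congr_fun this x

theorem proj_map {Ω : Type*} [DecidableEq Ω] (A : Finset Ω) (k : Equiv.Perm Ω)
    (x : FreeGroup Ω) :
    FreeGroup.map k (proj A x) = proj (A.image k) (FreeGroup.map k x) := by
  have : (FreeGroup.map k).comp (proj A) = (proj (A.image k)).comp (FreeGroup.map k) := by
    ext ω
    simp only [MonoidHom.comp_apply, proj_of, FreeGroup.map.of]
    by_cases h1 : ω ∈ A <;> simp [h1]
  exact DFunLike.congr_fun this x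

theorem proj_fix {Ω : Type*} [DecidableEq Ω] (A : Finset Ω) (k : Equiv.Perm Ω)
    (hk : ∀ ω ∈ A, k ω = ω) (x : FreeGroup Ω) :
    FreeGroup.map k (proj A x) = proj A x := by
  have : (FreeGroup.map k).comp (proj A) = proj A := by
    ext ω
    simp only [MonoidHom.comp_apply, proj_of]
    by_cases h1 : ω ∈ A
    · simp [h1, hk ω h1]
    · simp [h1]
  exact DFunLike.congr_fun this x

theorem proj_mono {Ω : Type*} [DecidableEq Ω] {A B : Finset Ω} (h : A ⊆ B) {x : FreeGroup Ω}
    (hx : proj A x = x) : proj B x = x := by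
  rw [← hx, proj_inter, Finset.inter_eq_right.mpr h]

theorem exists_proj {Ω : Type*} [DecidableEq Ω] (x : FreeGroup Ω) :
    ∃ A : Finset Ω, proj A x = x := by
  induction x using FreeGroup.induction_on with
  | C1 => exact ⟨∅, map_one _⟩
  | of x => exact ⟨{x}, by simp [proj_of]⟩
  | inv_of x h => obtain ⟨A, hA⟩ := h; exact ⟨A, by rw [map_inv, hA]⟩
  | mul x y hx hy =>
    obtain ⟨A, hA⟩ := hx
    obtain ⟨B, hB⟩ := hy
    refine ⟨A ∪ B, ?_⟩
    rw [map_mul, proj_mono Finset.subset_union_left hA, proj_mono Finset.subset_union_right hB]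

theorem exists_proj_set {Ω : Type*} [DecidableEq Ω] (D : Set (FreeGroup Ω)) (hD : D.Finite) :
    ∃ A : Finset Ω, ∀ d ∈ D, proj A d = d := by
  choose A hA using exists_proj (Ω := Ω)
  refine ⟨hD.toFinset.biUnion A, fun d hd => proj_mono ?_ (hA d)⟩
  exact Finset.subset_biUnion_of_mem A (hD.mem_toFinset.mpr hd)

/-- If a finite set of elements of a free group is preserved by a permutation of the basis with
no nontrivial finite orbits followed by a conjugation, then this map acts as a conjugation. -/
theorem acts_as_conj {Ω : Type*} (k : Equiv.Perm Ω)
    (hk : ∀ (N : ℕ) (ω : Ω), N ≠ 0 → (k ^ N) ω = ω → k ω = ω)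
    (u : FreeGroup Ω) (D : Set (FreeGroup Ω)) (hD : D.Finite)
    (hinv : ∀ d ∈ D, u * FreeGroup.map k d * u⁻¹ ∈ D) :
    ∃ q : FreeGroup Ω, ∀ d ∈ D, u * FreeGroup.map k d * u⁻¹ = q * d * q⁻¹ := by
  classical
  let C : Finset Ω → Prop := fun A => ∃ p : FreeGroup Ω, ∀ d ∈ D, p * proj A d * p⁻¹ = d
  have hsurj : ∀ d ∈ D, ∃ d' ∈ D, u * FreeGroup.map k d' * u⁻¹ = d := by
    have hinj : Set.InjOn (fun d => u * FreeGroup.map k d * u⁻¹) D := by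
      intro a _ b _ hab
      have h1 : FreeGroup.map k a = FreeGroup.map k b := by simpa using hab
      exact FreeGroup.map_injective k.injective h1
    have := (hD.injOn_iff_bijOn_of_mapsTo (f := fun d => u * FreeGroup.map k d * u⁻¹) hinv).mp hinj
    intro d hd
    obtain ⟨d', h1, h2⟩ := this.surjOn hd
    exact ⟨d', h1, h2⟩
  have hCk : ∀ A, C A → C (A.image k) := by
    rintro A ⟨p, hp⟩
    refine ⟨u * FreeGroup.map k p * (proj (A.image k) u)⁻¹, fun d hd => ?_⟩
    obtain ⟨d', hd', rfl⟩ := hsurj d hd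
    have h1 := congrArg (FreeGroup.map k) (hp d' hd')
    simp only [map_mul, map_inv, proj_map] at h1 ⊢
    nth_rewrite 2 [← h1]
    group
  have hCi : ∀ A B, C A → C B → C (A ∩ B) := by
    rintro A B ⟨p, hp⟩ ⟨p', hp'⟩
    refine ⟨p * proj A p', fun d hd => ?_⟩
    have h1 := congrArg (proj A) (hp' d hd)
    simp only [map_mul, map_inv, proj_inter] at h1
    nth_rewrite 2 [← hp d hd]
    rw [← h1]
    group
  have hex : ∃ n, ∃ A, C A ∧ A.card = n := by
    obtain ⟨A, hA⟩ := exists_proj_set D hD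
    exact ⟨_, A, ⟨1, fun d hd => by simp [hA d hd]⟩, rfl⟩
  obtain ⟨A, hCA, hAn⟩ := Nat.find_spec hex
  have hmin : ∀ B, C B → A.card ≤ B.card := fun B hB => by
    rw [hAn]; exact Nat.find_min' hex ⟨B, hB, rfl⟩
  have hle := hmin _ (hCi _ _ hCA (hCk _ hCA))
  have h1 : A ∩ A.image k = A := Finset.eq_of_subset_of_card_le Finset.inter_subset_left hle
  have h2 : A = A.image k :=
    Finset.eq_of_subset_of_card_le (Finset.inter_eq_left.mp h1) Finset.card_image_le
  have hpow : ∀ (n : ℕ), ∀ ω ∈ A, (k ^ n) ω ∈ A := by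
    intro n
    induction n with
    | zero => intro ω h; simpa using h
    | succ n ih =>
      intro ω h
      rw [pow_succ', Equiv.Perm.mul_apply, h2]
      exact Finset.mem_image_of_mem _ (ih ω h)
  have hfix : ∀ ω ∈ A, k ω = ω := by
    intro ω hω
    obtain ⟨i, j, hij, he⟩ := Finite.exists_ne_map_eq_of_infinite
      (fun n : ℕ => (⟨(k ^ n) ω, hpow n ω hω⟩ : A))
    have he' : (k ^ i) ω = (k ^ j) ω := congrArg Subtype.val he
    have aux : ∀ i j : ℕ, i < j → (k ^ i) ω = (k ^ j) ω → k ω = ω := by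
      intro i j hlt h
      apply hk (j - i) ω (by omega)
      apply (k ^ i).injective
      rw [← Equiv.Perm.mul_apply, ← pow_add, h]
      congr 2
      omega
    rcases lt_or_gt_of_ne hij with h | h
    · exact aux i j h he'
    · exact aux j i h he'.symm
  obtain ⟨p, hp⟩ := hCA
  refine ⟨u * FreeGroup.map k p * p⁻¹, fun d hd => ?_⟩
  have h3 := congrArg (FreeGroup.map k) (hp d hd)
  simp only [map_mul, map_inv, proj_fix A k hfix] at h3
  rw [← h3]
  nth_rewrite 2 [← hp d hd]
  group

/-- The permutation action on a free group induced by an action on the basis. -/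
def act (H Ω : Type*) [Group H] [MulAction H Ω] : H →* MulAut (FreeGroup Ω) where
  toFun h := FreeGroup.freeGroupCongr (MulAction.toPermHom H Ω h)
  map_one' := by
    ext x
    rw [map_one]
    exact FreeGroup.map.id x
  map_mul' a b := by
    ext x
    simp only [map_mul, MulAut.mul_apply, FreeGroup.freeGroupCongr_apply, FreeGroup.map.comp]
    rfl

theorem act_apply {H Ω : Type*} [Group H] [MulAction H Ω] (h : H) (x : FreeGroup Ω) :
    act H Ω h x = FreeGroup.map (MulAction.toPermHom H Ω h) x := rfl

/-- Stabilizers are closed under roots. -/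
def Isolated (H Ω : Type*) [Group H] [MulAction H Ω] : Prop :=
  ∀ (h : H) (N : ℕ) (ω : Ω), N ≠ 0 → h ^ N • ω = ω → h • ω = ω

/-- All solvable subgroups are abelian. -/
def SolvAb (G : Type*) [Group G] : Prop :=
  ∀ S : Subgroup G, Group.IsSolvable S → ∀ a ∈ S, ∀ b ∈ S, a * b = b * a

abbrev SD (H Ω : Type*) [Group H] [MulAction H Ω] := FreeGroup Ω ⋊[act H Ω] H

open SemidirectProduct

theorem inl_of_right {H Ω : Type*} [Group H] [MulAction H Ω] (x : SD H Ω) (hx : x.right = 1) :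
    x = inl x.left := by
  ext <;> simp [hx]

theorem conj_inl {H Ω : Type*} [Group H] [MulAction H Ω] (x : SD H Ω) (d : FreeGroup Ω) :
    x * inl d * x⁻¹ =
      inl (x.left * FreeGroup.map (MulAction.toPermHom H Ω x.right) d * x.left⁻¹) := by
  rw [← act_apply, map_mul, map_mul, inl_aut, map_inv, map_inv]
  nth_rewrite 1 2 [← inl_left_mul_inr_right x]
  group

theorem torsionFree {H Ω : Type*} [Group H] [MulAction H Ω] (hH : IsMulTorsionFree H)
    (hI : Isolated H Ω) : IsMulTorsionFree (SD H Ω) := by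
  refine ⟨fun N hN x y hxy => ?_⟩
  have hxy : x ^ N = y ^ N := hxy
  have hr : x.right = y.right := by
    apply hH.pow_left_injective hN
    have := congrArg (rightHom (φ := act H Ω)) hxy
    rw [map_pow, map_pow] at this
    exact this
  obtain ⟨f, hf⟩ : ∃ f, y = inl f * x := by
    refine ⟨(y * x⁻¹).left, ?_⟩
    rw [← inl_of_right _ (by simp [hr])]
    group
  let k := MulAction.toPermHom H Ω x.right
  let c : FreeGroup Ω → FreeGroup Ω := fun d => x.left * FreeGroup.map k d * x.left⁻¹
  have hc : ∀ d, x * inl d = inl (c d) * x := fun d => by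
    have h := conj_inl x d
    change _ = inl (c d) at h
    rw [← h]
    group
  have hci : ∀ (i : ℕ) d, x ^ i * inl d = inl (c^[i] d) * x ^ i := by
    intro i
    induction i with
    | zero => intro d; simp
    | succ i ih =>
      intro d
      rw [pow_succ, mul_assoc, hc, ← mul_assoc, ih, mul_assoc, Function.iterate_succ_apply]
  have hper : c^[N] f = f := by
    have h1 := hci N f
    have h2 : Commute (x ^ N) (inl f) := by
      have h3 : Commute (x ^ N) y := by rw [hxy]; exact (Commute.refl y).pow_left N
      have h4 : Commute (x ^ N) x := (Commute.refl x).pow_left N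
      have h5 : (inl f : SD H Ω) = y * x⁻¹ := by rw [hf]; group
      rw [h5]
      exact h3.mul_right h4.inv_right
    rw [h2.eq] at h1
    exact (inl_injective (mul_right_cancel h1)).symm
  let D : Set (FreeGroup Ω) := (fun i => c^[i] f) '' (Set.Iio N)
  have hDf : D.Finite := (Set.finite_Iio N).image _
  have hmem : ∀ i, c^[i] f ∈ D := by
    intro i
    refine ⟨i % N, Nat.mod_lt _ (Nat.pos_of_ne_zero hN), ?_⟩
    have h : Function.IsPeriodicPt c N f := hper
    exact h.iterate_mod_apply i
  obtain ⟨q, hq⟩ := acts_as_conj k (fun M ω hM h => by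
      apply hI x.right M ω hM
      rw [← map_pow] at h
      exact h) x.left D hDf (by
    rintro _ ⟨i, hi, rfl⟩
    have := hmem (i + 1)
    rw [Function.iterate_succ_apply'] at this
    exact this)
  have hciq : ∀ i : ℕ, c^[i] f = q ^ i * f * (q ^ i)⁻¹ := by
    intro i
    induction i with
    | zero => simp
    | succ i ih =>
      rw [Function.iterate_succ_apply']
      have := hq _ (hmem i)
      change c (c^[i] f) = _ at this
      rw [this, ih, pow_succ']
      group
  have hp : ∀ m : ℕ, y ^ m = inl ((f * q) ^ m * (q ^ m)⁻¹) * x ^ m := by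
    intro m
    induction m with
    | zero => simp
    | succ m ih =>
      rw [pow_succ, ih, hf, mul_assoc, ← mul_assoc (x ^ m), hci, hciq, pow_succ x, ← mul_assoc,
        ← mul_assoc, ← mul_assoc, ← map_mul]
      congr 3
      rw [pow_succ (f * q), pow_succ q]
      group
  have h1 := hp N
  rw [← hxy] at h1
  have h2 : (inl ((f * q) ^ N * (q ^ N)⁻¹) : SD H Ω) = inl 1 := by
    rw [map_one]
    exact (mul_eq_right.mp h1.symm)
  have h3 := inl_injective h2
  have h4 : (f * q) ^ N = q ^ N := by rwa [mul_inv_eq_one] at h3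
  have h5 : f * q = q := IsMulTorsionFree.pow_left_injective hN h4
  have h6 : f = 1 := by simpa using h5
  rw [hf, h6]
  simp

/-- Length function on the semidirect product. -/
noncomputable def len {H Ω : Type*} [Group H] [MulAction H Ω] (x : SD H Ω) : ℕ := by
  classical
  exact x.left.norm

theorem norm_map_le {Ω : Type*} [DecidableEq Ω] (k : Ω → Ω) (x : FreeGroup Ω) :
    (FreeGroup.map k x).norm ≤ x.norm := by
  conv_lhs => rw [← FreeGroup.mk_toWord (x := x), FreeGroup.map.mk]
  refine FreeGroup.norm_mk_le.trans ?_
  simp [FreeGroup.norm]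

theorem len_mul {H Ω : Type*} [Group H] [MulAction H Ω] (x y : SD H Ω) :
    len (x * y) ≤ len x + len y := by
  classical
  simp only [len, mul_left, act_apply]
  exact (FreeGroup.norm_mul_le _ _).trans (Nat.add_le_add_left (norm_map_le _ _) _)

theorem len_inv {H Ω : Type*} [Group H] [MulAction H Ω] (x : SD H Ω) :
    len x⁻¹ ≤ len x := by
  classical
  simp only [len, inv_left, act_apply]
  exact (norm_map_le _ _).trans (FreeGroup.norm_inv_eq).le

theorem len_pow {H Ω : Type*} [Group H] [MulAction H Ω] (x : SD H Ω) (m : ℕ) :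
    len (x ^ m) ≤ m * len x := by
  induction m with
  | zero => simp [len]
  | succ m ih =>
    rw [pow_succ]
    have := len_mul (x ^ m) x
    rw [Nat.succ_mul]
    omega

theorem heis {G : Type*} [Group G] (a b n : G) (ha : Commute a n) (hb : Commute b n)
    (h : a * b = n * b * a) (i j : ℕ) : a ^ i * b ^ j = n ^ (i * j) * b ^ j * a ^ i := by
  have h1 : ∀ j : ℕ, a * b ^ j = n ^ j * b ^ j * a := by
    intro j
    induction j with
    | zero => simp
    | succ j ih =>
      rw [pow_succ b, ← mul_assoc, ih, mul_assoc, h, pow_succ n]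
      have := (hb.pow_left j).eq
      calc n ^ j * b ^ j * (n * b * a) = n ^ j * (b ^ j * n) * b * a := by group
        _ = _ := by rw [this]; group
  induction i with
  | zero => simp
  | succ i ih =>
    rw [pow_succ' a, mul_assoc, ih, Nat.succ_mul, pow_add n]
    have := (ha.pow_right (i * j)).eq
    calc a * (n ^ (i * j) * b ^ j * a ^ i) = (a * n ^ (i * j)) * b ^ j * a ^ i := by group
      _ = n ^ (i * j) * (a * b ^ j) * a ^ i := by rw [this]; group
      _ = _ := by rw [h1]; group

theorem solvAb {H Ω : Type*} [Group H] [MulAction H Ω] (hH : IsMulTorsionFree H)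
    (hI : Isolated H Ω) (hS : SolvAb H) : SolvAb (SD H Ω) := by
  classical
  have hT := torsionFree hH hI
  intro S hSs a ha b hb
  let D : Subgroup (FreeGroup Ω) := S.comap inl
  have hD : Group.IsSolvable D := by
    let f : D →* S := ((inl : FreeGroup Ω →* SD H Ω).comp D.subtype).codRestrict S (fun d => d.2)
    have hf : Function.Injective f := by
      intro x y hxy
      exact Subtype.ext (inl_injective (congrArg Subtype.val hxy))
    exact Group.isSolvable_of_isSolvable_injective hf
  obtain ⟨r, hrD, hr⟩ := free_solvable_cyclic D hD
  have hcr : ∀ s ∈ S, Commute s (inl r) := by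
    intro s hs
    by_cases hr1 : r = 1
    · rw [hr1, map_one]; exact Commute.one_right s
    have step : ∀ s ∈ S, ∃ e : ℤ, s * inl r * s⁻¹ = inl r ^ e := by
      intro s hs
      have h1 := conj_inl s r
      have h2 : s * inl r * s⁻¹ ∈ S := S.mul_mem (S.mul_mem hs hrD) (S.inv_mem hs)
      rw [h1] at h2
      obtain ⟨e, he⟩ := hr _ h2
      exact ⟨e, by rw [h1, he, map_zpow]⟩
    obtain ⟨e, he⟩ := step s hs
    obtain ⟨e', he'⟩ := step s⁻¹ (S.inv_mem hs)
    have h3 : (inl r : SD H Ω) ^ (e * e') = inl r ^ (1 : ℤ) := by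
      rw [zpow_mul, ← he, conj_zpow, ← he']
      group
    rw [← map_zpow, ← map_zpow] at h3
    have h4 : e * e' = 1 := by
      by_contra hne
      have h5 : r ^ (e * e' - 1) = 1 ^ (e * e' - 1) := by
        rw [zpow_sub, inl_injective h3, mul_inv_cancel, one_zpow]
      exact hr1 (zpow_left_injective (sub_ne_zero.mpr hne) h5)
    rcases Int.eq_one_or_neg_one_of_mul_eq_one h4 with rfl | rfl
    · rw [zpow_one] at he
      exact mul_inv_eq_iff_eq_mul.mp he
    · exfalso
      apply hr1
      have h5 : (inl r * s) ^ 2 = s ^ 2 := by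
        have h6 : s * inl r = (inl r)⁻¹ * s := by
          rw [zpow_neg_one] at he
          exact mul_inv_eq_iff_eq_mul.mp he
        rw [pow_two, pow_two, mul_assoc, ← mul_assoc s, h6]
        group
      have h7 : inl r * s = s := hT.pow_left_injective two_ne_zero h5
      have h8 : (inl r : SD H Ω) = 1 := mul_eq_right.mp h7
      exact inl_injective (h8.trans (map_one _).symm)
  have hab : a.right * b.right = b.right * a.right := by
    let g : S →* (S.map (rightHom (φ := act H Ω))) := (rightHom (φ := act H Ω)).subgroupMap S
    have hsm : Group.IsSolvable (S.map (rightHom (φ := act H Ω))) :=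
      Group.isSolvable_of_surjective (f := g) ((rightHom (φ := act H Ω)).subgroupMap_surjective S)
    exact hS _ hsm _ ⟨a, ha, rfl⟩ _ ⟨b, hb, rfl⟩
  let n : SD H Ω := a * b * a⁻¹ * b⁻¹
  have hnr : n.right = 1 := by simp [n, hab]
  have hn : n = inl n.left := inl_of_right n hnr
  have hnS : n ∈ S :=
    S.mul_mem (S.mul_mem (S.mul_mem ha hb) (S.inv_mem ha)) (S.inv_mem hb)
  have hnD : n.left ∈ D := by
    change inl n.left ∈ S
    rw [← hn]; exact hnS
  obtain ⟨e, he⟩ := hr _ hnD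
  have hn' : n = inl r ^ e := by rw [hn, he, map_zpow]
  have hcn : ∀ s ∈ S, Commute s n := fun s hs => by
    rw [hn']; exact (hcr s hs).zpow_right e
  have hrel : a * b = n * b * a := by simp only [n]; group
  suffices h0 : n.left = 1 by
    rw [hrel, hn, h0, map_one, one_mul]
  by_contra h0
  let i := 2 * (len a + len b) + 1
  have h1 := heis a b n (hcn a ha) (hcn b hb) hrel i i
  have h2 : n ^ (i * i) = a ^ i * b ^ i * (a ^ i)⁻¹ * (b ^ i)⁻¹ := by
    rw [h1]; group
  have h3 : len (n ^ (i * i)) ≤ 2 * (i * len a + i * len b) := by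
    rw [h2]
    have := len_mul (a ^ i * b ^ i * (a ^ i)⁻¹) (b ^ i)⁻¹
    have := len_mul (a ^ i * b ^ i) (a ^ i)⁻¹
    have := len_mul (a ^ i) (b ^ i)
    have := len_inv (a ^ i)
    have := len_inv (b ^ i)
    have := len_pow a i
    have := len_pow b i
    omega
  have h4 : i * i ≤ len (n ^ (i * i)) := by
    rw [hn, ← map_pow]
    exact norm_pow_ge n.left h0 (i * i)
  have h5 : i * i ≤ i * (2 * (len a + len b)) := by nlinarith
  have h6 : i ≤ 2 * (len a + len b) := Nat.le_of_mul_le_mul_left h5 (Nat.succ_pos _)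
  simp only [i] at h6
  omega

theorem raag_comm {V : Type*} (Γ : SimpleGraph V) {u v : V} (h : Γ.Adj u v) :
    Commute (PresentedGroup.of u : Raag Γ) (PresentedGroup.of v) := by
  have := PresentedGroup.one_of_mem (rels := raagRels Γ) ⟨u, v, h, rfl⟩
  simp only [map_mul, map_inv] at this
  rw [mul_inv_eq_one, mul_inv_eq_iff_eq_mul] at this
  exact this

/-- Homomorphisms out of a partially commutative group. -/
def raagLift {V : Type*} (Γ : SimpleGraph V) {G : Type*} [Group G] (f : V → G)
    (hf : ∀ u v, Γ.Adj u v → Commute (f u) (f v)) : Raag Γ →* G :=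
  PresentedGroup.toGroup (f := f) (by
    rintro r ⟨u, v, h, rfl⟩
    simp only [map_mul, map_inv, FreeGroup.lift_apply_of]
    rw [(hf u v h).eq]
    group)

theorem raagLift_of {V : Type*} (Γ : SimpleGraph V) {G : Type*} [Group G] (f : V → G)
    (hf : ∀ u v, Γ.Adj u v → Commute (f u) (f v)) (v : V) :
    raagLift Γ f hf (PresentedGroup.of v) = f v :=
  PresentedGroup.toGroup.of _

theorem good_of_injective {G K : Type*} [Group G] [Group K] (f : G →* K)
    (hf : Function.Injective f) (hK : IsMulTorsionFree K ∧ SolvAb K) :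
    IsMulTorsionFree G ∧ SolvAb G := by
  refine ⟨⟨fun n hn x y hxy => hf (hK.1.pow_left_injective hn ?_)⟩, fun S hS a ha b hb => hf ?_⟩
  · have := congrArg f hxy
    simpa using this
  · have hs : Group.IsSolvable (S.map f) :=
      Group.isSolvable_of_surjective (f := f.subgroupMap S) (f.subgroupMap_surjective S)
    rw [map_mul, map_mul]
    exact hK.2 _ hs _ ⟨a, ha, rfl⟩ _ ⟨b, hb, rfl⟩

/-- The subgroup generated by a set of vertices. -/
def para {V : Type*} (Γ : SimpleGraph V) (A : Set V) : Subgroup (Raag Γ) :=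
  Subgroup.closure (PresentedGroup.of '' A)

theorem para_isolated {V : Type*} (Γ : SimpleGraph V) (A : Set V)
    (hT : IsMulTorsionFree (Raag Γ)) : Isolated (Raag Γ) (Raag Γ ⧸ para Γ A) := by
  classical
  let ρ : Raag Γ →* Raag Γ := raagLift Γ (fun v => if v ∈ A then PresentedGroup.of v else 1) (by
    intro u v h
    by_cases h1 : u ∈ A <;> by_cases h2 : v ∈ A <;> simp [h1, h2, raag_comm Γ h])
  have hρ : ∀ x ∈ para Γ A, ρ x = x := by
    intro x hx
    induction hx using Subgroup.closure_induction with
    | mem x hx =>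
      obtain ⟨v, hv, rfl⟩ := hx
      simp only [ρ, raagLift_of, if_pos hv]
    | one => exact map_one _
    | mul x y _ _ h1 h2 => rw [map_mul, h1, h2]
    | inv x _ h => rw [map_inv, h]
  have hρm : ∀ x, ρ x ∈ para Γ A := by
    intro x
    induction x using PresentedGroup.induction_on with
    | _ z =>
    induction z using FreeGroup.induction_on with
    | C1 => simp only [map_one]; exact Subgroup.one_mem _
    | of v =>
      change ρ (PresentedGroup.of v) ∈ _
      simp only [ρ, raagLift_of]
      split_ifs with h
      · exact Subgroup.subset_closure ⟨v, h, rfl⟩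
      · exact Subgroup.one_mem _
    | inv_of v h => rw [map_inv, map_inv]; exact Subgroup.inv_mem _ h
    | mul x y h1 h2 => rw [map_mul, map_mul]; exact Subgroup.mul_mem _ h1 h2
  intro h N ω hN hω
  induction ω using QuotientGroup.induction_on with
  | H g =>
  have h1 : ∀ k : Raag Γ, k • (g : Raag Γ ⧸ para Γ A) = g ↔ g⁻¹ * k * g ∈ para Γ A := by
    intro k
    rw [eq_comm]
    change ((g : Raag Γ ⧸ para Γ A) = ((k * g : Raag Γ) : Raag Γ ⧸ para Γ A)) ↔ _
    rw [QuotientGroup.eq, mul_assoc]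
  rw [h1] at hω ⊢
  have h2 : (g⁻¹ * h * g) ^ N = g⁻¹ * h ^ N * g := by
    simpa using conj_pow (a := g⁻¹) (b := h) (i := N)
  rw [← h2] at hω
  have h3 := hρ _ hω
  rw [map_pow] at h3
  have h4 : ρ (g⁻¹ * h * g) = g⁻¹ * h * g := hT.pow_left_injective hN h3
  rw [← h4]
  exact hρm _

theorem raag_step {V : Type*} (Γ : SimpleGraph V) (v : V)
    (h : IsMulTorsionFree (Raag (Γ.induce {w | w ≠ v})) ∧ SolvAb (Raag (Γ.induce {w | w ≠ v}))) :
    IsMulTorsionFree (Raag Γ) ∧ SolvAb (Raag Γ) := by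
  classical
  let Γ' := Γ.induce {w | w ≠ v}
  let A : Set {w | w ≠ v} := {w | Γ.Adj w.1 v}
  let L := para Γ' A
  have hI := para_isolated Γ' A h.1
  have hK : IsMulTorsionFree (SD (Raag Γ') (Raag Γ' ⧸ L)) ∧ SolvAb (SD (Raag Γ') (Raag Γ' ⧸ L)) :=
    ⟨torsionFree h.1 hI, solvAb h.1 hI h.2⟩
  let t : SD (Raag Γ') (Raag Γ' ⧸ L) := inl (FreeGroup.of ((1 : Raag Γ') : Raag Γ' ⧸ L))
  have ht : ∀ w : {w | w ≠ v}, Γ.Adj w.1 v → Commute (inr (PresentedGroup.of w)) t := by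
    intro w hw
    have h1 : (PresentedGroup.of w : Raag Γ') • ((1 : Raag Γ') : Raag Γ' ⧸ L)
        = ((1 : Raag Γ') : Raag Γ' ⧸ L) := by
      rw [eq_comm]
      change (((1 : Raag Γ') : Raag Γ' ⧸ L) = ((PresentedGroup.of w * 1 : Raag Γ') : Raag Γ' ⧸ L))
      rw [QuotientGroup.eq]
      simp only [inv_one, one_mul, mul_one]
      exact Subgroup.subset_closure ⟨w, hw, rfl⟩
    have h2 := inl_aut (φ := act (Raag Γ') (Raag Γ' ⧸ L)) (PresentedGroup.of w)
      (FreeGroup.of ((1 : Raag Γ') : Raag Γ' ⧸ L))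
    rw [act_apply, FreeGroup.map.of, MulAction.toPermHom_apply, MulAction.toPerm_apply, h1,
      map_inv] at h2
    exact (eq_mul_inv_iff_mul_eq.mp h2).symm
  let F : Raag Γ →* SD (Raag Γ') (Raag Γ' ⧸ L) :=
    raagLift Γ (fun w => if hw : w ≠ v then inr (PresentedGroup.of ⟨w, hw⟩) else t) (by
      intro u w huw
      by_cases hu : u = v
      · by_cases hw : w = v
        · rw [hu, hw] at huw; exact (Γ.irrefl huw).elim
        · simp only [ne_eq, hu, hw, not_true_eq_false, not_false_eq_true, dite_true, dite_false]
          exact (ht ⟨w, hw⟩ (hu ▸ huw.symm : Γ.Adj w v)).symm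
      · by_cases hw : w = v
        · simp only [ne_eq, hu, hw, not_true_eq_false, not_false_eq_true, dite_true, dite_false]
          exact ht ⟨u, hu⟩ (hw ▸ huw : Γ.Adj u v)
        · simp only [ne_eq, hu, hw, not_false_eq_true, dite_true]
          exact (raag_comm Γ' (u := ⟨u, hu⟩) (v := ⟨w, hw⟩) huw).map inr)
  let j : Raag Γ' →* Raag Γ := raagLift Γ' (fun w => PresentedGroup.of w.1)
    (fun u w huw => raag_comm Γ huw)
  let τ : Raag Γ := PresentedGroup.of v
  have hL : ∀ x ∈ L, Commute (j x) τ := by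
    intro x hx
    induction hx using Subgroup.closure_induction with
    | mem x hx =>
      obtain ⟨w, hw, rfl⟩ := hx
      simp only [j, raagLift_of]
      exact raag_comm Γ hw
    | one => rw [map_one]; exact Commute.one_left _
    | mul x y _ _ h1 h2 => rw [map_mul]; exact h1.mul_left h2
    | inv x _ h => rw [map_inv]; exact h.inv_left
  let c : Raag Γ' ⧸ L → Raag Γ := fun ω => Quotient.liftOn' ω (fun g => j g * τ * (j g)⁻¹) (by
    intro a b hab
    have hm : a⁻¹ * b ∈ L := QuotientGroup.leftRel_apply.mp hab
    have h1 := hL _ hm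
    have h2 : j b = j a * j (a⁻¹ * b) := by rw [← map_mul]; congr 1; group
    change j a * τ * (j a)⁻¹ = j b * τ * (j b)⁻¹
    rw [h2]
    calc j a * τ * (j a)⁻¹ = j a * (τ * j (a⁻¹ * b)) * (j (a⁻¹ * b))⁻¹ * (j a)⁻¹ := by group
      _ = j a * (j (a⁻¹ * b) * τ) * (j (a⁻¹ * b))⁻¹ * (j a)⁻¹ := by rw [h1.eq]
      _ = _ := by group)
  have hc : ∀ g : Raag Γ', c (g : Raag Γ' ⧸ L) = j g * τ * (j g)⁻¹ := fun g => rfl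
  let B : SD (Raag Γ') (Raag Γ' ⧸ L) →* Raag Γ := SemidirectProduct.lift (FreeGroup.lift c) j (by
    intro g
    ext ω
    induction ω using QuotientGroup.induction_on with
    | H a =>
    change FreeGroup.lift c (act _ _ g (FreeGroup.of _)) = j g * FreeGroup.lift c (FreeGroup.of _)
      * (j g)⁻¹
    rw [act_apply, FreeGroup.map.of, FreeGroup.lift_apply_of, FreeGroup.lift_apply_of]
    change c ((g * a : Raag Γ') : Raag Γ' ⧸ L) = _
    rw [hc, hc, map_mul]
    group)
  have hBF : B.comp F = MonoidHom.id _ := by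
    apply PresentedGroup.ext
    intro w
    simp only [MonoidHom.comp_apply, MonoidHom.id_apply, F, raagLift_of]
    by_cases hw : w = v
    · rw [dif_neg (by simpa using hw)]
      simp only [B, t, SemidirectProduct.lift_inl, FreeGroup.lift_apply_of, hc, map_one, one_mul,
        inv_one, mul_one, τ, hw]
    · rw [dif_pos hw]
      simp only [B, SemidirectProduct.lift_inr, j, raagLift_of]
  refine good_of_injective F ?_ hK
  intro x y hxy
  have h1 := DFunLike.congr_fun hBF x
  have h2 := DFunLike.congr_fun hBF y
  simp only [MonoidHom.comp_apply, MonoidHom.id_apply] at h1 h2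
  rw [← h1, ← h2, hxy]

theorem raag_good (n : ℕ) : ∀ (V : Type) [Fintype V] (Γ : SimpleGraph V), Fintype.card V = n →
    IsMulTorsionFree (Raag Γ) ∧ SolvAb (Raag Γ) := by
  classical
  induction n with
  | zero =>
    intro V _ Γ hV
    have : IsEmpty V := Fintype.card_eq_zero_iff.mp hV
    have : Subsingleton (Raag Γ) :=
      ((PresentedGroup.mk_surjective (raagRels Γ))).subsingleton
    exact ⟨⟨fun _ _ _ _ _ => Subsingleton.elim _ _⟩, fun _ _ _ _ _ _ => Subsingleton.elim _ _⟩
  | succ n ih =>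
    intro V _ Γ hV
    obtain ⟨v⟩ : Nonempty V := Fintype.card_pos_iff.mp (by omega)
    apply raag_step Γ v
    apply ih
    have := Set.card_ne_eq v
    simpa [hV] using this

end RaagProof

theorem solvable_subgroup_of_limit_group_is_abelian
    {V : Type} [Fintype V] (Γ : SimpleGraph V)
    (G : Type) [Group G] (hG : IsLimitGroupOver (Raag Γ) G)
    (S : Subgroup G) (hS : IsSolvable S) :
    ∀ a b : S, a * b = b * a := by
  intro a b
  have hgood := (RaagProof.raag_good _ V Γ rfl).2
  by_contra hne
  have h1 : (a : G) * b * (a : G)⁻¹ * (b : G)⁻¹ ≠ 1 := by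
    intro h
    rw [mul_inv_eq_one, mul_inv_eq_iff_eq_mul] at h
    exact hne (Subtype.ext h)
  obtain ⟨φ, hφ⟩ := hG.2 {(a : G) * b * (a : G)⁻¹ * (b : G)⁻¹} (by simpa using h1)
  apply hφ _ (Finset.mem_singleton_self _)
  have hS' : Group.IsSolvable S := hS
  have hs : Group.IsSolvable (S.map φ) :=
    Group.isSolvable_of_surjective (f := φ.subgroupMap S) (φ.subgroupMap_surjective S)
  have h2 := hgood _ hs _ ⟨a, a.2, rfl⟩ _ ⟨b, b.2, rfl⟩
  rw [map_mul, map_mul, map_mul, map_inv, map_inv, mul_inv_eq_one, mul_inv_eq_iff_eq_mul]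
  exact h2
end

section
/- Let Γ be a finite simplicial graph and n ∈ ℕ, and suppose there is an injective group homomorphism from 𝔾(Γ) into SL_n(ℝ). Then every limit group over 𝔾(Γ) admits an injective group homomorphism into SL_n(ℝ): if G is a finitely generated group that is fully residually 𝔾(Γ), there is an injective homomorphism G → SL_n(ℝ). -/
section Aux
open MvPolynomial

lemma dense_algIndep (s : ℕ) (O : Set (Fin s → ℝ)) (hO : IsOpen O) (hne : O.Nonempty) :
    ∃ t ∈ O, Function.Injective (MvPolynomial.aeval t : MvPolynomial (Fin s) ℚ →ₐ[ℚ] ℝ) := by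
  have hc : Countable (MvPolynomial (Fin s) ℚ) := by
    rw [← Cardinal.mk_le_aleph0_iff]
    refine (MvPolynomial.cardinalMk_le_max).trans ?_
    simp
  let f : {p : MvPolynomial (Fin s) ℚ // p ≠ 0} → Set (Fin s → ℝ) :=
    fun p => {t | MvPolynomial.aeval t p.1 ≠ 0}
  have hcont : ∀ p : MvPolynomial (Fin s) ℚ, Continuous fun t : Fin s → ℝ => aeval t p := by
    intro p
    have : (fun t : Fin s → ℝ => aeval t p) = fun t => eval t (map (algebraMap ℚ ℝ) p) := by
      ext t
      rw [eval_map, aeval_def]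
    rw [this]
    exact MvPolynomial.continuous_eval _
  have hd : Dense (⋂ p, f p) := by
    apply dense_iInter_of_isOpen
    · intro p
      exact isOpen_ne_fun (hcont _) continuous_const
    · rintro ⟨p, hp⟩
      rw [dense_iff_inter_open]
      intro W hW ⟨x, hx⟩
      by_contra hcon
      apply hp
      apply MvPolynomial.map_injective (algebraMap ℚ ℝ) (algebraMap ℚ ℝ).injective
      rw [map_zero]
      obtain ⟨ε, hε, hb⟩ := Metric.isOpen_iff.1 hW x hx
      refine MvPolynomial.funext_set (fun i => Metric.ball (x i) ε) (fun i => ?_) ?_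
      · rw [Real.ball_eq_Ioo]
        exact Set.Ioo_infinite (by linarith)
      · intro y hy
        rw [← ball_pi _ hε] at hy
        by_contra h
        apply hcon
        refine ⟨y, hb hy, ?_⟩
        simpa [f, aeval_def, eval_map] using h
  obtain ⟨t, htO, ht⟩ := hd.inter_open_nonempty O hO hne
  refine ⟨t, htO, ?_⟩
  rw [injective_iff_map_eq_zero]
  intro p hp
  by_contra h
  exact (Set.mem_iInter.1 ht ⟨p, h⟩) hp

lemma exists_root_perturb (s : ℕ) (P : Polynomial (MvPolynomial (Fin s) ℚ)) (t : Fin s → ℝ) (x : ℝ)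
    (h0 : P.eval₂ (aeval t : MvPolynomial (Fin s) ℚ →ₐ[ℚ] ℝ).toRingHom x = 0)
    (h1 : P.derivative.eval₂ (aeval t : MvPolynomial (Fin s) ℚ →ₐ[ℚ] ℝ).toRingHom x ≠ 0) :
    ∃ t' : Fin s → ℝ, Function.Injective (aeval t' : MvPolynomial (Fin s) ℚ →ₐ[ℚ] ℝ) ∧
      ∃ y, P.eval₂ (aeval t' : MvPolynomial (Fin s) ℚ →ₐ[ℚ] ℝ).toRingHom y = 0 := by
  let φ (t : Fin s → ℝ) : MvPolynomial (Fin s) ℚ →+* ℝ :=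
    (aeval t : MvPolynomial (Fin s) ℚ →ₐ[ℚ] ℝ).toRingHom
  have hcont : ∀ p : MvPolynomial (Fin s) ℚ, Continuous fun t : Fin s → ℝ => φ t p := by
    intro p
    have : (fun t : Fin s → ℝ => φ t p) = fun t => eval t (map (algebraMap ℚ ℝ) p) := by
      ext t
      rw [eval_map]; rfl
    rw [this]
    exact MvPolynomial.continuous_eval _
  have hc2 : ∀ a : ℝ, Continuous fun t : Fin s → ℝ => P.eval₂ (φ t) a := by
    intro a
    simp_rw [Polynomial.eval₂_eq_sum_range]
    exact continuous_finsetSum _ fun i _ => (hcont _).mul continuous_const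
  have hab : ∃ a b : ℝ, P.eval₂ (φ t) a < 0 ∧ 0 < P.eval₂ (φ t) b := by
    let f : ℝ → ℝ := fun y => (P.map (φ t)).eval y
    have hf0 : f x = 0 := by
      simp only [f, Polynomial.eval_map]
      exact h0
    have hder : deriv f x ≠ 0 := by
      change deriv (fun y => (P.map (φ t)).eval y) x ≠ 0
      rw [Polynomial.deriv, Polynomial.derivative_map, Polynomial.eval_map]
      exact h1
    have hl : ∀ p : ℝ → Prop, (∀ᶠ y in nhds x, p y) → ∃ y < x, p y := fun p hp => by
      have := (hp.filter_mono (nhdsWithin_le_nhds (s := Set.Iio x))).and self_mem_nhdsWithin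
      obtain ⟨y, hy⟩ := this.exists
      exact ⟨y, hy.2, hy.1⟩
    have hr : ∀ p : ℝ → Prop, (∀ᶠ y in nhds x, p y) → ∃ y > x, p y := fun p hp => by
      have := (hp.filter_mono (nhdsWithin_le_nhds (s := Set.Ioi x))).and self_mem_nhdsWithin
      obtain ⟨y, hy⟩ := this.exists
      exact ⟨y, hy.2, hy.1⟩
    simp_rw [← Polynomial.eval_map]
    change ∃ a b, f a < 0 ∧ 0 < f b
    rcases lt_or_gt_of_ne hder with h | h
    · have := eventually_nhdsWithin_sign_eq_of_deriv_neg h hf0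
      obtain ⟨a, ha, ha'⟩ := hl _ this
      obtain ⟨b, hb, hb'⟩ := hr _ this
      refine ⟨b, a, ?_, ?_⟩
      · rw [sign_neg (sub_neg.2 hb)] at hb'
        exact sign_eq_neg_one_iff.1 hb'
      · rw [sign_pos (sub_pos.2 ha)] at ha'
        exact sign_eq_one_iff.1 ha'
    · have := eventually_nhdsWithin_sign_eq_of_deriv_pos h hf0
      obtain ⟨a, ha, ha'⟩ := hl _ this
      obtain ⟨b, hb, hb'⟩ := hr _ this
      refine ⟨a, b, ?_, ?_⟩
      · rw [sign_neg (sub_neg.2 ha)] at ha'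
        exact sign_eq_neg_one_iff.1 ha'
      · rw [sign_pos (sub_pos.2 hb)] at hb'
        exact sign_eq_one_iff.1 hb'
  obtain ⟨a, b, ha, hb⟩ := hab
  obtain ⟨t', ⟨ht1, ht2⟩, hinj⟩ := dense_algIndep s
    ({t | P.eval₂ (φ t) a < 0} ∩ {t | 0 < P.eval₂ (φ t) b})
    ((isOpen_lt (hc2 a) continuous_const).inter (isOpen_lt continuous_const (hc2 b))) ⟨t, ha, hb⟩
  refine ⟨t', hinj, ?_⟩
  have hcy : Continuous fun y => P.eval₂ (φ t') y := by
    simp_rw [← Polynomial.eval_map]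
    exact Polynomial.continuous _
  exact mem_range_of_exists_le_of_exists_ge hcy ⟨a, ht1.le⟩ ⟨b, ht2.le⟩

lemma extend_to_real {F K : Type} [Field F] [Field K] [Algebra F K] (ι : F →+* ℝ) (x : K)
    (hx : IsIntegral F x) (htop : IntermediateField.adjoin F {x} = ⊤) (y : ℝ)
    (hy : (minpoly F x).eval₂ ι y = 0) : Nonempty (K →+* ℝ) := by
  let _ : Algebra F ℝ := ι.toAlgebra
  let e := (IntermediateField.algHomAdjoinIntegralEquiv F (K := ℝ) hx).symm
    ⟨y, by
      rw [Polynomial.mem_aroots]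
      exact ⟨minpoly.ne_zero hx, hy⟩⟩
  let e' : K →ₐ[F] ℝ := (e.comp (IntermediateField.equivOfEq htop.symm).toAlgHom).comp
    IntermediateField.topEquiv.symm.toAlgHom
  exact ⟨e'.toRingHom⟩

lemma lift_to_real (B : Type) [CommRing B] [IsDomain B] (φ : B →+* ℝ)
    (h : Function.Injective φ) :
    ∃ ι : FractionRing B →+* ℝ, ι.comp (algebraMap B (FractionRing B)) = φ :=
  ⟨IsFractionRing.lift h, RingHom.ext fun b => IsFractionRing.lift_algebraMap h b⟩

lemma embeds_real (A : Type) [CommRing A] [IsDomain A] [Algebra ℚ A] [Algebra.FiniteType ℚ A]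
    (h : ∀ a : A, a ≠ 0 → ∃ ψ : A →+* ℝ, ψ a ≠ 0) :
    ∃ θ : A →+* ℝ, Function.Injective θ := by
  obtain ⟨s, g, hginj, hgfin⟩ := exists_finite_inj_algHom_of_fg ℚ A
  algebraize [g.toRingHom]
  let B := MvPolynomial (Fin s) ℚ
  have : Module.Finite B A := hgfin
  have : FaithfulSMul B A := (faithfulSMul_iff_algebraMap_injective B A).2 hginj
  let F := FractionRing B
  let K := FractionRing A
  let _ : Algebra F K := FractionRing.liftAlgebra B K
  have : IsScalarTower B F K := inferInstance
  have : FiniteDimensional F K := inferInstance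
  obtain ⟨α, hα⟩ := Field.exists_primitive_element F K
  -- move the primitive element into `A`
  obtain ⟨β, hβ⟩ : ∃ β : A, IntermediateField.adjoin F {algebraMap A K β} = ⊤ := by
    obtain ⟨a, b, hb, rfl⟩ := IsFractionRing.div_surjective (A := A) α
    obtain ⟨r, hr, c, hc⟩ :=
      (Algebra.IsIntegral.isIntegral (R := B) b).isAlgebraic.exists_nonzero_dvd hb
    refine ⟨a * c, ?_⟩
    rw [eq_top_iff, ← hα, IntermediateField.adjoin_simple_le_iff]
    have hr' : algebraMap B F r ≠ 0 := by simpa using hr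
    have hb' : algebraMap A K b ≠ 0 := by simpa using nonZeroDivisors.ne_zero hb
    have hA : algebraMap F K (algebraMap B F r) = algebraMap A K b * algebraMap A K c := by
      rw [← map_mul, ← hc, ← IsScalarTower.algebraMap_apply, ← IsScalarTower.algebraMap_apply]
    have hrk : algebraMap F K (algebraMap B F r) ≠ 0 := by simpa using hr
    have key : algebraMap A K a / algebraMap A K b =
        algebraMap F K (algebraMap B F r)⁻¹ * algebraMap A K (a * c) := by
      rw [map_inv₀, hA, map_mul]
      rw [hA] at hrk
      have hc' := right_ne_zero_of_mul hrk
      rw [inv_mul_eq_div, mul_div_mul_right _ _ hc']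
    rw [key]
    exact mul_mem (IntermediateField.algebraMap_mem _ _)
      (IntermediateField.mem_adjoin_simple_self _ _)
  have hint : IsIntegral B β := Algebra.IsIntegral.isIntegral β
  let P := minpoly B β
  have hP : minpoly F (algebraMap A K β) = P.map (algebraMap B F) :=
    minpoly.isIntegrallyClosed_eq_field_fractions F K hint
  have hder : Polynomial.aeval β P.derivative ≠ 0 := by
    intro h0
    have hsep : (minpoly F (algebraMap A K β)).Separable :=
      Algebra.IsSeparable.isSeparable F _
    apply hsep.aeval_derivative_ne_zero (minpoly.aeval F (algebraMap A K β))
    rw [hP, Polynomial.derivative_map, Polynomial.aeval_map_algebraMap,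
      Polynomial.aeval_algebraMap_apply, h0, map_zero]
  obtain ⟨ψ, hψ⟩ := h _ hder
  let t : Fin s → ℝ := fun i => ψ (g (X i))
  have hφ : (aeval t : B →ₐ[ℚ] ℝ).toRingHom = ψ.comp (algebraMap B A) := by
    apply MvPolynomial.ringHom_ext
    · intro r
      exact (RingHom.congr_fun (RingHom.ext_rat
        ((aeval t : B →ₐ[ℚ] ℝ).toRingHom.comp C) ((ψ.comp (algebraMap B A)).comp C)) r)
    · intro i
      simp [t]
      rfl
  obtain ⟨t', hinj, y, hy⟩ := exists_root_perturb s P t (ψ β)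
    (by rw [hφ, ← Polynomial.hom_eval₂, ← Polynomial.aeval_def, minpoly.aeval, map_zero])
    (by rw [hφ, ← Polynomial.hom_eval₂, ← Polynomial.aeval_def]; exact hψ)
  obtain ⟨ι, hι⟩ := lift_to_real B (aeval t' : B →ₐ[ℚ] ℝ).toRingHom hinj
  have hroot : (minpoly F (algebraMap A K β)).eval₂ ι y = 0 := by
    rw [hP, Polynomial.eval₂_map]
    rw [hι]
    exact hy
  have hintF : IsIntegral F (algebraMap A K β) := Algebra.IsIntegral.isIntegral _
  obtain ⟨e⟩ := extend_to_real ι _ hintF hβ y hroot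
  exact ⟨e.comp (algebraMap A K), e.injective.comp (IsFractionRing.injective A K)⟩

end Aux

lemma exists_rep (G : Type) [Group G] (hfg : Group.FG G) (n : ℕ)
    (hres : FullyResidually (Matrix.SpecialLinearGroup (Fin n) ℝ) G) :
    ∃ ρ : G →* Matrix.SpecialLinearGroup (Fin n) ℝ, Function.Injective ρ := by
  classical
  let I := Finset {g : G // g ≠ 1}
  have hφ : ∀ s : I, ∃ φ : G →* Matrix.SpecialLinearGroup (Fin n) ℝ, ∀ g ∈ s, φ g ≠ 1 := by
    intro s
    obtain ⟨φ, hφ⟩ := hres (s.image Subtype.val) (by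
      intro g hg
      obtain ⟨x, -, rfl⟩ := Finset.mem_image.1 hg
      exact x.2)
    exact ⟨φ, fun g hg => hφ _ (Finset.mem_image_of_mem _ hg)⟩
  choose φ hφ using hφ
  obtain ⟨U, hU⟩ := Ultrafilter.exists_le (Filter.atTop : Filter I)
  have hev : ∀ g : G, g ≠ 1 → ∀ᶠ i in (U : Filter I), φ i g ≠ 1 := by
    intro g hg
    refine Filter.Eventually.filter_mono hU ?_
    filter_upwards [Filter.eventually_ge_atTop ({⟨g, hg⟩} : I)] with i hi
    exact hφ i ⟨g, hg⟩ (hi (Finset.mem_singleton_self _))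
  -- the coordinate ring
  let ent (g : G) (a b : Fin n) : I → ℝ := fun i => (φ i g).1 a b
  obtain ⟨S, hS⟩ := (Group.fg_iff_monoid_fg.1 hfg).fg_top
  let T : Set (I → ℝ) := ⋃ g ∈ S, ⋃ a, ⋃ b, {ent g a b}
  have hT : T.Finite := by
    refine S.finite_toSet.biUnion fun g _ => ?_
    exact Set.finite_iUnion fun a => Set.finite_iUnion fun b => Set.finite_singleton _
  let R : Subalgebra ℚ (I → ℝ) := Algebra.adjoin ℚ T
  have hRft : Algebra.FiniteType ℚ R :=
    R.fg_iff_finiteType.1 (Subalgebra.fg_def.2 ⟨T, hT, rfl⟩)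
  have hmem : ∀ g a b, ent g a b ∈ R := by
    intro g
    have hg : g ∈ Submonoid.closure (S : Set G) := by rw [hS]; trivial
    induction hg using Submonoid.closure_induction with
    | mem x hx =>
      intro a b
      apply Algebra.subset_adjoin
      simp only [T, Set.mem_iUnion]
      exact ⟨x, hx, a, b, rfl⟩
    | one =>
      intro a b
      by_cases hab : a = b
      · have : ent 1 a b = 1 := by
          ext i
          simp [ent, hab]
        rw [this]
        exact one_mem _
      · have : ent 1 a b = 0 := by
          ext i
          simp [ent, hab]
        rw [this]
        exact zero_mem _
    | mul x y _ _ hx hy =>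
      intro a b
      have : ent (x * y) a b = ∑ c, ent x a c * ent y c b := by
        ext i
        simp [ent, Matrix.mul_apply]
      rw [this]
      exact sum_mem fun c _ => mul_mem (hx a c) (hy c b)
  let ev (i : I) : R →+* ℝ := (Pi.evalRingHom (fun _ : I => ℝ) i).comp R.val.toRingHom
  have hevext : ∀ x y : R, (∀ i, ev i x = ev i y) → x = y := by
    intro x y h
    apply Subtype.ext
    funext i
    exact h i
  let M (g : G) : Matrix (Fin n) (Fin n) R := Matrix.of fun a b => ⟨ent g a b, hmem g a b⟩
  have hM : ∀ i g, (ev i).mapMatrix (M g) = (φ i g).1 := fun i g => rfl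
  have hMext : ∀ X Y : Matrix (Fin n) (Fin n) R,
      (∀ i, (ev i).mapMatrix X = (ev i).mapMatrix Y) → X = Y := by
    intro X Y h
    ext1 a b
    exact hevext _ _ fun i => congrFun (congrFun (h i) a) b
  let ρ : G →* Matrix.SpecialLinearGroup (Fin n) R :=
    { toFun := fun g => ⟨M g, hevext _ _ fun i => by
        rw [RingHom.map_det, hM, map_one]
        exact (φ i g).2⟩
      map_one' := by
        apply Subtype.ext
        refine hMext _ _ fun i => ?_
        change (ev i).mapMatrix (M 1) = (ev i).mapMatrix 1
        rw [hM, map_one, map_one]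
        rfl
      map_mul' := by
        intro x y
        apply Subtype.ext
        refine hMext _ _ fun i => ?_
        change (ev i).mapMatrix (M (x * y)) = (ev i).mapMatrix (M x * M y)
        rw [map_mul, hM, hM, hM, map_mul]
        rfl }
  -- the prime ideal
  let p : Ideal R :=
    { carrier := {x | ∀ᶠ i in (U : Filter I), ev i x = 0}
      zero_mem' := Filter.Eventually.of_forall fun i => map_zero _
      add_mem' := by
        intro x y hx hy
        filter_upwards [hx, hy] with i h1 h2
        rw [map_add, h1, h2, add_zero]
      smul_mem' := by
        intro c x hx
        filter_upwards [hx] with i h1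
        rw [smul_eq_mul, map_mul, h1, mul_zero] }
  have hpmem : ∀ x, x ∈ p ↔ ∀ᶠ i in (U : Filter I), ev i x = 0 := fun x => Iff.rfl
  have hp : p.IsPrime := by
    refine ⟨?_, ?_⟩
    · rw [Ideal.ne_top_iff_one, hpmem]
      intro h
      obtain ⟨i, hi⟩ := h.exists
      simp at hi
    · intro x y hxy
      rw [hpmem] at hxy
      rw [hpmem, hpmem, ← Ultrafilter.eventually_or]
      filter_upwards [hxy] with i hi
      rwa [map_mul, mul_eq_zero] at hi
  have hnoeth : IsNoetherianRing R := Algebra.FiniteType.isNoetherianRing ℚ R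
  have hker : ∀ᶠ i in (U : Filter I), ∀ x ∈ p, ev i x = 0 := by
    obtain ⟨s, hs⟩ := hnoeth.noetherian p
    have h1 : ∀ᶠ i in (U : Filter I), ∀ x ∈ s, ev i x = 0 := by
      rw [Filter.eventually_all_finset]
      intro x hx
      rw [← hpmem, ← hs]
      exact Submodule.subset_span hx
    filter_upwards [h1] with i hi x hx
    have : p ≤ RingHom.ker (ev i) := by
      rw [← hs]
      exact Submodule.span_le.2 hi
    exact this hx
  have hft : Algebra.FiniteType ℚ (R ⧸ p) := inferInstance
  obtain ⟨θ, hθ⟩ := embeds_real (R ⧸ p) (by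
    intro a ha
    obtain ⟨x, rfl⟩ := Ideal.Quotient.mk_surjective a
    have hx : ¬ ∀ᶠ i in (U : Filter I), ev i x = 0 := by
      rw [← hpmem, ← Ideal.Quotient.eq_zero_iff_mem]
      exact ha
    rw [← Ultrafilter.eventually_not] at hx
    obtain ⟨i, hi1, hi2⟩ := (hx.and hker).exists
    exact ⟨Ideal.Quotient.lift p (ev i) hi2, by simpa using hi1⟩)
  refine ⟨(Matrix.SpecialLinearGroup.map (θ.comp (Ideal.Quotient.mk p))).comp ρ, ?_⟩
  rw [injective_iff_map_eq_one]
  intro g hg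
  by_contra hne
  have hent : ∀ a b, M g a b - (1 : Matrix (Fin n) (Fin n) R) a b ∈ p := by
    intro a b
    rw [← Ideal.Quotient.eq_zero_iff_mem]
    apply hθ
    rw [RingHom.map_zero]
    change (θ.comp (Ideal.Quotient.mk p)) _ = 0
    rw [RingHom.map_sub, sub_eq_zero]
    have h1 : (θ.comp (Ideal.Quotient.mk p)) (M g a b) = (1 : Matrix (Fin n) (Fin n) ℝ) a b :=
      congrFun (congrFun (congrArg Subtype.val hg) a) b
    rw [h1, Matrix.one_apply, Matrix.one_apply]
    split_ifs
    · exact (RingHom.map_one _).symm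
    · exact (RingHom.map_zero _).symm
  have hall : ∀ᶠ i in (U : Filter I), ∀ a b,
      ev i (M g a b - (1 : Matrix (Fin n) (Fin n) R) a b) = 0 := by
    rw [Filter.eventually_all]
    intro a
    rw [Filter.eventually_all]
    intro b
    exact hent a b
  obtain ⟨i, hi1, hi2⟩ := (hall.and (hev g hne)).exists
  apply hi2
  apply Subtype.ext
  ext a b
  have h := hi1 a b
  rw [map_sub, sub_eq_zero] at h
  change ev i (M g a b) = (1 : Matrix (Fin n) (Fin n) ℝ) a b
  rw [h, Matrix.one_apply, Matrix.one_apply]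
  split_ifs <;> simp

theorem limit_group_embeds_in_SL
    {V : Type} [Fintype V] (Γ : SimpleGraph V) (n : ℕ)
    (hemb : ∃ ρ : Raag Γ →* Matrix.SpecialLinearGroup (Fin n) ℝ, Function.Injective ρ)
    (G : Type) [Group G] (hG : IsLimitGroupOver (Raag Γ) G) :
    ∃ ρ : G →* Matrix.SpecialLinearGroup (Fin n) ℝ, Function.Injective ρ := by
  obtain ⟨ρ, hρ⟩ := hemb
  refine exists_rep G hG.1 n fun s hs => ?_
  obtain ⟨φ, hφ⟩ := hG.2 s hs
  refine ⟨ρ.comp φ, fun g hg h => hφ g hg ?_⟩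
  exact (injective_iff_map_eq_one ρ).1 hρ _ h
end
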